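/- arXiv:1507.01813 — 3 statements merged into one kernel-verified Lean document; each statement's English description precedes it below -/
import Mathlib

section
/- There exists a stationary profile μ = μ(v), μ : ℝ³ → ℝ smooth, with ∫_{ℝ³} μ(v) dv = 1, such that the following holds. For all m, s ∈ ℕ, α ∈ (0,1], and k ∈ ℕ, there exist a point (x₀,v₀) ∈ 𝕋³ × ℝ³, a constant C > 0, an ε₀ > 0, and for every ε ∈ (0,ε₀] a time t_ε ∈ (0, C·ε·|log ε|] together with a smooth solution f_ε of the kinetic incompressible Euler equations on [0,t_ε] × 𝕋³ × ℝ³, such that ‖f_ε − μ‖_{L²([0,t_ε] × Ω_ε)} / (‖⟨v⟩^m (f_ε(0,·,·) − μ)‖_{H^s(𝕋³×ℝ³)})^α → +∞ as ε → 0, where Ω_ε = B(x₀, ε^k) × B(v₀, ε^k). -/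
open MeasureTheory Set Filter

noncomputable section

abbrev E3 : Type := EuclideanSpace ℝ (Fin 3)

/-- Partial derivative in the `i`-th coordinate for functions on `ℝ³`. -/
noncomputable def pdE (i : Fin 3) (g : E3 → ℝ) : E3 → ℝ :=
  fun x => fderiv ℝ g x (EuclideanSpace.single i 1)

/-- Partial derivative in the `i`-th `x`-coordinate for `g = g x v`. -/
noncomputable def pdx (i : Fin 3) (g : E3 → E3 → ℝ) : E3 → E3 → ℝ :=
  fun x v => fderiv ℝ (fun x' => g x' v) x (EuclideanSpace.single i 1)

/-- Partial derivative in the `i`-th `v`-coordinate for `g = g x v`. -/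
noncomputable def pdv (i : Fin 3) (g : E3 → E3 → ℝ) : E3 → E3 → ℝ :=
  fun x v => fderiv ℝ (fun v' => g x v') v (EuclideanSpace.single i 1)

/-- Mixed partial derivative `∂^β` for a multi-index `β` in the six variables `(x,v)`. -/
noncomputable def mpart6 (β : Fin 6 → ℕ) (g : E3 → E3 → ℝ) : E3 → E3 → ℝ :=
  (pdx 0)^[β 0] ((pdx 1)^[β 1] ((pdx 2)^[β 2]
    ((pdv 0)^[β 3] ((pdv 1)^[β 4] ((pdv 2)^[β 5] g)))))

/-- The fundamental domain of the torus `𝕋³ = ℝ³/ℤ³`. -/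
def cube3 : Set E3 := {x : E3 | ∀ i, x i ∈ Set.Ico (0:ℝ) 1}

/-- The square of the weighted `L²(𝕋³ × ℝ³)` norm `‖⟨v⟩^m g‖²_{L²}`. -/
noncomputable def wL2sq (m : ℕ) (g : E3 → E3 → ℝ) : ℝ :=
  ∫ p in cube3 ×ˢ (Set.univ : Set E3),
    ((1 + ‖p.2‖ ^ 2) ^ ((m : ℝ) / 2) * g p.1 p.2) ^ 2

/-- The weighted Sobolev norm `‖⟨v⟩^m g‖_{H^s(𝕋³×ℝ³)} := (Σ_{|β|≤s} ‖⟨v⟩^m ∂^β g‖²_{L²})^{1/2}`,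
the sum over multi-indices `β` in `(x,v)` of total order at most `s`. -/
noncomputable def HsNormW (m s : ℕ) (g : E3 → E3 → ℝ) : ℝ :=
  Real.sqrt (∑ β : Fin 6 → Fin (s+1),
    if (∑ i, (β i : ℕ)) ≤ s then wL2sq m (mpart6 (fun i => (β i : ℕ)) g) else 0)

/-- `f : [0,T] × 𝕋³ × ℝ³ → ℝ` is a smooth solution of the kinetic incompressible Euler
equations: functions on `𝕋³` are represented by `ℤ³`-periodic functions on `ℝ³`, and there is a
smooth potential `φ` with `∫_{𝕋³} φ dx = 0` and `-Δ_x φ = ∇_x·(∇_x·∫ v ⊗ v f dv)`, such that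
`∂_t f + v·∇_x f - ∇_x φ·∇_v f = 0`. -/
def IsKIESol (T : ℝ) (f : ℝ → E3 → E3 → ℝ) : Prop :=
  ContDiff ℝ (⊤ : ℕ∞) (fun p : ℝ × E3 × E3 => f p.1 p.2.1 p.2.2) ∧
  (∀ t x v (i : Fin 3), f t (x + EuclideanSpace.single i 1) v = f t x v) ∧
  ∃ φ : ℝ → E3 → ℝ,
    ContDiff ℝ (⊤ : ℕ∞) (fun p : ℝ × E3 => φ p.1 p.2) ∧
    (∀ t x (i : Fin 3), φ t (x + EuclideanSpace.single i 1) = φ t x) ∧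
    (∀ t ∈ Set.Icc (0:ℝ) T, (∫ x in cube3, φ t x) = 0) ∧
    (∀ t ∈ Set.Icc (0:ℝ) T, ∀ x : E3,
      -(∑ i, pdE i (pdE i (φ t)) x)
        = ∑ i, ∑ j, pdE i (pdE j (fun x' => ∫ v : E3, (v i) * (v j) * f t x' v)) x) ∧
    (∀ t ∈ Set.Icc (0:ℝ) T, ∀ x v : E3,
      deriv (fun t' => f t' x v) t
        + fderiv ℝ (fun x' => f t x' v) x v
        - ∑ i, pdE i (φ t) x * fderiv ℝ (fun v' => f t x v') v (EuclideanSpace.single i 1)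
        = 0)

section

open scoped ContDiff

/-- The summable weight `1 / (1 + l²)` on Fourier modes. -/
def modeWeight (l : ℤ) : ℝ := 1 / (1 + (l : ℝ) ^ 2)

lemma modeWeight_pos (l : ℤ) : 0 < modeWeight l := by
  unfold modeWeight; positivity

lemma modeWeight_neg (l : ℤ) : modeWeight (-l) = modeWeight l := by
  simp [modeWeight]

lemma modeWeight_le_one (l : ℤ) : modeWeight l ≤ 1 := by
  unfold modeWeight
  rw [div_le_one (by positivity)]
  nlinarith [sq_nonneg (l : ℝ)]

lemma summable_modeWeight : Summable modeWeight := by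
  have h1 : Summable (fun l : ℤ => 1 / (l : ℝ) ^ 2) :=
    Real.summable_one_div_int_pow.mpr one_lt_two
  have h2 : Summable (fun l : ℤ => if l = 0 then (1 : ℝ) else 0) :=
    (hasSum_ite_eq (0 : ℤ) (1 : ℝ)).summable
  refine Summable.of_nonneg_of_le (fun l => (modeWeight_pos l).le) (fun l => ?_) (h1.add h2)
  by_cases hl : l = 0
  · subst hl; simp [modeWeight]
  · have : 0 < (l : ℝ) ^ 2 := by positivity
    simp only [hl, if_false, add_zero, modeWeight]
    gcongr; linarith

lemma modeWeight_mul_div_le (l j : ℤ) :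
    modeWeight j * modeWeight (l - j) / modeWeight l
      ≤ 2 * (modeWeight j + modeWeight (l - j)) := by
  unfold modeWeight
  push_cast
  set a : ℝ := (j : ℝ)
  set b : ℝ := (l : ℝ) - j
  have hl : (l : ℝ) = a + b := by simp [a, b]
  rw [hl]
  have ha : 0 < 1 + a ^ 2 := by positivity
  have hb : 0 < 1 + b ^ 2 := by positivity
  have hc : 0 < 1 + (a + b) ^ 2 := by positivity
  rw [div_le_iff₀ (by positivity)]
  have : 2 * (1 / (1 + a ^ 2) + 1 / (1 + b ^ 2)) * (1 / (1 + (a + b) ^ 2))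
      - 1 / (1 + a ^ 2) * (1 / (1 + b ^ 2))
      = (2 * (1 + a ^ 2) + 2 * (1 + b ^ 2) - (1 + (a + b) ^ 2))
        / ((1 + a ^ 2) * (1 + b ^ 2) * (1 + (a + b) ^ 2)) := by
    field_simp
    ring
  have h2 : 0 ≤ (2 * (1 + a ^ 2) + 2 * (1 + b ^ 2) - (1 + (a + b) ^ 2))
        / ((1 + a ^ 2) * (1 + b ^ 2) * (1 + (a + b) ^ 2)) := by
    apply div_nonneg _ (by positivity)
    nlinarith [sq_nonneg (a - b)]
  linarith

/-- The weight `⟨l⟩⁻² e^{|l| min(t,0) / 2}` carried by the `l`-th mode at time `t`. -/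
def expWeight (l : ℤ) (t : ℝ) : ℝ := modeWeight l * Real.exp (|(l : ℝ)| / 2 * min t 0)

lemma expWeight_pos (l : ℤ) (t : ℝ) : 0 < expWeight l t :=
  mul_pos (modeWeight_pos l) (Real.exp_pos _)

lemma continuous_expWeight (l : ℤ) : Continuous (expWeight l) := by
  unfold expWeight; fun_prop

/-- The convolution kernel in the weighted variables. -/
def convKernel (l j : ℤ) (t : ℝ) : ℝ := expWeight j t * expWeight (l - j) t / expWeight l t

lemma convKernel_nonneg (l j : ℤ) (t : ℝ) : 0 ≤ convKernel l j t :=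
  div_nonneg (mul_nonneg (expWeight_pos _ _).le (expWeight_pos _ _).le) (expWeight_pos _ _).le

lemma continuous_convKernel (l j : ℤ) : Continuous (convKernel l j) :=
  ((continuous_expWeight j).mul (continuous_expWeight (l - j))).div (continuous_expWeight l)
    fun t => (expWeight_pos l t).ne'

lemma convKernel_le (l j : ℤ) (t : ℝ) :
    convKernel l j t ≤ 2 * (modeWeight j + modeWeight (l - j)) := by
  refine le_trans ?_ (modeWeight_mul_div_le l j)
  have hx : Real.exp (|(j : ℝ)| / 2 * min t 0) * Real.exp (|((l - j : ℤ) : ℝ)| / 2 * min t 0)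
      ≤ Real.exp (|(l : ℝ)| / 2 * min t 0) := by
    rw [← Real.exp_add]
    apply Real.exp_le_exp.mpr
    have h1 : |(l : ℝ)| ≤ |(j : ℝ)| + |((l - j : ℤ) : ℝ)| := by
      calc |(l : ℝ)| = |(j : ℝ) + ((l - j : ℤ) : ℝ)| := by push_cast; ring_nf
        _ ≤ _ := abs_add_le _ _
    nlinarith [min_le_right t 0]
  unfold convKernel expWeight
  have hl := modeWeight_pos l
  have hj := modeWeight_pos j
  have hk := modeWeight_pos (l - j)
  rw [div_le_div_iff₀ (by positivity) hl]
  calc _ = modeWeight j * modeWeight (l - j) * modeWeight l *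
      (Real.exp (|(j : ℝ)| / 2 * min t 0) * Real.exp (|((l - j : ℤ) : ℝ)| / 2 * min t 0)) := by
        ring
    _ ≤ modeWeight j * modeWeight (l - j) * modeWeight l *
      Real.exp (|(l : ℝ)| / 2 * min t 0) := by gcongr
    _ = _ := by ring

/-- Sum of the mode weights. -/
def modeWeightSum : ℝ := ∑' l, modeWeight l

lemma modeWeightSum_nonneg : 0 ≤ modeWeightSum := tsum_nonneg fun l => (modeWeight_pos l).le

lemma hasSum_convBound (l : ℤ) :
    HasSum (fun j => 2 * (modeWeight j + modeWeight (l - j))) (4 * modeWeightSum) := by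
  have h1 := summable_modeWeight.hasSum
  have h2 : HasSum (fun j => modeWeight (l - j)) modeWeightSum :=
    (Equiv.subLeft l).hasSum_iff.mpr h1
  have h3 := (h1.add h2).mul_left 2
  rwa [show 2 * (∑' l, modeWeight l + modeWeightSum) = 4 * modeWeightSum by
    unfold modeWeightSum; ring] at h3

/-- Bounded continuous families of (weighted) Fourier coefficients. -/
abbrev ModeSpace : Type := BoundedContinuousFunction (ℤ × ℝ) ℂ

lemma norm_convTerm_le (U V : ModeSpace) (l j : ℤ) (t : ℝ) :
    ‖(convKernel l j t : ℂ) * U (j, t) * V (l - j, t)‖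
      ≤ 2 * (modeWeight j + modeWeight (l - j)) * (‖U‖ * ‖V‖) := by
  rw [norm_mul, norm_mul, Complex.norm_real, Real.norm_of_nonneg (convKernel_nonneg _ _ _),
    mul_assoc]
  have := modeWeight_pos j
  have := modeWeight_pos (l - j)
  exact mul_le_mul (convKernel_le l j t)
    (mul_le_mul (U.norm_coe_le_norm _) (V.norm_coe_le_norm _) (norm_nonneg _) (norm_nonneg _))
    (by positivity) (by positivity)

lemma summable_convTerm (U V : ModeSpace) (l : ℤ) (t : ℝ) :
    Summable fun j => (convKernel l j t : ℂ) * U (j, t) * V (l - j, t) :=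
  Summable.of_norm_bounded ((hasSum_convBound l).summable.mul_right _)
    fun j => norm_convTerm_le U V l j t

/-- Weighted convolution of two families of Fourier coefficients. -/
def modeConv (U V : ModeSpace) : ModeSpace :=
  BoundedContinuousFunction.ofNormedAddCommGroup
    (fun p => ∑' j, (convKernel p.1 j p.2 : ℂ) * U (j, p.2) * V (p.1 - j, p.2))
    (by
      rw [continuous_prod_of_discrete_left]
      intro l
      refine continuous_tsum (fun j => ?_) ((hasSum_convBound l).summable.mul_right (‖U‖ * ‖V‖))
        (fun j t => norm_convTerm_le U V l j t)
      have h1 : Continuous fun t : ℝ => U (j, t) := U.continuous.comp (by fun_prop)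
      have h2 : Continuous fun t : ℝ => V (l - j, t) := V.continuous.comp (by fun_prop)
      exact ((Complex.continuous_ofReal.comp (continuous_convKernel l j)).mul h1).mul h2)
    (4 * modeWeightSum * (‖U‖ * ‖V‖))
    (fun p => tsum_of_norm_bounded ((hasSum_convBound p.1).mul_right _)
      fun j => norm_convTerm_le U V p.1 j p.2)

lemma modeConv_apply (U V : ModeSpace) (p : ℤ × ℝ) :
    modeConv U V p = ∑' j, (convKernel p.1 j p.2 : ℂ) * U (j, p.2) * V (p.1 - j, p.2) := rfl

lemma norm_modeConv_le (U V : ModeSpace) : ‖modeConv U V‖ ≤ 4 * modeWeightSum * ‖U‖ * ‖V‖ := by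
  rw [mul_assoc]
  have := modeWeightSum_nonneg
  exact BoundedContinuousFunction.norm_ofNormedAddCommGroup_le _ (by positivity) _

/-- `modeConv` as a bounded bilinear map. -/
def modeConvL : ModeSpace →L[ℝ] ModeSpace →L[ℝ] ModeSpace :=
  LinearMap.mkContinuous₂
    (LinearMap.mk₂ ℝ modeConv
      (fun U U' V => by
        ext p
        simp only [modeConv_apply, BoundedContinuousFunction.add_apply]
        rw [← (summable_convTerm U V _ _).tsum_add (summable_convTerm U' V _ _)]
        exact tsum_congr fun j => by ring)
      (fun c U V => by
        ext p
        simp only [modeConv_apply, BoundedContinuousFunction.smul_apply, Complex.real_smul]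
        rw [← tsum_mul_left]
        exact tsum_congr fun j => by ring)
      (fun U V V' => by
        ext p
        simp only [modeConv_apply, BoundedContinuousFunction.add_apply]
        rw [← (summable_convTerm U V _ _).tsum_add (summable_convTerm U V' _ _)]
        exact tsum_congr fun j => by ring)
      (fun c U V => by
        ext p
        simp only [modeConv_apply, BoundedContinuousFunction.smul_apply, Complex.real_smul]
        rw [← tsum_mul_left]
        exact tsum_congr fun j => by ring))
    (4 * modeWeightSum) norm_modeConv_le

/-- Fourier side of complex conjugation. -/
def modeStar (U : ModeSpace) : ModeSpace :=
  BoundedContinuousFunction.ofNormedAddCommGroup (fun p => starRingEnd ℂ (U (-p.1, p.2)))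
    (Complex.continuous_conj.comp (U.continuous.comp (by fun_prop))) ‖U‖
    (fun p => by rw [RCLike.norm_conj]; exact U.norm_coe_le_norm _)

lemma modeStar_apply (U : ModeSpace) (p : ℤ × ℝ) :
    modeStar U p = starRingEnd ℂ (U (-p.1, p.2)) := rfl

/-- `modeStar` as a bounded real-linear map. -/
def modeStarL : ModeSpace →L[ℝ] ModeSpace :=
  LinearMap.mkContinuous
    { toFun := modeStar
      map_add' := fun U V => by ext p; simp [modeStar_apply]
      map_smul' := fun c U => by ext p; simp [modeStar_apply] }
    1 (fun U => by
      rw [one_mul]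
      exact BoundedContinuousFunction.norm_ofNormedAddCommGroup_le _ (norm_nonneg _)
        fun p => by rw [RCLike.norm_conj]; exact U.norm_coe_le_norm _)

/-- Decay rate of the integral kernel inverting the linear flow on the `l`-th mode. -/
def duhamelRate (l : ℤ) : ℝ := |(l : ℝ)| - (l : ℝ) / 2

lemma abs_le_two_mul_duhamelRate (l : ℤ) : |(l : ℝ)| ≤ 2 * duhamelRate l := by
  unfold duhamelRate
  nlinarith [le_abs_self (l : ℝ)]

lemma duhamelRate_pos {l : ℤ} (hl : l ≠ 0) : 0 < duhamelRate l := by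
  have : 0 < |(l : ℝ)| := by positivity
  nlinarith [abs_le_two_mul_duhamelRate l]

lemma integrableOn_exp_neg_mul {a : ℝ} (ha : 0 < a) :
    IntegrableOn (fun r : ℝ => Real.exp (-a * r)) (Ioi 0) :=
  integrableOn_exp_mul_Ioi (by linarith) 0

lemma integral_exp_neg_mul {a : ℝ} (ha : 0 < a) :
    ∫ r in Ioi (0 : ℝ), Real.exp (-a * r) = 1 / a := by
  rw [integral_exp_mul_Ioi (by linarith)]
  simp [neg_div_neg_eq]

/-- The Duhamel integral with the decaying choice of time direction for each mode. -/
def duhamelFun (G : ModeSpace) (p : ℤ × ℝ) : ℂ :=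
  Complex.I * ((|(p.1 : ℝ)| : ℝ) : ℂ) * ∫ r in Ioi (0 : ℝ),
    (Real.exp (-duhamelRate p.1 * r) : ℂ) * G (p.1, p.2 + (p.1.sign : ℝ) * r)

lemma norm_duhamelTerm_le (G : ModeSpace) (l : ℤ) (t r : ℝ) :
    ‖(Real.exp (-duhamelRate l * r) : ℂ) * G (l, t + (l.sign : ℝ) * r)‖
      ≤ Real.exp (-duhamelRate l * r) * ‖G‖ := by
  rw [norm_mul, Complex.norm_real, Real.norm_of_nonneg (Real.exp_pos _).le]
  gcongr
  exact G.norm_coe_le_norm _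

lemma continuous_mode (G : ModeSpace) (l : ℤ) : Continuous fun t : ℝ => G (l, t) :=
  G.continuous.comp (by fun_prop)

lemma integrableOn_duhamelTerm (G : ModeSpace) {l : ℤ} (hl : l ≠ 0) (t : ℝ) :
    IntegrableOn (fun r : ℝ => (Real.exp (-duhamelRate l * r) : ℂ) *
      G (l, t + (l.sign : ℝ) * r)) (Ioi 0) := by
  refine Integrable.mono' ((integrableOn_exp_neg_mul (duhamelRate_pos hl)).mul_const ‖G‖) ?_
    (ae_of_all _ fun r => norm_duhamelTerm_le G l t r)
  have h1 := (continuous_mode G l).comp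
    (show Continuous fun r : ℝ => t + (l.sign : ℝ) * r by fun_prop)
  exact (Continuous.mul (by fun_prop) h1).aestronglyMeasurable

lemma norm_duhamelFun_le (G : ModeSpace) (p : ℤ × ℝ) : ‖duhamelFun G p‖ ≤ 2 * ‖G‖ := by
  obtain ⟨l, t⟩ := p
  by_cases hl : l = 0
  · subst hl; simp [duhamelFun]
  have ha := duhamelRate_pos hl
  unfold duhamelFun
  rw [norm_mul, norm_mul, Complex.norm_I, one_mul, Complex.norm_real, norm_abs_eq_norm]
  have h1 : ‖∫ r in Ioi (0 : ℝ), (Real.exp (-duhamelRate l * r) : ℂ) *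
      G (l, t + (l.sign : ℝ) * r)‖ ≤ 1 / duhamelRate l * ‖G‖ := by
    rw [← integral_exp_neg_mul ha, ← integral_mul_const]
    exact norm_integral_le_of_norm_le ((integrableOn_exp_neg_mul ha).mul_const ‖G‖)
      (ae_of_all _ fun r => norm_duhamelTerm_le G l t r)
  have h2 : |(l : ℝ)| * (1 / duhamelRate l) ≤ 2 := by
    rw [mul_one_div, div_le_iff₀ ha]; exact abs_le_two_mul_duhamelRate l
  calc _ ≤ |(l : ℝ)| * (1 / duhamelRate l * ‖G‖) := by
        rw [Real.norm_eq_abs]; gcongr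
    _ = |(l : ℝ)| * (1 / duhamelRate l) * ‖G‖ := by ring
    _ ≤ _ := by gcongr

/-- The Duhamel operator on mode families. -/
def duhamel (G : ModeSpace) : ModeSpace :=
  BoundedContinuousFunction.ofNormedAddCommGroup (duhamelFun G)
    (by
      rw [continuous_prod_of_discrete_left]
      intro l
      by_cases hl : l = 0
      · subst hl
        simpa [duhamelFun] using (continuous_const : Continuous fun _ : ℝ => (0 : ℂ))
      unfold duhamelFun
      dsimp only
      refine Continuous.mul continuous_const ?_
      refine continuous_of_dominated (bound := fun r => Real.exp (-duhamelRate l * r) * ‖G‖)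
        (fun t => (integrableOn_duhamelTerm G hl t).aestronglyMeasurable)
        (fun t => ae_of_all _ fun r => norm_duhamelTerm_le G l t r)
        ((integrableOn_exp_neg_mul (duhamelRate_pos hl)).mul_const _)
        (ae_of_all _ fun r => ?_)
      exact continuous_const.mul ((continuous_mode G l).comp
        (show Continuous fun t : ℝ => t + (l.sign : ℝ) * r by fun_prop)))
    (2 * ‖G‖) (norm_duhamelFun_le G)

lemma duhamel_apply (G : ModeSpace) (p : ℤ × ℝ) : duhamel G p = duhamelFun G p := rfl

/-- `duhamel` as a bounded real-linear map. -/
def duhamelL : ModeSpace →L[ℝ] ModeSpace :=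
  LinearMap.mkContinuous
    { toFun := duhamel
      map_add' := fun U V => by
        ext ⟨l, t⟩
        by_cases hl : l = 0
        · subst hl; simp [duhamel_apply, duhamelFun]
        simp only [duhamel_apply, duhamelFun, BoundedContinuousFunction.add_apply, mul_add]
        rw [integral_add (integrableOn_duhamelTerm U hl t) (integrableOn_duhamelTerm V hl t),
          mul_add]
      map_smul' := fun c U => by
        ext ⟨l, t⟩
        simp only [duhamel_apply, duhamelFun, BoundedContinuousFunction.smul_apply,
          Complex.real_smul, RingHom.id_apply]
        simp_rw [mul_left_comm _ (c : ℂ) _]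
        rw [integral_const_mul]
        ring }
    2 (fun U => BoundedContinuousFunction.norm_ofNormedAddCommGroup_le _ (by positivity)
      (norm_duhamelFun_le U))

lemma hasDerivAt_integral_exp_forward {a : ℝ} (ha : 0 < a) {g : ℝ → ℂ} (hg : Continuous g)
    {M : ℝ} (hM : ∀ t, ‖g t‖ ≤ M) (t : ℝ) :
    HasDerivAt (fun t => ∫ r in Ioi (0 : ℝ), (Real.exp (-a * r) : ℂ) * g (t + r))
      (a * (∫ r in Ioi (0 : ℝ), (Real.exp (-a * r) : ℂ) * g (t + r)) - g t) t := by
  set k : ℝ → ℂ := fun s => (Real.exp (-a * s) : ℂ) * g s with hk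
  have hkc : Continuous k := by
    apply Continuous.mul _ hg
    exact Complex.continuous_ofReal.comp (by fun_prop)
  have hki : ∀ c, IntegrableOn k (Ioi c) := fun c => by
    refine Integrable.mono' ((integrableOn_exp_mul_Ioi (by linarith : -a < 0) c).mul_const M)
      hkc.aestronglyMeasurable (ae_of_all _ fun r => ?_)
    rw [hk, norm_mul, Complex.norm_real, Real.norm_of_nonneg (Real.exp_pos _).le]
    gcongr; exact hM r
  have key : ∀ t, (∫ r in Ioi (0 : ℝ), (Real.exp (-a * r) : ℂ) * g (t + r))
      = (Real.exp (a * t) : ℂ) * ((∫ s in Ioi (0:ℝ), k s) - ∫ s in (0:ℝ)..t, k s) := fun t => by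
    have h1 : (∫ s in Ioi (0:ℝ), k s) - ∫ s in (0:ℝ)..t, k s = ∫ s in Ioi t, k s := by
      rw [← intervalIntegral.integral_interval_add_Ioi (hki 0) (hki t)]
      ring
    have h2 : ∫ s in Ioi t, k s = ∫ r in Ioi (0:ℝ), k (t + r) := by
      have := (measurePreserving_add_left volume t).setIntegral_preimage_emb
        (measurableEmbedding_addLeft t) k (Ioi t)
      rw [← this]
      simp
    rw [h1, h2, ← integral_const_mul]
    refine integral_congr_ae (ae_of_all _ fun r => ?_)
    simp only [hk]
    rw [← mul_assoc, ← Complex.ofReal_mul, ← Real.exp_add]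
    congr 3; ring_nf
  have hd1 : HasDerivAt (fun t : ℝ => ((Real.exp (a * t) : ℝ) : ℂ))
      ((a * Real.exp (a * t) : ℝ) : ℂ) t := by
    have := ((hasDerivAt_id t).const_mul a).exp
    simp only [id, mul_one] at this
    rw [mul_comm]
    exact this.ofReal_comp
  have hd2 : HasDerivAt (fun t => (∫ s in Ioi (0:ℝ), k s) - ∫ s in (0:ℝ)..t, k s) (- k t) t := by
    have := (hkc.integral_hasStrictDerivAt 0 t).hasDerivAt
    simpa using this.const_sub (∫ s in Ioi (0:ℝ), k s)
  have := hd1.mul hd2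
  rw [show (fun t => ∫ r in Ioi (0 : ℝ), (Real.exp (-a * r) : ℂ) * g (t + r)) = _ from funext key]
  refine this.congr_deriv ?_
  rw [key t, hk]
  have he : ((Real.exp (a * t) : ℝ) : ℂ) * ((Real.exp (-a * t) : ℝ) : ℂ) = 1 := by
    rw [← Complex.ofReal_mul, ← Real.exp_add]; simp
  push_cast at he ⊢
  linear_combination (-(g t)) * he

lemma hasDerivAt_integral_exp_backward {a : ℝ} (ha : 0 < a) {g : ℝ → ℂ} (hg : Continuous g)
    {M : ℝ} (hM : ∀ t, ‖g t‖ ≤ M) (t : ℝ) :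
    HasDerivAt (fun t => ∫ r in Ioi (0 : ℝ), (Real.exp (-a * r) : ℂ) * g (t - r))
      (-a * (∫ r in Ioi (0 : ℝ), (Real.exp (-a * r) : ℂ) * g (t - r)) + g t) t := by
  have h := hasDerivAt_integral_exp_forward ha (g := fun s => g (-s)) (by fun_prop)
    (fun s => hM (-s)) (-t)
  have h2 := HasDerivAt.scomp t h (hasDerivAt_neg t)
  have h3 : ∀ s : ℝ, (∫ r in Ioi (0 : ℝ), (Real.exp (-a * r) : ℂ) * g (-(-s + r)))
      = ∫ r in Ioi (0 : ℝ), (Real.exp (-a * r) : ℂ) * g (s - r) := fun s => by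
    simp only [neg_add, neg_neg, ← sub_eq_add_neg]
  rw [show ((fun t => ∫ r in Ioi (0 : ℝ), (Real.exp (-a * r) : ℂ) * g (-(t + r))) ∘ Neg.neg)
    = _ from funext h3, h3 t] at h2
  refine h2.congr_deriv ?_
  rw [neg_neg, neg_one_smul]
  ring

/-- The growing mode `e^{t + ix}` in weighted coordinates. -/
def growingMode : ModeSpace :=
  BoundedContinuousFunction.ofNormedAddCommGroup
    (fun p => if p.1 = 1 then ((2 * Real.exp (min p.2 0 / 2) : ℝ) : ℂ) else 0)
    (by
      rw [continuous_prod_of_discrete_left]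
      intro l
      by_cases hl : l = 1
      · simp only [hl, if_true]
        exact Complex.continuous_ofReal.comp (by fun_prop)
      · simp only [hl, if_false]
        exact continuous_const)
    2 (fun p => by
      split_ifs with h
      · rw [Complex.norm_real, Real.norm_of_nonneg (by positivity)]
        have : Real.exp (min p.2 0 / 2) ≤ 1 :=
          Real.exp_le_one_iff.mpr (by linarith [min_le_right p.2 0])
        linarith
      · simp)

lemma growingMode_apply (p : ℤ × ℝ) :
    growingMode p = if p.1 = 1 then ((2 * Real.exp (min p.2 0 / 2) : ℝ) : ℂ) else 0 := rfl

/-- The bilinear form behind the quadratic nonlinearity `(Y + Ȳ)(3Y - Ȳ)/8`. -/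
def fluxL : ModeSpace →L[ℝ] ModeSpace →L[ℝ] ModeSpace :=
  modeConvL.bilinearComp ((1 / 8 : ℝ) • (ContinuousLinearMap.id ℝ ModeSpace + modeStarL))
    ((3 : ℝ) • ContinuousLinearMap.id ℝ ModeSpace - modeStarL)

lemma exists_quadratic_fixedPoint {X : Type*} [NormedAddCommGroup X] [NormedSpace ℝ X]
    [CompleteSpace X] (B : X →L[ℝ] X →L[ℝ] X) (e : X) :
    ∃ C > 0, ∀ᶠ δ : ℝ in nhdsWithin 0 (Ioi 0), ∃ U : X, ‖U‖ ≤ C * δ ∧ U = δ • e + B U U := by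
  have hB := B.isBoundedBilinearMap.hasStrictFDerivAt ((0 : X), (0 : X))
  have hd : HasStrictFDerivAt (fun U : X => (U, U))
      ((ContinuousLinearMap.id ℝ X).prod (ContinuousLinearMap.id ℝ X)) 0 :=
    (hasStrictFDerivAt_id 0).prodMk (hasStrictFDerivAt_id 0)
  have h1 := HasStrictFDerivAt.comp (x := (0 : X)) (f := fun U : X => (U, U)) hB hd
  have h2 : HasStrictFDerivAt (fun U : X => U - B U U)
      ((ContinuousLinearEquiv.refl ℝ X : X ≃L[ℝ] X) : X →L[ℝ] X) 0 := by
    refine ((hasStrictFDerivAt_id (𝕜 := ℝ) (0 : X)).sub h1).congr_fderiv ?_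
    ext v
    simp [IsBoundedBilinearMap.deriv]
  have h3 := h2.map_nhds_eq_of_equiv
  simp only [map_zero, sub_zero] at h3
  have hBn : 0 ≤ ‖B‖ := norm_nonneg B
  set ρ : ℝ := 1 / (2 * (‖B‖ + 1)) with hρ
  have hρ0 : 0 < ρ := by positivity
  have h4 : (fun U : X => U - B U U) '' Metric.ball 0 ρ ∈ nhds (0 : X) := by
    rw [← h3]; exact image_mem_map (Metric.ball_mem_nhds 0 hρ0)
  have h5 : Tendsto (fun δ : ℝ => δ • e) (nhdsWithin 0 (Ioi 0)) (nhds (0 : X)) := by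
    have : Tendsto (fun δ : ℝ => δ • e) (nhds 0) (nhds ((0 : ℝ) • e)) :=
      (tendsto_id.smul_const e)
    rw [zero_smul] at this
    exact this.mono_left nhdsWithin_le_nhds
  refine ⟨2 * ‖e‖ + 1, by positivity, ?_⟩
  filter_upwards [h5 h4, self_mem_nhdsWithin] with δ hδ hδ0
  obtain ⟨U, hU, hUe⟩ := hδ
  rw [mem_ball_zero_iff] at hU
  have hfix : U = δ • e + B U U := by
    have hUe' : U - B U U = δ • e := hUe
    rw [← hUe']; abel
  refine ⟨U, ?_, hfix⟩
  have h6 : ‖U‖ ≤ δ * ‖e‖ + ‖B‖ * ‖U‖ * ‖U‖ := by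
    calc ‖U‖ = ‖δ • e + B U U‖ := congrArg _ hfix
      _ ≤ ‖δ • e‖ + ‖B U U‖ := norm_add_le _ _
      _ ≤ _ := by
        rw [norm_smul, Real.norm_of_nonneg (le_of_lt hδ0)]
        gcongr; exact B.le_opNorm₂ U U
  have h7 : ‖B‖ * ‖U‖ ≤ 1 / 2 := by
    calc ‖B‖ * ‖U‖ ≤ (‖B‖ + 1) * ρ := by gcongr; linarith
      _ = 1 / 2 := by rw [hρ]; field_simp
  have h8 : ‖B‖ * ‖U‖ * ‖U‖ ≤ 1 / 2 * ‖U‖ := by gcongr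
  have : 0 < δ := hδ0
  nlinarith [norm_nonneg e]

lemma fluxL_apply (U : ModeSpace) (p : ℤ × ℝ) :
    fluxL U U p = 1 / 8 * ∑' j, (convKernel p.1 j p.2 : ℂ) *
      (U (j, p.2) + starRingEnd ℂ (U (-j, p.2))) *
      (3 * U (p.1 - j, p.2) - starRingEnd ℂ (U (-(p.1 - j), p.2))) := by
  have : fluxL U U = modeConv ((1 / 8 : ℝ) • (U + modeStar U)) ((3 : ℝ) • U - modeStar U) := rfl
  rw [this, modeConv_apply, ← tsum_mul_left]
  refine tsum_congr fun j => ?_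
  simp only [BoundedContinuousFunction.smul_apply, BoundedContinuousFunction.add_apply,
    BoundedContinuousFunction.sub_apply, modeStar_apply, Complex.real_smul]
  push_cast
  ring

lemma hasDerivAt_duhamel (G : ModeSpace) (l : ℤ) (t : ℝ) :
    HasDerivAt (fun t => duhamel G (l, t))
      (((l : ℂ) - ((|(l : ℝ)| / 2 : ℝ) : ℂ)) * duhamel G (l, t) - Complex.I * l * G (l, t)) t := by
  simp only [duhamel_apply, duhamelFun]
  rcases lt_trichotomy l 0 with hl | hl | hl
  · have hs : l.sign = -1 := Int.sign_eq_neg_one_of_neg hl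
    have hl' : (l : ℝ) < 0 := by exact_mod_cast hl
    have h := (hasDerivAt_integral_exp_backward (duhamelRate_pos hl.ne) (continuous_mode G l)
      (fun t => G.norm_coe_le_norm _) t).const_mul (Complex.I * ((|(l : ℝ)| : ℝ) : ℂ))
    simp only [hs, Int.cast_neg, Int.cast_one, neg_one_mul, ← sub_eq_add_neg]
    refine h.congr_deriv ?_
    simp only [duhamelRate, abs_of_neg hl']
    push_cast
    ring
  · subst hl
    simpa using hasDerivAt_const t (0 : ℂ)
  · have hs : l.sign = 1 := Int.sign_eq_one_of_pos hl
    have hl' : 0 < (l : ℝ) := by exact_mod_cast hl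
    have h := (hasDerivAt_integral_exp_forward (duhamelRate_pos hl.ne') (continuous_mode G l)
      (fun t => G.norm_coe_le_norm _) t).const_mul (Complex.I * ((|(l : ℝ)| : ℝ) : ℂ))
    simp only [hs, Int.cast_one, one_mul]
    refine h.congr_deriv ?_
    simp only [duhamelRate, abs_of_pos hl']
    push_cast
    ring

lemma hasDerivAt_expWeight (l : ℤ) {t : ℝ} (ht : t < 0) :
    HasDerivAt (expWeight l) (|(l : ℝ)| / 2 * expWeight l t) t := by
  have h1 : HasDerivAt (fun t : ℝ => modeWeight l * Real.exp (|(l : ℝ)| / 2 * t))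
      (modeWeight l * (Real.exp (|(l : ℝ)| / 2 * t) * (|(l : ℝ)| / 2 * 1))) t :=
    (((hasDerivAt_id t).const_mul _).exp).const_mul _
  have h2 : expWeight l =ᶠ[nhds t] fun t : ℝ => modeWeight l * Real.exp (|(l : ℝ)| / 2 * t) := by
    filter_upwards [Iio_mem_nhds ht] with s hs
    rw [expWeight, min_eq_left (le_of_lt hs)]
  refine (h1.congr_of_eventuallyEq h2).congr_deriv ?_
  rw [expWeight, min_eq_left ht.le]; ring

lemma expWeight_mul_growingMode (l : ℤ) {s : ℝ} (hs : s ≤ 0) :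
    (expWeight l s : ℂ) * growingMode (l, s) = if l = 1 then (Real.exp s : ℂ) else 0 := by
  rw [growingMode_apply]
  split_ifs with hl
  · subst hl
    have : expWeight 1 s * (2 * Real.exp (min s 0 / 2)) = Real.exp s := by
      rw [expWeight, modeWeight, min_eq_left hs]
      calc _ = Real.exp (|((1 : ℤ) : ℝ)| / 2 * s) * Real.exp (s / 2) := by norm_num; ring
        _ = _ := by rw [← Real.exp_add]; norm_num; ring_nf
    rw [← this]
    push_cast; ring
  · simp

lemma hasDerivAt_expWeight_mul_growingMode (l : ℤ) {t : ℝ} (ht : t < 0) :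
    HasDerivAt (fun t => (expWeight l t : ℂ) * growingMode (l, t))
      (l * ((expWeight l t : ℂ) * growingMode (l, t))) t := by
  by_cases hl : l = 1
  · subst hl
    have h2 : (fun t => (expWeight 1 t : ℂ) * growingMode (1, t)) =ᶠ[nhds t]
        fun s => (Real.exp s : ℂ) := by
      filter_upwards [Iio_mem_nhds ht] with s hs
      rw [expWeight_mul_growingMode 1 (le_of_lt hs), if_pos rfl]
    rw [expWeight_mul_growingMode 1 ht.le, if_pos rfl]
    simpa using ((Real.hasDerivAt_exp t).ofReal_comp).congr_of_eventuallyEq h2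
  · simp only [growingMode_apply, hl, if_false, mul_zero]
    exact hasDerivAt_const t 0

/-- Small solutions of the infinite mode system, bounded by `expWeight` for all negative times and
asymptotic to the growing mode. -/
theorem exists_modes : ∃ C > 0, ∀ᶠ δ : ℝ in nhdsWithin 0 (Ioi 0), ∃ y q : ℤ → ℝ → ℂ,
    (∀ l, ∀ t < 0, HasDerivAt (y l) (l * y l t - Complex.I * l * q l t) t) ∧
    (∀ l t, ‖y l t‖ ≤ C * δ * expWeight l t) ∧
    (∀ l t, ‖q l t‖ ≤ C * δ * expWeight l t) ∧
    (∀ l, ∀ t < 0, ‖y l t - if l = 1 then ((δ * Real.exp t : ℝ) : ℂ) else 0‖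
      ≤ C * δ ^ 2 * expWeight l t) ∧
    (∀ t, y 0 t = 0) ∧ (∀ l, Continuous (y l)) ∧ (∀ l, Continuous (q l)) ∧
    (∀ l t, q l t = 1 / 8 * ∑' j, (y j t + starRingEnd ℂ (y (-j) t)) *
      (3 * y (l - j) t - starRingEnd ℂ (y (-(l - j)) t))) := by
  obtain ⟨C, hC, h⟩ := exists_quadratic_fixedPoint
    ((ContinuousLinearMap.compL ℝ ModeSpace ModeSpace ModeSpace duhamelL).comp fluxL) growingMode
  set D : ℝ := ‖fluxL‖ * C ^ 2 with hD
  have hD0 : 0 ≤ D := by positivity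
  refine ⟨C + 2 * D, by positivity, ?_⟩
  have hlt : ∀ᶠ δ : ℝ in nhdsWithin 0 (Ioi 0), δ < 1 :=
    nhdsWithin_le_nhds (Iio_mem_nhds one_pos)
  filter_upwards [h, hlt, self_mem_nhdsWithin] with δ ⟨U, hU, hfix⟩ hδ1 hδ0
  replace hδ0 : 0 < δ := hδ0
  set G : ModeSpace := fluxL U U with hG
  replace hfix : U = δ • growingMode + duhamel G := hfix
  have hfix' : ∀ p, U p = δ * growingMode p + duhamel G p := fun p => by
    conv_lhs => rw [hfix]
    simp
  have hGn : ‖G‖ ≤ D * δ ^ 2 := by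
    calc ‖G‖ ≤ ‖fluxL‖ * ‖U‖ * ‖U‖ := fluxL.le_opNorm₂ U U
      _ ≤ ‖fluxL‖ * (C * δ) * (C * δ) := by gcongr
      _ = _ := by rw [hD]; ring
  have hsq : δ ^ 2 ≤ δ := by nlinarith
  have hew : ∀ (V : ModeSpace) (M : ℝ), ‖V‖ ≤ M → ∀ l t,
      ‖(expWeight l t : ℂ) * V (l, t)‖ ≤ M * expWeight l t := fun V M hM l t => by
    rw [norm_mul, Complex.norm_real, Real.norm_of_nonneg (expWeight_pos l t).le, mul_comm]
    exact mul_le_mul_of_nonneg_right ((V.norm_coe_le_norm _).trans hM) (expWeight_pos l t).le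
  have hcont : ∀ (V : ModeSpace) l, Continuous fun t => (expWeight l t : ℂ) * V (l, t) :=
    fun V l => (Complex.continuous_ofReal.comp (continuous_expWeight l)).mul (continuous_mode V l)
  refine ⟨fun l t => (expWeight l t : ℂ) * U (l, t), fun l t => (expWeight l t : ℂ) * G (l, t),
    fun l t ht => ?_, hew U _ (hU.trans ?_), hew G _ (hGn.trans ?_), fun l t ht => ?_, fun t => ?_,
    hcont U, hcont G, fun l t => ?_⟩
  · have h1 : HasDerivAt (fun t => (expWeight l t : ℂ))
        ((|(l : ℝ)| / 2 * expWeight l t : ℝ) : ℂ) t :=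
      (hasDerivAt_expWeight l ht).ofReal_comp
    have h2 := ((hasDerivAt_expWeight_mul_growingMode l ht).const_mul (δ : ℂ)).add
      (h1.mul (hasDerivAt_duhamel G l t))
    have h3 : (fun t => (expWeight l t : ℂ) * U (l, t)) =
        (fun t => (δ : ℂ) * ((expWeight l t : ℂ) * growingMode (l, t))) +
        (fun t => (expWeight l t : ℂ)) * (fun t => duhamel G (l, t)) := by
      ext s
      simp only [Pi.add_apply, Pi.mul_apply, hfix' (l, s)]
      ring
    dsimp only
    rw [h3]
    refine h2.congr_deriv ?_
    rw [hfix' (l, t)]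
    push_cast
    ring
  · nlinarith
  · nlinarith
  · have h1 : (expWeight l t : ℂ) * U (l, t) - (if l = 1 then ((δ * Real.exp t : ℝ) : ℂ) else 0)
        = (expWeight l t : ℂ) * duhamel G (l, t) := by
      have h2 := expWeight_mul_growingMode l ht.le
      rw [hfix' (l, t)]
      split_ifs at h2 ⊢ with hl
      · push_cast
        push_cast at h2
        linear_combination (δ : ℂ) * h2
      · linear_combination (δ : ℂ) * h2
    rw [h1]
    have hdn : ‖duhamel G‖ ≤ 2 * ‖G‖ :=
      BoundedContinuousFunction.norm_ofNormedAddCommGroup_le _ (by positivity)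
        (norm_duhamelFun_le G)
    refine hew (duhamel G) _ (hdn.trans ?_) l t
    nlinarith [sq_nonneg δ]
  · have : U (0, t) = 0 := by
      rw [hfix' (0, t)]
      simp [growingMode_apply, duhamel_apply, duhamelFun]
    simp [this]
  · dsimp only
    rw [hG, fluxL_apply, mul_left_comm, ← tsum_mul_left]
    congr 1
    refine tsum_congr fun j => ?_
    have h1 : ∀ j, expWeight (-j) t = expWeight j t := fun j => by
      simp [expWeight, modeWeight_neg]
    have h2 : ((expWeight l t : ℝ) : ℂ) * (convKernel l j t : ℂ)
        = (expWeight j t : ℂ) * (expWeight (l - j) t : ℂ) := by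
      rw [← Complex.ofReal_mul, ← Complex.ofReal_mul, convKernel,
        mul_div_cancel₀ _ (expWeight_pos l t).ne']
    simp only [map_mul, Complex.conj_ofReal, h1]
    linear_combination (U (j, t) + (starRingEnd ℂ) (U (-j, t))) *
      (3 * U (l - j, t) - (starRingEnd ℂ) (U (-(l - j), t))) * h2

lemma summable_abs_pow_mul_exp (k : ℕ) {r : ℝ} (hr : 0 < r) :
    Summable fun l : ℤ => |(l : ℝ)| ^ k * Real.exp (-r * |(l : ℝ)|) := by
  have h := Real.summable_pow_mul_exp_neg_nat_mul k hr
  refine Summable.of_nat_of_neg ?_ ?_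
  · simpa using h
  · simpa using h

/-- Coefficient families dominated by `expWeight`. -/
def ModeBounded (M : ℝ) (c : ℤ → ℝ → ℂ) : Prop := ∀ l t, ‖c l t‖ ≤ M * expWeight l t

lemma expWeight_le (l : ℤ) {t ε : ℝ} (ht : t ≤ -ε) (hε : 0 ≤ ε) :
    expWeight l t ≤ Real.exp (-(ε / 2) * |(l : ℝ)|) := by
  unfold expWeight
  rw [min_eq_left (by linarith)]
  have h1 : Real.exp (|(l : ℝ)| / 2 * t) ≤ Real.exp (-(ε / 2) * |(l : ℝ)|) :=
    Real.exp_le_exp.mpr (by nlinarith [abs_nonneg (l : ℝ)])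
  calc _ ≤ 1 * Real.exp (|(l : ℝ)| / 2 * t) := by gcongr; exact modeWeight_le_one l
    _ ≤ _ := by linarith

/-- One term of the `k`-times differentiated Fourier series. -/
def fourierTerm (k : ℕ) (c : ℤ → ℝ → ℂ) (t x : ℝ) (l : ℤ) : ℂ :=
  (Complex.I * l) ^ k * c l t * Complex.exp (Complex.I * l * x)

/-- The `k`-th `x`-derivative of the Fourier series with coefficients `c`. -/
def fourierSeries (k : ℕ) (c : ℤ → ℝ → ℂ) (t x : ℝ) : ℂ := ∑' l, fourierTerm k c t x l

lemma norm_fourierTerm (k : ℕ) (c : ℤ → ℝ → ℂ) (t x : ℝ) (l : ℤ) :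
    ‖fourierTerm k c t x l‖ = |(l : ℝ)| ^ k * ‖c l t‖ := by
  have h : ‖Complex.exp (Complex.I * l * x)‖ = 1 := by
    have : Complex.I * l * x = ((l * x : ℝ) : ℂ) * Complex.I := by push_cast; ring
    rw [this, Complex.norm_exp_ofReal_mul_I]
  rw [fourierTerm, norm_mul, norm_mul, h, norm_pow, norm_mul, Complex.norm_I, one_mul, mul_one]
  simp

lemma norm_fourierTerm_le {M : ℝ} {c : ℤ → ℝ → ℂ} (hc : ModeBounded M c)
    (k : ℕ) {t ε : ℝ} (ht : t ≤ -ε) (hε : 0 ≤ ε) (x : ℝ) (l : ℤ) :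
    ‖fourierTerm k c t x l‖ ≤ M * (|(l : ℝ)| ^ k * Real.exp (-(ε / 2) * |(l : ℝ)|)) := by
  rw [norm_fourierTerm]
  have hM : 0 ≤ M := by
    by_contra h
    nlinarith [(norm_nonneg _).trans (hc l t), expWeight_pos l t]
  calc _ ≤ |(l : ℝ)| ^ k * (M * Real.exp (-(ε / 2) * |(l : ℝ)|)) := by
        gcongr
        exact (hc l t).trans (mul_le_mul_of_nonneg_left (expWeight_le l ht hε) hM)
    _ = _ := by ring

lemma summable_fourierBound (M : ℝ) (k : ℕ) {ε : ℝ} (hε : 0 < ε) :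
    Summable fun l : ℤ => M * (|(l : ℝ)| ^ k * Real.exp (-(ε / 2) * |(l : ℝ)|)) :=
  (summable_abs_pow_mul_exp k (half_pos hε)).mul_left M

lemma summable_norm_fourierTerm {M : ℝ} {c : ℤ → ℝ → ℂ} (hc : ModeBounded M c)
    (k : ℕ) {t : ℝ} (ht : t < 0) (x : ℝ) : Summable fun l => ‖fourierTerm k c t x l‖ :=
  Summable.of_nonneg_of_le (fun l => norm_nonneg _)
    (fun l => norm_fourierTerm_le hc k (show t ≤ -(-t) by simp) (by linarith) x l)
    (summable_fourierBound M k (by linarith))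

lemma hasDerivAt_fourierTerm (k : ℕ) (c : ℤ → ℝ → ℂ) (t x : ℝ) (l : ℤ) :
    HasDerivAt (fun x => fourierTerm k c t x l) (fourierTerm (k + 1) c t x l) x := by
  have h1 : HasDerivAt (fun x : ℝ => Complex.I * l * (x : ℂ)) (Complex.I * l * 1) x :=
    (Complex.ofRealCLM.hasDerivAt (x := x)).const_mul (Complex.I * l)
  have h2 := (h1.cexp).const_mul ((Complex.I * l) ^ k * c l t)
  refine h2.congr_deriv ?_
  rw [fourierTerm]; ring

lemma hasDerivAt_fourierSeries {M : ℝ} {c : ℤ → ℝ → ℂ} (hc : ModeBounded M c)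
    (k : ℕ) {t : ℝ} (ht : t < 0) (x : ℝ) :
    HasDerivAt (fourierSeries k c t) (fourierSeries (k + 1) c t x) x :=
  hasDerivAt_tsum_of_isPreconnected (summable_fourierBound M (k + 1) (ε := -t) (by linarith))
    isOpen_univ isPreconnected_univ (fun l y _ => hasDerivAt_fourierTerm k c t y l)
    (fun l y _ => norm_fourierTerm_le hc (k + 1) (by simp) (by linarith) y l)
    (mem_univ 0) (summable_norm_fourierTerm hc k ht 0).of_norm (mem_univ x)

lemma continuousOn_fourierSeries {M : ℝ} {c : ℤ → ℝ → ℂ} (hc : ModeBounded M c)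
    (hcc : ∀ l, Continuous (c l)) (k : ℕ) :
    ContinuousOn (fun z : ℝ × ℝ => fourierSeries k c z.1 z.2) {z | z.1 < 0} := by
  intro z hz
  have hz' : z.1 < 0 := hz
  have h1 : ContinuousOn (fun z : ℝ × ℝ => fourierSeries k c z.1 z.2) {w | w.1 < z.1 / 2} := by
    refine continuousOn_tsum (fun l => ?_)
      (summable_fourierBound M k (ε := -(z.1 / 2)) (by linarith))
      (fun l w hw => norm_fourierTerm_le hc k (by simpa using le_of_lt hw) (by linarith) w.2 l)
    have := hcc l
    unfold fourierTerm
    fun_prop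
  have h2 : IsOpen {w : ℝ × ℝ | w.1 < z.1 / 2} := isOpen_lt continuous_fst continuous_const
  exact (h1.continuousAt (h2.mem_nhds (show z.1 < z.1 / 2 by linarith))).continuousWithinAt

lemma hasDerivAt_fourierSeries_time {M : ℝ} {y q : ℤ → ℝ → ℂ} (hy : ModeBounded M y)
    (hq : ModeBounded M q)
    (hd : ∀ l, ∀ t < 0, HasDerivAt (y l) (l * y l t - Complex.I * l * q l t) t)
    (k : ℕ) {t : ℝ} (ht : t < 0) (x : ℝ) :
    HasDerivAt (fun t => fourierSeries k y t x)
      (-Complex.I * fourierSeries (k + 1) y t x - fourierSeries (k + 1) q t x) t := by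
  have hs : Summable fun l : ℤ =>
      M * (|(l : ℝ)| ^ (k + 1) * Real.exp (-(-(t / 2) / 2) * |(l : ℝ)|)) +
      M * (|(l : ℝ)| ^ (k + 1) * Real.exp (-(-(t / 2) / 2) * |(l : ℝ)|)) :=
    (summable_fourierBound M (k + 1) (by linarith)).add
      (summable_fourierBound M (k + 1) (by linarith))
  have h := hasDerivAt_tsum_of_isPreconnected
    (g := fun l t => fourierTerm k y t x l)
    (g' := fun l t => -Complex.I * fourierTerm (k + 1) y t x l - fourierTerm (k + 1) q t x l)
    hs (isOpen_Iio (a := t / 2)) isPreconnected_Iio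
    (fun l s hs => by
      have h1 := ((hd l s (by linarith [mem_Iio.mp hs])).const_mul ((Complex.I * l) ^ k)).mul_const
        (Complex.exp (Complex.I * l * x))
      refine h1.congr_deriv ?_
      simp only [fourierTerm]
      rw [pow_succ]
      linear_combination (Complex.I * l) ^ k * l * y l s * Complex.exp (Complex.I * l * x) *
        Complex.I_mul_I)
    (fun l s hs => by
      refine (norm_sub_le _ _).trans (add_le_add ?_ ?_)
      · rw [norm_mul, norm_neg, Complex.norm_I, one_mul]
        exact norm_fourierTerm_le hy (k + 1) (by simpa using le_of_lt hs) (by linarith) x l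
      · exact norm_fourierTerm_le hq (k + 1) (by simpa using le_of_lt hs) (by linarith) x l)
    (show t ∈ Iio (t / 2) from by simp only [mem_Iio]; linarith)
    (summable_norm_fourierTerm hy k ht x).of_norm
    (show t ∈ Iio (t / 2) from by simp only [mem_Iio]; linarith)
  refine h.congr_deriv ?_
  rw [Summable.tsum_sub ((summable_norm_fourierTerm hy (k + 1) ht x).of_norm.mul_left _)
    (summable_norm_fourierTerm hq (k + 1) ht x).of_norm, tsum_mul_left]
  rfl

lemma fourierSeries_periodic (k : ℕ) (c : ℤ → ℝ → ℂ) (t x : ℝ) :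
    fourierSeries k c t (x + 2 * Real.pi) = fourierSeries k c t x := by
  refine tsum_congr fun l => ?_
  rw [fourierTerm, fourierTerm]
  congr 1
  have : Complex.I * l * ((x + 2 * Real.pi : ℝ) : ℂ)
      = Complex.I * l * x + l * (2 * Real.pi * Complex.I) := by push_cast; ring
  rw [this, Complex.exp_add, Complex.exp_int_mul_two_pi_mul_I, mul_one]

lemma conj_fourierSeries (c : ℤ → ℝ → ℂ) (t x : ℝ) :
    starRingEnd ℂ (fourierSeries 0 c t x)
      = fourierSeries 0 (fun l t => starRingEnd ℂ (c (-l) t)) t x := by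
  rw [fourierSeries, Complex.conj_tsum, fourierSeries, ← (Equiv.neg ℤ).tsum_eq]
  refine tsum_congr fun l => ?_
  simp only [fourierTerm, pow_zero, one_mul, Equiv.neg_apply, map_mul, ← Complex.exp_conj,
    Complex.conj_I, Complex.conj_ofReal, map_intCast]
  push_cast
  congr 2
  ring

lemma fourierSeries_mul {M N : ℝ} {a b : ℤ → ℝ → ℂ} (ha : ModeBounded M a) (hb : ModeBounded N b)
    {t : ℝ} (ht : t < 0) (x : ℝ) :
    fourierSeries 0 a t x * fourierSeries 0 b t x
      = fourierSeries 0 (fun l t => ∑' j, a j t * b (l - j) t) t x := by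
  have h1 := summable_norm_fourierTerm ha 0 ht x
  have h2 := summable_norm_fourierTerm hb 0 ht x
  have hs := summable_mul_of_summable_norm h1 h2
  rw [fourierSeries, fourierSeries, tsum_mul_tsum_of_summable_norm h1 h2]
  let e : ℤ × ℤ ≃ ℤ × ℤ :=
    { toFun := fun p => (p.2, p.1 - p.2)
      invFun := fun p => (p.1 + p.2, p.1)
      left_inv := fun p => by simp
      right_inv := fun p => by simp }
  rw [← e.tsum_eq]
  have hs' : Summable fun p : ℤ × ℤ =>
      fourierTerm 0 a t x (e p).1 * fourierTerm 0 b t x (e p).2 := (e.summable_iff).mpr hs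
  rw [hs'.tsum_prod]
  refine tsum_congr fun l => ?_
  rw [fourierTerm, pow_zero, one_mul, ← tsum_mul_right]
  refine tsum_congr fun j => ?_
  simp only [e, Equiv.coe_fn_mk, fourierTerm, pow_zero, one_mul]
  have : Complex.exp (Complex.I * l * x)
      = Complex.exp (Complex.I * j * x) * Complex.exp (Complex.I * ((l - j : ℤ) : ℂ) * x) := by
    rw [← Complex.exp_add]; congr 1; push_cast; ring
  rw [this]; ring

lemma norm_fourierSeries_le {M : ℝ} {c : ℤ → ℝ → ℂ} (hc : ModeBounded M c) (t x : ℝ) :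
    ‖fourierSeries 0 c t x‖ ≤ M * modeWeightSum := by
  refine tsum_of_norm_bounded (summable_modeWeight.hasSum.mul_left M) fun l => ?_
  rw [norm_fourierTerm, pow_zero, one_mul]
  have hM : 0 ≤ M := by
    by_contra h
    nlinarith [(norm_nonneg _).trans (hc l t), expWeight_pos l t]
  refine (hc l t).trans (mul_le_mul_of_nonneg_left ?_ hM)
  have : Real.exp (|(l : ℝ)| / 2 * min t 0) ≤ 1 :=
    Real.exp_le_one_iff.mpr (mul_nonpos_of_nonneg_of_nonpos (by positivity) (min_le_right _ _))
  unfold expWeight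
  nlinarith [modeWeight_pos l]

lemma exists_norm_fourierSeries_le_exp {M : ℝ} {c : ℤ → ℝ → ℂ} (hc : ModeBounded M c)
    (h0 : ∀ t, c 0 t = 0) (k : ℕ) :
    ∃ C, ∀ t ≤ -1, ∀ x, ‖fourierSeries k c t x‖ ≤ C * Real.exp (t / 2) := by
  refine ⟨∑' l : ℤ, M * Real.exp (1 / 2) * (|(l : ℝ)| ^ k * Real.exp (-(1 / 2) * |(l : ℝ)|)),
    fun t ht x => ?_⟩
  refine tsum_of_norm_bounded
    ((summable_fourierBound (M * Real.exp (1 / 2)) k one_pos).hasSum.mul_right _) fun l => ?_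
  rw [norm_fourierTerm]
  by_cases hl : l = 0
  · subst hl
    have hM : 0 ≤ M := by
      by_contra h
      nlinarith [(norm_nonneg _).trans (hc 0 t), expWeight_pos 0 t]
    rw [h0, norm_zero, mul_zero]
    positivity
  have hM : 0 ≤ M := by
    by_contra h
    nlinarith [(norm_nonneg _).trans (hc l t), expWeight_pos l t]
  have hl1 : 1 ≤ |(l : ℝ)| := by exact_mod_cast Int.one_le_abs hl
  have h1 : expWeight l t ≤
      Real.exp (1 / 2) * Real.exp (-(1 / 2) * |(l : ℝ)|) * Real.exp (t / 2) := by
    rw [← Real.exp_add, ← Real.exp_add]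
    unfold expWeight
    rw [min_eq_left (by linarith)]
    calc _ ≤ 1 * Real.exp (|(l : ℝ)| / 2 * t) := by gcongr; exact modeWeight_le_one l
      _ ≤ _ := by
        rw [one_mul]
        apply Real.exp_le_exp.mpr
        nlinarith
  calc _ ≤ |(l : ℝ)| ^ k * (M * (Real.exp (1 / 2) * Real.exp (-(1 / 2) * |(l : ℝ)|) *
        Real.exp (t / 2))) := by
        gcongr
        exact (hc l t).trans (mul_le_mul_of_nonneg_left h1 hM)
    _ = _ := by ring

lemma integral_fourierSeries_eq_zero {M : ℝ} {c : ℤ → ℝ → ℂ} (hc : ModeBounded M c)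
    (h0 : ∀ t, c 0 t = 0) {t : ℝ} (ht : t < 0) :
    ∫ x in (0 : ℝ)..(2 * Real.pi), fourierSeries 0 c t x = 0 := by
  set W : ℤ → ℝ → ℂ := fun l t => c l t / (Complex.I * l) with hW
  have hWb : ModeBounded M W := fun l t => by
    refine le_trans ?_ (hc l t)
    rw [hW, norm_div]
    by_cases hl : l = 0
    · subst hl; simp
    · have hl1 : 1 ≤ ‖Complex.I * l‖ := by
        rw [norm_mul, Complex.norm_I, one_mul]
        simpa using (by exact_mod_cast Int.one_le_abs hl : (1 : ℝ) ≤ |(l : ℝ)|)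
      exact div_le_self (norm_nonneg _) hl1
  have hWc : fourierSeries 1 W t = fourierSeries 0 c t := by
    ext x
    refine tsum_congr fun l => ?_
    simp only [fourierTerm, hW]
    by_cases hl : l = 0
    · subst hl; simp [h0]
    · have : Complex.I * (l : ℂ) ≠ 0 := by simp [hl]
      field_simp
  have hcont : Continuous (fourierSeries 0 c t) :=
    continuous_iff_continuousAt.mpr fun x => (hasDerivAt_fourierSeries hc 0 ht x).continuousAt
  rw [intervalIntegral.integral_eq_sub_of_hasDerivAt (f := fourierSeries 0 W t)
    (fun x _ => by rw [← hWc]; exact hasDerivAt_fourierSeries hWb 0 ht x)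
    (hcont.intervalIntegrable _ _)]
  have := fourierSeries_periodic 0 W t 0
  rw [zero_add] at this
  rw [this, sub_self]

/-- The algebra generated by a sequence of functions, their conjugates and constants. -/
inductive ConjAlgebra (F : ℕ → ℝ → ℝ → ℂ) : (ℝ → ℝ → ℂ) → Prop
  | base (k : ℕ) : ConjAlgebra F (F k)
  | const (c : ℂ) : ConjAlgebra F (fun _ _ => c)
  | conj {u : ℝ → ℝ → ℂ} : ConjAlgebra F u → ConjAlgebra F (fun t x => starRingEnd ℂ (u t x))
  | add {u v : ℝ → ℝ → ℂ} : ConjAlgebra F u → ConjAlgebra F v →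
      ConjAlgebra F (fun t x => u t x + v t x)
  | mul {u v : ℝ → ℝ → ℂ} : ConjAlgebra F u → ConjAlgebra F v →
      ConjAlgebra F (fun t x => u t x * v t x)

lemma hasDerivAt_conj {u : ℝ → ℂ} {u' : ℂ} {x : ℝ} (h : HasDerivAt u u' x) :
    HasDerivAt (fun x => starRingEnd ℂ (u x)) (starRingEnd ℂ u') x :=
  Complex.conjCLE.toContinuousLinearMap.hasFDerivAt.comp_hasDerivAt x h

namespace ConjAlgebra

variable {F : ℕ → ℝ → ℝ → ℂ} {u : ℝ → ℝ → ℂ}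

lemma continuousOn (hc : ∀ k, ContinuousOn (fun z : ℝ × ℝ => F k z.1 z.2) {z | z.1 < 0})
    (hu : ConjAlgebra F u) : ContinuousOn (fun z : ℝ × ℝ => u z.1 z.2) {z | z.1 < 0} := by
  induction hu with
  | base k => exact hc k
  | const c => exact continuousOn_const
  | conj _ ih => exact Complex.continuous_conj.comp_continuousOn ih
  | add _ _ ih1 ih2 => exact ih1.add ih2
  | mul _ _ ih1 ih2 => exact ih1.mul ih2

lemma exists_deriv_right
    (hx : ∀ k, ∀ t < 0, ∀ x, HasDerivAt (F k t) (F (k + 1) t x) x) (hu : ConjAlgebra F u) :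
    ∃ u', ConjAlgebra F u' ∧ ∀ t < 0, ∀ x, HasDerivAt (u t) (u' t x) x := by
  induction hu with
  | base k => exact ⟨_, base (k + 1), hx k⟩
  | const c => exact ⟨_, const 0, fun t _ x => hasDerivAt_const x c⟩
  | conj _ ih =>
    obtain ⟨u', h1, h2⟩ := ih
    exact ⟨_, conj h1, fun t ht x => hasDerivAt_conj (h2 t ht x)⟩
  | add _ _ ih1 ih2 =>
    obtain ⟨u', h1, h2⟩ := ih1
    obtain ⟨v', h3, h4⟩ := ih2
    exact ⟨_, add h1 h3, fun t ht x => (h2 t ht x).add (h4 t ht x)⟩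
  | mul hu hv ih1 ih2 =>
    obtain ⟨u', h1, h2⟩ := ih1
    obtain ⟨v', h3, h4⟩ := ih2
    exact ⟨_, add (mul h1 hv) (mul hu h3), fun t ht x => (h2 t ht x).mul (h4 t ht x)⟩

lemma exists_deriv_left
    (ht : ∀ k, ∃ w, ConjAlgebra F w ∧ ∀ t < 0, ∀ x, HasDerivAt (fun t => F k t x) (w t x) t)
    (hu : ConjAlgebra F u) :
    ∃ u', ConjAlgebra F u' ∧ ∀ t < 0, ∀ x, HasDerivAt (fun t => u t x) (u' t x) t := by
  induction hu with
  | base k => exact ht k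
  | const c => exact ⟨_, const 0, fun t _ x => hasDerivAt_const t c⟩
  | conj _ ih =>
    obtain ⟨u', h1, h2⟩ := ih
    exact ⟨_, conj h1, fun t ht x => hasDerivAt_conj (h2 t ht x)⟩
  | add _ _ ih1 ih2 =>
    obtain ⟨u', h1, h2⟩ := ih1
    obtain ⟨v', h3, h4⟩ := ih2
    exact ⟨_, add h1 h3, fun t ht x => (h2 t ht x).add (h4 t ht x)⟩
  | mul hu hv ih1 ih2 =>
    obtain ⟨u', h1, h2⟩ := ih1
    obtain ⟨v', h3, h4⟩ := ih2
    exact ⟨_, add (mul h1 hv) (mul hu h3), fun t ht x => (h2 t ht x).mul (h4 t ht x)⟩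

end ConjAlgebra

lemma isOpen_negTime : IsOpen {z : ℝ × ℝ | z.1 < 0} := isOpen_lt continuous_fst continuous_const

lemma contDiffOn_succ_of_partials {u ut ux : ℝ → ℝ → ℂ} {n : ℕ}
    (ht : ∀ t < 0, ∀ x, HasDerivAt (fun t => u t x) (ut t x) t)
    (hx : ∀ t < 0, ∀ x, HasDerivAt (u t) (ux t x) x)
    (hut : ContDiffOn ℝ n (fun z : ℝ × ℝ => ut z.1 z.2) {z | z.1 < 0})
    (hux : ContDiffOn ℝ n (fun z : ℝ × ℝ => ux z.1 z.2) {z | z.1 < 0}) :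
    ContDiffOn ℝ (n + 1) (fun z : ℝ × ℝ => u z.1 z.2) {z | z.1 < 0} := by
  rw [contDiffOn_succ_iff_hasFDerivWithinAt_of_uniqueDiffOn isOpen_negTime.uniqueDiffOn]
  let L : ℂ →L[ℝ] ℝ →L[ℝ] ℂ := ContinuousLinearMap.toSpanSingletonCLE.toContinuousLinearMap
  refine ⟨by simp, fun z => (L (ut z.1 z.2)).coprod (L (ux z.1 z.2)), ?_, ?_⟩
  · have h1 : ContDiffOn ℝ n (fun z : ℝ × ℝ => L (ut z.1 z.2)) {z | z.1 < 0} :=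
      L.contDiff.comp_contDiffOn hut
    have h2 : ContDiffOn ℝ n (fun z : ℝ × ℝ => L (ux z.1 z.2)) {z | z.1 < 0} :=
      L.contDiff.comp_contDiffOn hux
    have h3 : (fun z : ℝ × ℝ => (L (ut z.1 z.2)).coprod (L (ux z.1 z.2)))
        = fun z => (L (ut z.1 z.2)).comp (ContinuousLinearMap.fst ℝ ℝ ℝ) +
          (L (ux z.1 z.2)).comp (ContinuousLinearMap.snd ℝ ℝ ℝ) := by
      ext z <;> simp
    rw [h3]
    exact (h1.clm_comp contDiffOn_const).add (h2.clm_comp contDiffOn_const)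
  · intro z hz
    have hev : ∀ᶠ w : ℝ × ℝ in nhds z, w.1 < 0 := isOpen_negTime.mem_nhds hz
    refine (hasStrictFDerivAt_uncurry_coprod (f := u) (f₁ := fun t x => L (ut t x))
      (f₂ := fun t x => L (ux t x)) ?_ ?_ ?_ ?_).hasFDerivAt.hasFDerivWithinAt
    · filter_upwards [hev] with w hw using (ht w.1 hw w.2).hasFDerivAt
    · filter_upwards [hev] with w hw using (hx w.1 hw w.2).hasFDerivAt
    · exact L.continuous.continuousAt.comp
        (hut.continuousOn.continuousAt (isOpen_negTime.mem_nhds hz))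
    · exact L.continuous.continuousAt.comp
        (hux.continuousOn.continuousAt (isOpen_negTime.mem_nhds hz))

lemma ConjAlgebra.contDiffOn {F : ℕ → ℝ → ℝ → ℂ}
    (hc : ∀ k, ContinuousOn (fun z : ℝ × ℝ => F k z.1 z.2) {z | z.1 < 0})
    (hx : ∀ k, ∀ t < 0, ∀ x, HasDerivAt (F k t) (F (k + 1) t x) x)
    (ht : ∀ k, ∃ w, ConjAlgebra F w ∧ ∀ t < 0, ∀ x, HasDerivAt (fun t => F k t x) (w t x) t)
    (n : ℕ) {u : ℝ → ℝ → ℂ} (hu : ConjAlgebra F u) :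
    ContDiffOn ℝ n (fun z : ℝ × ℝ => u z.1 z.2) {z | z.1 < 0} := by
  induction n generalizing u with
  | zero => exact contDiffOn_zero.mpr (hu.continuousOn hc)
  | succ n ih =>
    obtain ⟨ux, h1, h2⟩ := hu.exists_deriv_right hx
    obtain ⟨ut, h3, h4⟩ := hu.exists_deriv_left ht
    exact_mod_cast contDiffOn_succ_of_partials h4 h2 (ih h3) (ih h1)

lemma HasDerivAt.complex_re {u : ℝ → ℂ} {u' : ℂ} {x : ℝ} (h : HasDerivAt u u' x) :
    HasDerivAt (fun x => (u x).re) u'.re x :=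
  Complex.reCLM.hasFDerivAt.comp_hasDerivAt x h

lemma HasDerivAt.complex_im {u : ℝ → ℂ} {u' : ℂ} {x : ℝ} (h : HasDerivAt u u' x) :
    HasDerivAt (fun x => (u x).im) u'.im x :=
  Complex.imCLM.hasFDerivAt.comp_hasDerivAt x h

lemma iteratedDeriv_eq_of_chain {u : ℕ → ℝ → ℝ} (h : ∀ k x, HasDerivAt (u k) (u (k + 1) x) x)
    (k : ℕ) : iteratedDeriv k (u 0) = u k := by
  induction k with
  | zero => simp
  | succ k ih =>
    rw [iteratedDeriv_succ, ih]
    ext x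
    exact (h k x).deriv

/-- The elliptic shallow water system `S_t + S S_x = p_x`, `p_t + ((1+p) S)_x = 0` has a nontrivial
smooth solution on `(-∞, 0)`, periodic in space, decaying exponentially as `t → -∞`. -/
theorem exists_ancient_solution : ∃ S p : ℝ → ℝ → ℝ,
    ContDiffOn ℝ ∞ (fun z : ℝ × ℝ => S z.1 z.2) {z | z.1 < 0} ∧
    ContDiffOn ℝ ∞ (fun z : ℝ × ℝ => p z.1 z.2) {z | z.1 < 0} ∧
    (∀ t x, S t (x + 2 * Real.pi) = S t x) ∧ (∀ t x, p t (x + 2 * Real.pi) = p t x) ∧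
    (∀ t < 0, ∀ x, deriv (fun t => S t x) t = deriv (p t) x - S t x * deriv (S t) x) ∧
    (∀ t < 0, ∀ x, deriv (fun t => p t x) t
      = -(deriv (S t) x * (1 + p t x) + S t x * deriv (p t) x)) ∧
    (∀ t < 0, ∫ x in (0 : ℝ)..(2 * Real.pi), p t x = 0) ∧
    (∀ k, ∃ C, ∀ t ≤ -1, ∀ x, |iteratedDeriv k (S t) x| ≤ C * Real.exp (t / 2) ∧
      |iteratedDeriv k (p t) x| ≤ C * Real.exp (t / 2)) ∧
    (∀ t x, |S t x| ≤ 1 / 4 ∧ |p t x| ≤ 1 / 4) ∧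
    ∃ t < -1, ∃ x, p t x ≠ 0 := by
  obtain ⟨C, hC, hev⟩ := exists_modes
  have hs := modeWeightSum_nonneg
  set D : ℝ := C * (modeWeightSum + 1) with hD
  have hD0 : 0 < D := by positivity
  have hev1 : ∀ᶠ δ : ℝ in nhdsWithin 0 (Ioi 0), δ < 1 / (4 * D) :=
    nhdsWithin_le_nhds (Iio_mem_nhds (by positivity))
  have hev2 : ∀ᶠ δ : ℝ in nhdsWithin 0 (Ioi 0), δ < Real.exp (-2) / D :=
    nhdsWithin_le_nhds (Iio_mem_nhds (by positivity))
  obtain ⟨δ, ⟨y, q, hd, hyb, hqb, hyδ, hy0, hyc, hqc, hq⟩, hδ1, hδ2, hδ0⟩ :=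
    (hev.and (hev1.and (hev2.and self_mem_nhdsWithin))).exists
  replace hδ0 : 0 < δ := hδ0
  rw [lt_div_iff₀ (by positivity)] at hδ1 hδ2
  have hy : ModeBounded (C * δ) y := hyb
  have hqm : ModeBounded (C * δ) q := hqb
  set F : ℕ → ℝ → ℝ → ℂ := fun k => fourierSeries k y with hF
  set Y : ℝ → ℝ → ℂ := F 0 with hY
  have hx : ∀ k, ∀ t < 0, ∀ x, HasDerivAt (F k t) (F (k + 1) t x) x :=
    fun k t ht x => hasDerivAt_fourierSeries hy k ht x
  have hcont : ∀ k, ContinuousOn (fun z : ℝ × ℝ => F k z.1 z.2) {z | z.1 < 0} :=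
    continuousOn_fourierSeries hy hyc
  have hexpneg : ∀ l t, expWeight (-l) t = expWeight l t := fun l t => by
    simp [expWeight, modeWeight_neg]
  have hstar : ModeBounded (C * δ) (fun l t => starRingEnd ℂ (y (-l) t)) := fun l t => by
    rw [RCLike.norm_conj, ← hexpneg l t]; exact hyb (-l) t
  have hQ : ∀ t < 0, ∀ x, fourierSeries 0 q t x
      = 1 / 8 * ((Y t x + starRingEnd ℂ (Y t x)) * (3 * Y t x - starRingEnd ℂ (Y t x))) := by
    intro t ht x
    have hA : fourierSeries 0 (fun l t => y l t + starRingEnd ℂ (y (-l) t)) t x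
        = Y t x + starRingEnd ℂ (Y t x) := by
      rw [hY, hF, conj_fourierSeries]
      simp only [fourierSeries]
      rw [← (summable_norm_fourierTerm hy 0 ht x).of_norm.tsum_add
        (summable_norm_fourierTerm hstar 0 ht x).of_norm]
      exact tsum_congr fun l => by simp only [fourierTerm]; ring
    have hB : fourierSeries 0 (fun l t => 3 * y l t - starRingEnd ℂ (y (-l) t)) t x
        = 3 * Y t x - starRingEnd ℂ (Y t x) := by
      rw [hY, hF, conj_fourierSeries]
      simp only [fourierSeries]
      rw [← tsum_mul_left, ← ((summable_norm_fourierTerm hy 0 ht x).of_norm.mul_left 3).tsum_sub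
        (summable_norm_fourierTerm hstar 0 ht x).of_norm]
      exact tsum_congr fun l => by simp only [fourierTerm]; ring
    have hAb : ModeBounded (C * δ + C * δ) (fun l t => y l t + starRingEnd ℂ (y (-l) t)) :=
      fun l t => by
        rw [add_mul]; exact (norm_add_le _ _).trans (add_le_add (hy l t) (hstar l t))
    have hBb : ModeBounded (3 * (C * δ) + C * δ)
        (fun l t => 3 * y l t - starRingEnd ℂ (y (-l) t)) := fun l t => by
      rw [add_mul]
      refine (norm_sub_le _ _).trans (add_le_add ?_ (hstar l t))
      rw [norm_mul, mul_assoc]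
      simpa using hy l t
    rw [← hA, ← hB, fourierSeries_mul hAb hBb ht x]
    simp only [fourierSeries]
    rw [← tsum_mul_left]
    refine tsum_congr fun l => ?_
    simp only [fourierTerm, pow_zero, one_mul]
    rw [hq l t]; ring
  have hQalg : ∀ k, ∃ w, ConjAlgebra F w ∧ ∀ t < 0, ∀ x, fourierSeries k q t x = w t x := by
    intro k
    induction k with
    | zero =>
      refine ⟨_, .mul (.const (1 / 8)) (.mul (.add (.base 0) (.conj (.base 0)))
        (.add (.mul (.const 3) (.base 0)) (.mul (.const (-1)) (.conj (.base 0))))), ?_⟩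
      intro t ht x
      rw [hQ t ht x, hY]; ring
    | succ k ih =>
      obtain ⟨w, hw, hw'⟩ := ih
      obtain ⟨w', h1, h2⟩ := hw.exists_deriv_right hx
      refine ⟨w', h1, fun t ht x => ?_⟩
      have h3 := hasDerivAt_fourierSeries hqm k ht x
      rw [show fourierSeries k q t = w t from funext (hw' t ht)] at h3
      exact h3.unique (h2 t ht x)
  have htime : ∀ k, ∀ t < 0, ∀ x, HasDerivAt (fun t => F k t x)
      (-Complex.I * F (k + 1) t x - fourierSeries (k + 1) q t x) t :=
    fun k t ht x => hasDerivAt_fourierSeries_time hy hqm hd k ht x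
  have ht : ∀ k, ∃ w, ConjAlgebra F w ∧ ∀ t < 0, ∀ x,
      HasDerivAt (fun t => F k t x) (w t x) t := by
    intro k
    obtain ⟨w, hw, hw'⟩ := hQalg (k + 1)
    refine ⟨_, .add (.mul (.const (-Complex.I)) (.base (k + 1))) (.mul (.const (-1)) hw), ?_⟩
    intro t ht x
    refine (htime k t ht x).congr_deriv ?_
    rw [hw' t ht x]; ring
  have hsm : ContDiffOn ℝ ∞ (fun z : ℝ × ℝ => Y z.1 z.2) {z | z.1 < 0} :=
    contDiffOn_infty.mpr fun n => ConjAlgebra.contDiffOn hcont hx ht n (.base 0)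
  have hYsmall : ∀ t x, ‖Y t x‖ ≤ 1 / 4 := fun t x => by
    refine (norm_fourierSeries_le hy t x).trans ?_
    nlinarith
  have hpde : ∀ t < 0, ∀ x, fourierSeries 1 q t x
      = ((Y t x).re * (F 1 t x).re : ℝ) +
        ((F 1 t x).re * (Y t x).im + (Y t x).re * (F 1 t x).im : ℝ) * Complex.I := by
    intro t ht x
    have h1 := hasDerivAt_fourierSeries hqm 0 ht x
    have hre := (hx 0 t ht x).complex_re
    have him := (hx 0 t ht x).complex_im
    have h2 : fourierSeries 0 q t = fun x =>
        (((Y t x).re * (Y t x).re / 2 : ℝ) : ℂ) +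
          (((Y t x).re * (Y t x).im : ℝ) : ℂ) * Complex.I := by
      ext x
      rw [hQ t ht x]
      apply Complex.ext <;> simp <;> ring
    rw [h2] at h1
    have h3 := (((hre.mul hre).div_const 2).ofReal_comp).add
      (((hre.mul him).ofReal_comp).mul_const Complex.I)
    refine (h1.unique h3).trans ?_
    push_cast
    ring
  have hSx : ∀ t < 0, ∀ x, HasDerivAt (fun x => (Y t x).re) (F 1 t x).re x :=
    fun t ht x => (hx 0 t ht x).complex_re
  have hpx : ∀ t < 0, ∀ x, HasDerivAt (fun x => (Y t x).im) (F 1 t x).im x :=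
    fun t ht x => (hx 0 t ht x).complex_im
  refine ⟨fun t x => (Y t x).re, fun t x => (Y t x).im,
    Complex.reCLM.contDiff.comp_contDiffOn hsm, Complex.imCLM.contDiff.comp_contDiffOn hsm,
    fun t x => congrArg _ (fourierSeries_periodic 0 y t x),
    fun t x => congrArg _ (fourierSeries_periodic 0 y t x), fun t ht x => ?_, fun t ht x => ?_,
    fun t ht => ?_, fun k => ?_, fun t x => ⟨?_, ?_⟩, -2, by norm_num, Real.pi / 2, ?_⟩
  · rw [(htime 0 t ht x).complex_re.deriv, (hSx t ht x).deriv, (hpx t ht x).deriv, zero_add,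
      hpde t ht x]
    simp
  · rw [(htime 0 t ht x).complex_im.deriv, (hSx t ht x).deriv, (hpx t ht x).deriv, zero_add,
      hpde t ht x]
    simp
    ring
  · have hYc : Continuous (Y t) :=
      continuous_iff_continuousAt.mpr fun x => (hx 0 t ht x).continuousAt
    have h1 := Complex.imCLM.intervalIntegral_comp_comm (μ := volume)
      (hYc.intervalIntegrable 0 (2 * Real.pi))
    simp only [Complex.imCLM_apply] at h1
    rw [h1, hY, hF, integral_fourierSeries_eq_zero hy hy0 ht, Complex.zero_im]
  · obtain ⟨K, hK⟩ := exists_norm_fourierSeries_le_exp hy hy0 k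
    refine ⟨K, fun t ht x => ?_⟩
    have ht0 : t < 0 := by linarith
    have h1 := iteratedDeriv_eq_of_chain (u := fun k x => (F k t x).re)
      (fun k x => (hx k t ht0 x).complex_re) k
    have h2 := iteratedDeriv_eq_of_chain (u := fun k x => (F k t x).im)
      (fun k x => (hx k t ht0 x).complex_im) k
    rw [show iteratedDeriv k (fun x => (Y t x).re) = _ from h1,
      show iteratedDeriv k (fun x => (Y t x).im) = _ from h2]
    exact ⟨(Complex.abs_re_le_norm _).trans (hK t ht x),
      (Complex.abs_im_le_norm _).trans (hK t ht x)⟩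
  · exact (Complex.abs_re_le_norm _).trans (hYsmall t x)
  · exact (Complex.abs_im_le_norm _).trans (hYsmall t x)
  · have ht : (-2 : ℝ) < 0 := by norm_num
    set g : ℤ → ℝ → ℂ := fun l t => if l = 1 then ((δ * Real.exp t : ℝ) : ℂ) else 0 with hg
    have hgs : fourierSeries 0 g (-2) (Real.pi / 2) =
        ((δ * Real.exp (-2) : ℝ) : ℂ) * Complex.I := by
      rw [fourierSeries, tsum_eq_single 1 (fun l hl => by simp [fourierTerm, hg, hl])]
      simp only [fourierTerm, hg, pow_zero, one_mul, if_true, Int.cast_one, mul_one]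
      rw [mul_comm Complex.I]
      push_cast
      rw [Complex.exp_pi_div_two_mul_I]
    have hgsum : Summable (fourierTerm 0 g (-2) (Real.pi / 2)) :=
      summable_of_hasFiniteSupport ((Set.finite_singleton (1 : ℤ)).subset fun l hl => by
        by_contra h
        exact hl (by simp [fourierTerm, hg, show l ≠ 1 from h]))
    have hdiff : ‖Y (-2) (Real.pi / 2) - ((δ * Real.exp (-2) : ℝ) : ℂ) * Complex.I‖
        ≤ C * δ ^ 2 * modeWeightSum := by
      rw [← hgs]
      have h1 : Y (-2) (Real.pi / 2) - fourierSeries 0 g (-2) (Real.pi / 2)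
          = ∑' l, fourierTerm 0 (fun l t => y l t - g l t) (-2) (Real.pi / 2) l := by
        rw [hY, hF]
        simp only [fourierSeries]
        rw [← (summable_norm_fourierTerm hy 0 ht _).of_norm.tsum_sub hgsum]
        exact tsum_congr fun l => by simp only [fourierTerm]; ring
      rw [h1]
      refine tsum_of_norm_bounded (summable_modeWeight.hasSum.mul_left (C * δ ^ 2)) fun l => ?_
      rw [norm_fourierTerm, pow_zero, one_mul]
      refine (hyδ l (-2) ht).trans (mul_le_mul_of_nonneg_left ?_ (by positivity))
      have : Real.exp (|(l : ℝ)| / 2 * min (-2) 0) ≤ 1 :=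
        Real.exp_le_one_iff.mpr
          (mul_nonpos_of_nonneg_of_nonpos (by positivity) (min_le_right _ _))
      unfold expWeight
      nlinarith [modeWeight_pos l]
    intro h0
    replace h0 : (Y (-2) (Real.pi / 2)).im = 0 := h0
    have h1 := (Complex.abs_im_le_norm _).trans hdiff
    rw [Complex.sub_im, h0] at h1
    simp only [Complex.mul_im, Complex.ofReal_re, Complex.I_im, Complex.ofReal_im, Complex.I_re,
      mul_one, mul_zero, add_zero, zero_sub, abs_neg] at h1
    rw [abs_of_pos (by positivity)] at h1
    have h2 : C * δ ^ 2 * modeWeightSum ≤ D * δ ^ 2 := by rw [hD]; nlinarith [sq_nonneg δ]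
    nlinarith [Real.exp_pos (-2)]

/-- The un-normalised bump `y ↦ θ((1 - y²)/(1 + y²))`, supported in `[-1, 1]`. -/
def baseShape (y : ℝ) : ℝ := Real.smoothTransition ((1 - y ^ 2) / (1 + y ^ 2))

/-- The pullback of `baseShape` under `v ↦ v - P / (v - S)`, extended by `0` across `v = S`. -/
def rawProfile (S P v : ℝ) : ℝ :=
  Real.smoothTransition (2 * (v - S) ^ 2 / ((v - S) ^ 2 + (v * (v - S) - P) ^ 2) - 1)

theorem contDiff_baseShape : ContDiff ℝ ∞ baseShape := by
  unfold baseShape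
  refine Real.smoothTransition.contDiff.comp (ContDiff.div (by fun_prop) (by fun_prop) ?_)
  intro x; positivity

theorem baseShape_nonneg (y : ℝ) : 0 ≤ baseShape y := Real.smoothTransition.nonneg _

theorem baseShape_eq_zero {y : ℝ} (hy : 1 ≤ |y|) : baseShape y = 0 := by
  refine Real.smoothTransition.zero_of_nonpos ?_
  have : 1 ≤ y ^ 2 := by nlinarith [sq_abs y, abs_nonneg y]
  exact div_nonpos_of_nonpos_of_nonneg (by linarith) (by positivity)

theorem hasCompactSupport_of_eq_zero {f : ℝ → ℝ} {R : ℝ} (hf : ∀ y, R ≤ |y| → f y = 0) :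
    HasCompactSupport f := by
  refine HasCompactSupport.intro (isCompact_Icc (a := -R) (b := R)) fun y hy => hf y ?_
  by_contra h
  exact hy (abs_le.1 (le_of_lt (not_le.1 h)))

theorem integral_baseShape_pos : 0 < ∫ y, baseShape y := by
  refine contDiff_baseShape.continuous.integral_pos_of_hasCompactSupport_nonneg_nonzero
    (hasCompactSupport_of_eq_zero fun y hy => baseShape_eq_zero hy) baseShape_nonneg (x := 0) ?_
  refine ne_of_gt (Real.smoothTransition.pos_of_pos ?_)
  norm_num

theorem rawProfile_den_pos {S P : ℝ} (hP : 0 < P) (v : ℝ) :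
    0 < (v - S) ^ 2 + (v * (v - S) - P) ^ 2 := by
  rcases eq_or_ne (v - S) 0 with h | h
  · rw [h]; nlinarith
  · positivity

theorem rawProfile_eq_baseShape {S P v y : ℝ} (hv : v - S ≠ 0) (hy : (v - S) * (v - y) = P) :
    rawProfile S P v = baseShape y := by
  unfold rawProfile baseShape
  congr 1
  have h1 : v * (v - S) - P = (v - S) * y := by rw [← hy]; ring
  rw [h1]
  have h2 : 0 < 1 + y ^ 2 := by positivity
  have h3 : (v - S) ^ 2 + ((v - S) * y) ^ 2 = (v - S) ^ 2 * (1 + y ^ 2) := by ring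
  rw [h3]
  field_simp
  ring

theorem rawProfile_eq_zero {S P v : ℝ} (hS : |S| ≤ 1) (hP : 0 < P) (hP2 : P ≤ 2) (hv : 4 ≤ |v|) :
    rawProfile S P v = 0 := by
  refine Real.smoothTransition.zero_of_nonpos ?_
  have hd := rawProfile_den_pos (S := S) hP v
  rw [sub_nonpos, div_le_one hd]
  have hw : 3 ≤ |v - S| := by
    have := abs_sub_abs_le_abs_sub v S
    linarith
  have h1 : |v - S| ≤ |v * (v - S) - P| := by
    have := abs_sub_abs_le_abs_sub (v * (v - S)) P
    rw [abs_mul, abs_of_pos hP] at this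
    nlinarith
  have := pow_le_pow_left₀ (abs_nonneg _) h1 2
  rw [sq_abs, sq_abs] at this
  linarith

theorem ContDiff.rawProfile {E : Type*} [NormedAddCommGroup E] [NormedSpace ℝ E]
    {S P v : E → ℝ} (hS : ContDiff ℝ ∞ S) (hP : ContDiff ℝ ∞ P) (hv : ContDiff ℝ ∞ v)
    (h0 : ∀ z, 0 < P z) : ContDiff ℝ ∞ fun z => rawProfile (S z) (P z) (v z) := by
  unfold _root_.rawProfile
  refine Real.smoothTransition.contDiff.comp (ContDiff.sub (ContDiff.div ?_ ?_ ?_) contDiff_const)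
  · fun_prop
  · fun_prop
  · exact fun z => ne_of_gt (rawProfile_den_pos (h0 z) _)

/-- The upper branch of the inverse of `v ↦ v - P / (v - S)`. -/
def upperBranch (S P y : ℝ) : ℝ := ((S + y) + √((y - S) ^ 2 + 4 * P)) / 2

/-- The lower branch of the inverse of `v ↦ v - P / (v - S)`. -/
def lowerBranch (S P y : ℝ) : ℝ := ((S + y) - √((y - S) ^ 2 + 4 * P)) / 2

theorem abs_lt_sqrt_discr {S P : ℝ} (hP : 0 < P) (y : ℝ) : |y - S| < √((y - S) ^ 2 + 4 * P) := by
  rw [← Real.sqrt_sq_eq_abs]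
  exact Real.sqrt_lt_sqrt (by positivity) (by linarith)

theorem upperBranch_mul {S P : ℝ} (hP : 0 < P) (y : ℝ) :
    (upperBranch S P y - S) * (upperBranch S P y - y) = P := by
  unfold upperBranch
  have := Real.sq_sqrt (show 0 ≤ (y - S) ^ 2 + 4 * P by positivity)
  nlinarith

theorem lowerBranch_mul {S P : ℝ} (hP : 0 < P) (y : ℝ) :
    (lowerBranch S P y - S) * (lowerBranch S P y - y) = P := by
  unfold lowerBranch
  have := Real.sq_sqrt (show 0 ≤ (y - S) ^ 2 + 4 * P by positivity)
  nlinarith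

theorem lt_upperBranch {S P : ℝ} (hP : 0 < P) (y : ℝ) : S < upperBranch S P y := by
  have := abs_lt.1 (abs_lt_sqrt_discr (S := S) hP y)
  unfold upperBranch
  linarith

theorem lowerBranch_lt {S P : ℝ} (hP : 0 < P) (y : ℝ) : lowerBranch S P y < S := by
  have := abs_lt.1 (abs_lt_sqrt_discr (S := S) hP y)
  unfold lowerBranch
  linarith

theorem image_upperBranch {S P : ℝ} (hP : 0 < P) : upperBranch S P '' univ = Ioi S := by
  ext v
  simp only [image_univ, mem_range, mem_Ioi]
  refine ⟨fun ⟨y, hy⟩ => hy ▸ lt_upperBranch hP y, fun hv => ⟨v - P / (v - S), ?_⟩⟩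
  have hw : 0 < v - S := sub_pos.2 hv
  have h1 : (v - P / (v - S) - S) ^ 2 + 4 * P = (v - S + P / (v - S)) ^ 2 := by
    field_simp; ring
  unfold upperBranch
  rw [h1, Real.sqrt_sq (by positivity)]
  ring

theorem image_lowerBranch {S P : ℝ} (hP : 0 < P) : lowerBranch S P '' univ = Iio S := by
  ext v
  simp only [image_univ, mem_range, mem_Iio]
  refine ⟨fun ⟨y, hy⟩ => hy ▸ lowerBranch_lt hP y, fun hv => ⟨v - P / (v - S), ?_⟩⟩
  have hw : 0 < S - v := sub_pos.2 hv
  have hw' : v - S ≠ 0 := by linarith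
  have h1 : (v - P / (v - S) - S) ^ 2 + 4 * P = (S - v + P / (S - v)) ^ 2 := by
    rw [show S - v = -(v - S) by ring]
    field_simp; ring
  unfold lowerBranch
  rw [h1, Real.sqrt_sq (by positivity), show S - v = -(v - S) by ring, div_neg]
  ring

theorem hasDerivAt_sqrt_discr {S P : ℝ} (hP : 0 < P) (y : ℝ) :
    HasDerivAt (fun y => √((y - S) ^ 2 + 4 * P))
    ((y - S) / √((y - S) ^ 2 + 4 * P)) y := by
  have h : HasDerivAt (fun y => (y - S) ^ 2 + 4 * P) (2 * (y - S)) y := by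
    have := (((hasDerivAt_id y).sub_const S).pow 2).add_const (4 * P)
    simpa using this
  refine (h.sqrt (by positivity)).congr_deriv ?_
  have : 0 < √((y - S) ^ 2 + 4 * P) := by positivity
  field_simp

theorem hasDerivAt_upperBranch {S P : ℝ} (hP : 0 < P) (y : ℝ) : HasDerivAt (upperBranch S P)
    ((1 + (y - S) / √((y - S) ^ 2 + 4 * P)) / 2) y :=
  (((hasDerivAt_id y).const_add S).add (hasDerivAt_sqrt_discr hP y)).div_const 2

theorem hasDerivAt_lowerBranch {S P : ℝ} (hP : 0 < P) (y : ℝ) : HasDerivAt (lowerBranch S P)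
    ((1 - (y - S) / √((y - S) ^ 2 + 4 * P)) / 2) y :=
  (((hasDerivAt_id y).const_add S).sub (hasDerivAt_sqrt_discr hP y)).div_const 2

theorem abs_discr_ratio_lt_one {S P : ℝ} (hP : 0 < P) (y : ℝ) :
    |(y - S) / √((y - S) ^ 2 + 4 * P)| < 1 := by
  have h0 : 0 < √((y - S) ^ 2 + 4 * P) := by positivity
  rw [abs_div, abs_of_pos h0, div_lt_one h0]
  exact abs_lt_sqrt_discr hP y

theorem injective_upperBranch {S P : ℝ} (hP : 0 < P) : Function.Injective (upperBranch S P) := by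
  intro y z h
  have h1 := upperBranch_mul (S := S) hP y
  have h2 := upperBranch_mul (S := S) hP z
  have h3 := lt_upperBranch (S := S) hP z
  rw [h] at h1
  have := mul_left_cancel₀ (sub_pos.2 h3).ne' (h1.trans h2.symm)
  linarith

theorem injective_lowerBranch {S P : ℝ} (hP : 0 < P) : Function.Injective (lowerBranch S P) := by
  intro y z h
  have h1 := lowerBranch_mul (S := S) hP y
  have h2 := lowerBranch_mul (S := S) hP z
  have h3 := lowerBranch_lt (S := S) hP z
  rw [h] at h1
  have := mul_left_cancel₀ (sub_neg.2 h3).ne (h1.trans h2.symm)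
  linarith

theorem setIntegral_Ioi_rawProfile {S P : ℝ} (hP : 0 < P) (q : ℝ → ℝ) :
    ∫ v in Ioi S, q v * rawProfile S P v
      = ∫ y, (1 + (y - S) / √((y - S) ^ 2 + 4 * P)) / 2 *
          (q (upperBranch S P y) * baseShape y) := by
  rw [← image_upperBranch hP, integral_image_eq_integral_abs_deriv_smul MeasurableSet.univ
    (fun y _ => (hasDerivAt_upperBranch hP y).hasDerivWithinAt) (injective_upperBranch hP).injOn,
    setIntegral_univ]
  refine integral_congr_ae (.of_forall fun y => ?_)
  have h1 := abs_lt.1 (abs_discr_ratio_lt_one (S := S) hP y)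
  dsimp only
  rw [smul_eq_mul, abs_of_pos (by linarith),
    rawProfile_eq_baseShape (sub_pos.2 (lt_upperBranch hP y)).ne' (upperBranch_mul hP y)]

theorem setIntegral_Iio_rawProfile {S P : ℝ} (hP : 0 < P) (q : ℝ → ℝ) :
    ∫ v in Iio S, q v * rawProfile S P v
      = ∫ y, (1 - (y - S) / √((y - S) ^ 2 + 4 * P)) / 2 *
          (q (lowerBranch S P y) * baseShape y) := by
  rw [← image_lowerBranch hP, integral_image_eq_integral_abs_deriv_smul MeasurableSet.univ
    (fun y _ => (hasDerivAt_lowerBranch hP y).hasDerivWithinAt) (injective_lowerBranch hP).injOn,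
    setIntegral_univ]
  refine integral_congr_ae (.of_forall fun y => ?_)
  have h1 := abs_lt.1 (abs_discr_ratio_lt_one (S := S) hP y)
  dsimp only
  rw [smul_eq_mul, abs_of_pos (by linarith),
    rawProfile_eq_baseShape (sub_neg.2 (lowerBranch_lt hP y)).ne (lowerBranch_mul hP y)]

theorem integral_mul_rawProfile {S P : ℝ} (hP : 0 < P) {q : ℝ → ℝ}
    (hq : Continuous q) (hS : |S| ≤ 1) (hP2 : P ≤ 2) :
    ∫ v, q v * rawProfile S P v
      = ∫ y, ((1 + (y - S) / √((y - S) ^ 2 + 4 * P)) / 2 * q (upperBranch S P y)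
          + (1 - (y - S) / √((y - S) ^ 2 + 4 * P)) / 2 * q (lowerBranch S P y)) * baseShape y := by
  have hc : Continuous fun v => q v * rawProfile S P v :=
    hq.mul (ContDiff.rawProfile contDiff_const contDiff_const contDiff_id
      (fun _ => hP)).continuous
  have hi : Integrable fun v => q v * rawProfile S P v :=
    hc.integrable_of_hasCompactSupport (hasCompactSupport_of_eq_zero (R := 4) fun v hv => by
      rw [rawProfile_eq_zero hS hP hP2 hv, mul_zero])
  have hpos : ∀ y, √((y - S) ^ 2 + 4 * P) ≠ 0 := fun y => by positivity
  have hcU : Continuous (upperBranch S P) := by unfold upperBranch; fun_prop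
  have hcL : Continuous (lowerBranch S P) := by unfold lowerBranch; fun_prop
  have hb := contDiff_baseShape.continuous
  have hr : Continuous fun y => (y - S) / √((y - S) ^ 2 + 4 * P) :=
    Continuous.div (by fun_prop) (by fun_prop) hpos
  rw [← intervalIntegral.integral_Iic_add_Ioi (b := S) hi.integrableOn hi.integrableOn,
    integral_Iic_eq_integral_Iio, setIntegral_Iio_rawProfile hP, setIntegral_Ioi_rawProfile hP,
    ← integral_add]
  · refine integral_congr_ae (.of_forall fun y => ?_)
    ring
  · refine Continuous.integrable_of_hasCompactSupport (by fun_prop)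
      (hasCompactSupport_of_eq_zero (R := 1) fun v hv => by rw [baseShape_eq_zero hv]; ring)
  · refine Continuous.integrable_of_hasCompactSupport (by fun_prop)
      (hasCompactSupport_of_eq_zero (R := 1) fun v hv => by rw [baseShape_eq_zero hv]; ring)

theorem integral_rawProfile {S P : ℝ} (hP : 0 < P) (hS : |S| ≤ 1) (hP2 : P ≤ 2) :
    ∫ v, rawProfile S P v = ∫ y, baseShape y := by
  have := integral_mul_rawProfile hP (q := fun _ => 1) continuous_const hS hP2
  simp only [one_mul] at this
  rw [this]
  refine integral_congr_ae (.of_forall fun y => ?_)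
  ring

theorem integral_sq_mul_rawProfile {S P : ℝ} (hP : 0 < P) (hS : |S| ≤ 1) (hP2 : P ≤ 2) :
    ∫ v, v ^ 2 * rawProfile S P v = P * (∫ y, baseShape y) + ∫ y, y ^ 2 * baseShape y := by
  have hb := contDiff_baseShape.continuous
  rw [integral_mul_rawProfile hP (q := fun v => v ^ 2) (by fun_prop) hS hP2, ← integral_const_mul,
    ← integral_add]
  · refine integral_congr_ae (.of_forall fun y => ?_)
    dsimp only
    rw [← add_mul]
    congr 1
    have hR : 0 < √((y - S) ^ 2 + 4 * P) := by positivity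
    have hs := Real.sq_sqrt (show 0 ≤ (y - S) ^ 2 + 4 * P by positivity)
    unfold upperBranch lowerBranch
    set R := √((y - S) ^ 2 + 4 * P)
    field_simp
    linear_combination (2 * R) * hs
  · refine Continuous.integrable_of_hasCompactSupport (by fun_prop)
      (hasCompactSupport_of_eq_zero (R := 1) fun v hv => by rw [baseShape_eq_zero hv]; ring)
  · refine Continuous.integrable_of_hasCompactSupport (by fun_prop)
      (hasCompactSupport_of_eq_zero (R := 1) fun v hv => by rw [baseShape_eq_zero hv]; ring)

theorem rawProfile_translate (S P v s : ℝ) :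
    rawProfile (S + s) (P + (v - S) * s) (v + s) = rawProfile S P v := by
  unfold rawProfile
  rw [show v + s - (S + s) = v - S by ring,
    show (v + s) * (v - S) - (P + (v - S) * s) = v * (v - S) - P by ring]

theorem rawProfile_scale (S P v : ℝ) {s : ℝ} (hs : s ≠ 1) :
    rawProfile (S + s * (v - S)) (P - s * P) v = rawProfile S P v := by
  unfold rawProfile
  rw [show v - (S + s * (v - S)) = (1 - s) * (v - S) by ring,
    show v * ((1 - s) * (v - S)) - (P - s * P) = (1 - s) * (v * (v - S) - P) by ring,
    mul_pow, mul_pow, ← mul_add, mul_left_comm, mul_div_mul_left]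
  exact pow_ne_zero _ (sub_ne_zero.2 hs.symm)

/-- A smooth cutoff of `1 + p` with values in `[1/2, 3/2]`, equal to `1 + p` for small `p`. -/
def clampDensity (p : ℝ) : ℝ :=
  1 + p * (⟨1 / 3, 1 / 2, by norm_num, by norm_num⟩ : ContDiffBump (0 : ℝ)) p

theorem contDiff_clampDensity : ContDiff ℝ ∞ clampDensity := by
  unfold clampDensity
  exact contDiff_const.add (contDiff_id.mul (ContDiffBump.contDiff _))

theorem clampDensity_eq {p : ℝ} (hp : |p| ≤ 1 / 3) : clampDensity p = 1 + p := by
  unfold clampDensity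
  rw [ContDiffBump.one_of_mem_closedBall, mul_one]
  simpa using hp

theorem clampDensity_mem (p : ℝ) : 1 / 2 ≤ clampDensity p ∧ clampDensity p ≤ 3 / 2 := by
  suffices |p * (⟨1 / 3, 1 / 2, by norm_num, by norm_num⟩ : ContDiffBump (0 : ℝ)) p| ≤ 1 / 2 by
    have := abs_le.1 this
    unfold clampDensity
    constructor <;> linarith
  rw [abs_mul, abs_of_nonneg (ContDiffBump.nonneg _)]
  rcases le_or_gt (1 / 2) |p| with h | h
  · rw [ContDiffBump.zero_of_le_dist _ (by simpa using h)]
    norm_num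
  · have h1 := ContDiffBump.le_one
      (⟨1 / 3, 1 / 2, by norm_num, by norm_num⟩ : ContDiffBump (0 : ℝ)) (x := p)
    have h2 := ContDiffBump.nonneg
      (⟨1 / 3, 1 / 2, by norm_num, by norm_num⟩ : ContDiffBump (0 : ℝ)) (x := p)
    nlinarith [abs_nonneg p]

theorem clampDensity_pos (p : ℝ) : 0 < clampDensity p := by
  linarith [(clampDensity_mem p).1]

/-- The normalised velocity profile attached to the parameters `S` and `p`. -/
def profile (S p v : ℝ) : ℝ := (∫ y, baseShape y)⁻¹ * rawProfile S (clampDensity p) v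

theorem contDiff_profile : ContDiff ℝ ∞ fun z : ℝ × ℝ × ℝ => profile z.1 z.2.1 z.2.2 := by
  unfold profile
  refine contDiff_const.mul (ContDiff.rawProfile contDiff_fst ?_ (by fun_prop)
    fun z => clampDensity_pos _)
  exact contDiff_clampDensity.comp (by fun_prop)

theorem profile_eq_zero {S p v : ℝ} (hS : |S| ≤ 1) (hv : 4 ≤ |v|) : profile S p v = 0 := by
  unfold profile
  rw [rawProfile_eq_zero hS (clampDensity_pos p) (by linarith [(clampDensity_mem p).2]) hv,
    mul_zero]

theorem integral_profile {S p : ℝ} (hS : |S| ≤ 1) : ∫ v, profile S p v = 1 := by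
  unfold profile
  rw [integral_const_mul, integral_rawProfile (clampDensity_pos p) hS
    (by linarith [(clampDensity_mem p).2])]
  exact inv_mul_cancel₀ integral_baseShape_pos.ne'

theorem integral_sq_mul_profile {S p : ℝ} (hS : |S| ≤ 1) (hp : |p| ≤ 1 / 4) :
    ∫ v, v ^ 2 * profile S p v
      = 1 + p + (∫ y, baseShape y)⁻¹ * ∫ y, y ^ 2 * baseShape y := by
  unfold profile
  rw [integral_congr_ae (.of_forall fun v => mul_left_comm (v ^ 2) _ _), integral_const_mul,
    integral_sq_mul_rawProfile (clampDensity_pos p) hS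
    (by linarith [(clampDensity_mem p).2]), clampDensity_eq (by linarith)]
  have := integral_baseShape_pos.ne'
  field_simp

theorem fderiv_profile_translate (S v : ℝ) {p : ℝ} (hp : |p| ≤ 1 / 4) :
    fderiv ℝ (fun z : ℝ × ℝ × ℝ => profile z.1 z.2.1 z.2.2) (S, p, v) (1, v - S, 1) = 0 := by
  have hd := (contDiff_profile.differentiable (by simp) (S, p, v)).hasFDerivAt
  have hc : HasDerivAt (fun s : ℝ => ((S + s, p + (v - S) * s, v + s) : ℝ × ℝ × ℝ))
      (1, v - S, 1) 0 := by
    refine ((hasDerivAt_id 0).const_add S).prodMk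
      (HasDerivAt.prodMk ?_ ((hasDerivAt_id 0).const_add v))
    simpa using ((hasDerivAt_id (0 : ℝ)).const_mul (v - S)).const_add p
  have h1 := HasFDerivAt.comp_hasDerivAt_of_eq 0 hd hc (by simp)
  refine h1.unique ((hasDerivAt_const 0 (profile S p v)).congr_of_eventuallyEq ?_)
  have hcont : Tendsto (fun s : ℝ => |p + (v - S) * s|) (nhds 0) (nhds |p|) := by
    have : Continuous fun s : ℝ => |p + (v - S) * s| := by fun_prop
    simpa using this.tendsto 0
  filter_upwards [hcont.eventually_lt_const (show |p| < 1 / 3 by linarith)] with s hs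
  simp only [Function.comp, profile]
  rw [clampDensity_eq hs.le, clampDensity_eq (by linarith), ← add_assoc, rawProfile_translate]

theorem fderiv_profile_scale (S v : ℝ) {p : ℝ} (hp : |p| ≤ 1 / 4) :
    fderiv ℝ (fun z : ℝ × ℝ × ℝ => profile z.1 z.2.1 z.2.2) (S, p, v) (v - S, -(1 + p), 0)
      = 0 := by
  have hd := (contDiff_profile.differentiable (by simp) (S, p, v)).hasFDerivAt
  have hc : HasDerivAt (fun s : ℝ => ((S + s * (v - S), p - s * (1 + p), v) : ℝ × ℝ × ℝ))
      (v - S, -(1 + p), 0) 0 := by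
    refine HasDerivAt.prodMk ?_ (HasDerivAt.prodMk ?_ (hasDerivAt_const _ _))
    · simpa using ((hasDerivAt_id (0 : ℝ)).mul_const (v - S)).const_add S
    · simpa using ((hasDerivAt_id (0 : ℝ)).mul_const (1 + p)).const_sub p
  have h1 := HasFDerivAt.comp_hasDerivAt_of_eq 0 hd hc (by simp)
  refine h1.unique ((hasDerivAt_const 0 (profile S p v)).congr_of_eventuallyEq ?_)
  have hcont : Tendsto (fun s : ℝ => |p - s * (1 + p)|) (nhds 0) (nhds |p|) := by
    have : Continuous fun s : ℝ => |p - s * (1 + p)| := by fun_prop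
    simpa using this.tendsto 0
  filter_upwards [hcont.eventually_lt_const (show |p| < 1 / 3 by linarith),
    isOpen_ne.mem_nhds (show (0 : ℝ) ≠ 1 by norm_num)] with s hs hs1
  simp only [Function.comp, profile]
  rw [clampDensity_eq hs.le, clampDensity_eq (by linarith),
    show 1 + (p - s * (1 + p)) = (1 + p) - s * (1 + p) by ring, rawProfile_scale _ _ _ hs1]

/-- The kinetic transport identity satisfied by `profile` along solutions of the fluid system. -/
theorem fderiv_profile_transport {S p v St Sx pt px : ℝ} (hp : |p| ≤ 1 / 4)
    (hSt : St = px - S * Sx) (hpt : pt = -(Sx * (1 + p) + S * px)) :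
    fderiv ℝ (fun z : ℝ × ℝ × ℝ => profile z.1 z.2.1 z.2.2) (S, p, v) (St, pt, 0)
      + v * fderiv ℝ (fun z : ℝ × ℝ × ℝ => profile z.1 z.2.1 z.2.2) (S, p, v) (Sx, px, 0)
      + px * fderiv ℝ (fun z : ℝ × ℝ × ℝ => profile z.1 z.2.1 z.2.2) (S, p, v) (0, 0, 1) = 0 := by
  have h1 := fderiv_profile_translate S v hp
  have h2 := fderiv_profile_scale S v hp
  set D := fderiv ℝ (fun z : ℝ × ℝ × ℝ => profile z.1 z.2.1 z.2.2) (S, p, v)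
  have key : D (St, pt, 0) + v * D (Sx, px, 0) + px * D (0, 0, 1)
      = px * D (1, v - S, 1) + Sx * D (v - S, -(1 + p), 0) := by
    simp only [← smul_eq_mul, ← map_smul, ← map_add]
    congr 1
    simp only [Prod.smul_mk, Prod.mk_add_mk, smul_eq_mul, hSt, hpt]
    refine Prod.ext ?_ (Prod.ext ?_ ?_) <;> ring
  rw [key, h1, h2]
  ring

/-- The normalised bump used in the transversal velocity directions. -/
def kernelBump (y : ℝ) : ℝ := (∫ y, baseShape y)⁻¹ * baseShape y

theorem contDiff_kernelBump : ContDiff ℝ ∞ kernelBump := contDiff_const.mul contDiff_baseShape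

theorem kernelBump_eq_zero {y : ℝ} (hy : 1 ≤ |y|) : kernelBump y = 0 := by
  unfold kernelBump
  rw [baseShape_eq_zero hy, mul_zero]

theorem kernelBump_zero_pos : 0 < kernelBump 0 := by
  refine mul_pos (inv_pos.2 integral_baseShape_pos) (Real.smoothTransition.pos_of_pos ?_)
  norm_num

theorem integral_kernelBump : ∫ y, kernelBump y = 1 := by
  unfold kernelBump
  rw [integral_const_mul]
  exact inv_mul_cancel₀ integral_baseShape_pos.ne'

theorem hasCompactSupport_kernelBump : HasCompactSupport kernelBump :=
  hasCompactSupport_of_eq_zero fun _ => kernelBump_eq_zero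

/-- The transversal factor `k(y) + η (k(z - 10) - k(z))`. -/
def sideProfile (η y z : ℝ) : ℝ :=
  kernelBump y * ((1 - η) * kernelBump z + η * kernelBump (z - 10))

theorem integral_E3_mul (a b c : ℝ → ℝ) :
    ∫ v : E3, a (v 0) * b (v 1) * c (v 2) = (∫ y, a y) * (∫ y, b y) * ∫ y, c y := by
  have h1 := (EuclideanSpace.volume_preserving_symm_measurableEquiv_toLp (Fin 3)).integral_comp'
    (fun w : Fin 3 → ℝ => a (w 0) * b (w 1) * c (w 2))
  have h2 := integral_fintype_prod_volume_eq_prod (ι := Fin 3) (𝕜 := ℝ) (E := fun _ => ℝ)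
    ![a, b, c]
  simp only [Fin.prod_univ_three] at h2
  exact h1.trans h2

theorem measurableSet_cube3 : MeasurableSet cube3 := by
  have : cube3 = ⋂ i, (fun x : E3 => x i) ⁻¹' Ico 0 1 := by
    ext x; simp [cube3]
  rw [this]
  exact MeasurableSet.iInter fun i =>
    (EuclideanSpace.proj (𝕜 := ℝ) i).continuous.measurable measurableSet_Ico

theorem setIntegral_cube3 (g : ℝ → ℝ) :
    ∫ x in cube3, g (x 0) = ∫ y in (0 : ℝ)..1, g y := by
  rw [← integral_indicator measurableSet_cube3]
  have h : cube3.indicator (fun x : E3 => g (x 0)) = fun x : E3 => (Ico 0 1).indicator g (x 0) *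
      (Ico 0 1).indicator (fun _ => (1 : ℝ)) (x 1) *
      (Ico 0 1).indicator (fun _ => (1 : ℝ)) (x 2) := by
    ext x
    by_cases hx : x ∈ cube3
    · rw [indicator_of_mem hx, indicator_of_mem (hx 0), indicator_of_mem (hx 1),
        indicator_of_mem (hx 2)]
      ring
    · rw [indicator_of_notMem hx]
      have : ∃ i, x i ∉ Ico (0 : ℝ) 1 := not_forall.1 hx
      obtain ⟨i, hi⟩ := this
      fin_cases i
      · rw [indicator_of_notMem (s := Ico 0 1) (a := x 0) hi]; ring
      · rw [indicator_of_notMem (s := Ico 0 1) (a := x 1) hi]; ring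
      · rw [indicator_of_notMem (s := Ico 0 1) (a := x 2) hi]; ring
  rw [h, integral_E3_mul, integral_indicator measurableSet_Ico,
    integral_indicator measurableSet_Ico, intervalIntegral.integral_of_le zero_le_one,
    integral_Ico_eq_integral_Ioc]
  simp

theorem pdE_eq_zero_of_invariant {g : E3 → ℝ} {i : Fin 3}
    (h : ∀ x (s : ℝ), g (x + s • EuclideanSpace.single i 1) = g x) (x : E3) : pdE i g x = 0 := by
  unfold pdE
  by_cases hd : DifferentiableAt ℝ g x
  · rw [← hd.lineDeriv_eq_fderiv, lineDeriv]
    simp only [h, deriv_const]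
  · rw [fderiv_zero_of_not_differentiableAt hd]
    rfl

theorem pdE_invariant {g : E3 → ℝ} {a : E3} (h : ∀ x, g (x + a) = g x) (j : Fin 3) (x : E3) :
    pdE j g (x + a) = pdE j g x := by
  unfold pdE
  have : fderiv ℝ (fun y => g (y + a)) x = fderiv ℝ g (x + a) := fderiv_comp_add_right a
  rw [← this]
  simp only [h]

theorem pdE_pdE_eq_zero {g : E3 → ℝ} {i j : Fin 3}
    (h : ∀ l ≠ 0, ∀ x (s : ℝ), g (x + s • EuclideanSpace.single l 1) = g x)
    (hij : i ≠ 0 ∨ j ≠ 0) (x : E3) : pdE i (pdE j g) x = 0 := by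
  by_cases hj : j = 0
  · refine pdE_eq_zero_of_invariant (fun x s => pdE_invariant (fun y => ?_) j x) x
    exact h i (hij.resolve_right (not_not.2 hj)) y s
  · have : pdE j g = fun _ => 0 := funext fun x => pdE_eq_zero_of_invariant (h j hj) x
    rw [this]
    exact pdE_eq_zero_of_invariant (fun _ _ => rfl) x

theorem pdE_add_const (i : Fin 3) (g : E3 → ℝ) (c : ℝ) : pdE i (fun x => g x + c) = pdE i g := by
  unfold pdE
  simp only [fderiv_add_const]

theorem pdE_neg (i : Fin 3) (g : E3 → ℝ) : pdE i (fun x => -g x) = fun x => -pdE i g x := by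
  unfold pdE
  simp only [fderiv_fun_neg]
  rfl

/-- The kinetic density built from the fluid fields `σ`, `π` in the first coordinate. -/
def kieDensity (η : ℝ) (σ π : ℝ → ℝ → ℝ) (t : ℝ) (x v : E3) : ℝ :=
  profile (σ t (x 0)) (π t (x 0)) (v 0) * sideProfile η (v 1) (v 2)

theorem contDiff_coord (i : Fin 3) : ContDiff ℝ ∞ fun x : E3 => x i :=
  (EuclideanSpace.proj (𝕜 := ℝ) i).contDiff

theorem contDiff_sideProfile : ContDiff ℝ ∞ fun z : ℝ × ℝ × ℝ => sideProfile z.1 z.2.1 z.2.2 := by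
  unfold sideProfile
  have := contDiff_kernelBump
  fun_prop

theorem contDiff_profile_comp {E : Type*} [NormedAddCommGroup E] [NormedSpace ℝ E]
    {S p v : E → ℝ} (hS : ContDiff ℝ ∞ S) (hp : ContDiff ℝ ∞ p) (hv : ContDiff ℝ ∞ v) :
    ContDiff ℝ ∞ fun z => profile (S z) (p z) (v z) := by
  have h := contDiff_profile.comp (hS.prodMk (hp.prodMk hv))
  exact h

theorem contDiff_sideProfile_comp {E : Type*} [NormedAddCommGroup E] [NormedSpace ℝ E]
    {η y z : E → ℝ} (hη : ContDiff ℝ ∞ η) (hy : ContDiff ℝ ∞ y) (hz : ContDiff ℝ ∞ z) :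
    ContDiff ℝ ∞ fun w => sideProfile (η w) (y w) (z w) := by
  have h := contDiff_sideProfile.comp (hη.prodMk (hy.prodMk hz))
  exact h

theorem contDiff_kieDensity (η : ℝ) {σ π : ℝ → ℝ → ℝ}
    (hσ : ContDiff ℝ ∞ fun z : ℝ × ℝ => σ z.1 z.2) (hπ : ContDiff ℝ ∞ fun z : ℝ × ℝ => π z.1 z.2) :
    ContDiff ℝ ∞ fun q : ℝ × E3 × E3 => kieDensity η σ π q.1 q.2.1 q.2.2 := by
  unfold kieDensity
  have hx : ContDiff ℝ ∞ fun q : ℝ × E3 × E3 => q.2.1 0 := (contDiff_coord 0).comp (by fun_prop)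
  have hv : ∀ i, ContDiff ℝ ∞ fun q : ℝ × E3 × E3 => q.2.2 i :=
    fun i => (contDiff_coord i).comp (by fun_prop)
  exact ContDiff.mul (contDiff_profile_comp (hσ.comp (contDiff_fst.prodMk hx))
    (hπ.comp (contDiff_fst.prodMk hx)) (hv 0))
    (contDiff_sideProfile_comp contDiff_const (hv 1) (hv 2))

theorem integral_sideProfile_factor (η : ℝ) :
    ∫ z, ((1 - η) * kernelBump z + η * kernelBump (z - 10)) = 1 := by
  have hi : Integrable kernelBump :=
    contDiff_kernelBump.continuous.integrable_of_hasCompactSupport hasCompactSupport_kernelBump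
  rw [integral_add (hi.const_mul _) ((hi.comp_sub_right 10).const_mul _), integral_const_mul,
    integral_const_mul, integral_sub_right_eq_self kernelBump, integral_kernelBump]
  ring

theorem integral_profile_mul_sideProfile {S p : ℝ} (η : ℝ) (hS : |S| ≤ 1) :
    ∫ v : E3, profile S p (v 0) * sideProfile η (v 1) (v 2) = 1 := by
  have := integral_E3_mul (profile S p) kernelBump
    fun z => (1 - η) * kernelBump z + η * kernelBump (z - 10)
  rw [integral_profile hS, integral_kernelBump, integral_sideProfile_factor] at this
  simpa [sideProfile, mul_assoc] using this

theorem integral_sq_mul_profile_mul_sideProfile {S p : ℝ} (η : ℝ) (hS : |S| ≤ 1)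
    (hp : |p| ≤ 1 / 4) :
    ∫ v : E3, v 0 * v 0 * (profile S p (v 0) * sideProfile η (v 1) (v 2))
      = p + (1 + (∫ y, baseShape y)⁻¹ * ∫ y, y ^ 2 * baseShape y) := by
  have := integral_E3_mul (fun y => y ^ 2 * profile S p y) kernelBump
    fun z => (1 - η) * kernelBump z + η * kernelBump (z - 10)
  rw [integral_sq_mul_profile hS hp, integral_kernelBump, integral_sideProfile_factor] at this
  rw [show p + (1 + (∫ y, baseShape y)⁻¹ * ∫ y, y ^ 2 * baseShape y)
    = (1 + p + (∫ y, baseShape y)⁻¹ * ∫ y, y ^ 2 * baseShape y) * 1 * 1 by ring, ← this]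
  refine integral_congr_ae (.of_forall fun v => ?_)
  dsimp only [sideProfile]
  ring

theorem hasDerivAt_profile_comp {S p v : ℝ → ℝ} {S' p' v' s : ℝ} (hS : HasDerivAt S S' s)
    (hp : HasDerivAt p p' s) (hv : HasDerivAt v v' s) :
    HasDerivAt (fun s => profile (S s) (p s) (v s))
      (fderiv ℝ (fun z : ℝ × ℝ × ℝ => profile z.1 z.2.1 z.2.2) (S s, p s, v s) (S', p', v')) s := by
  have h := HasFDerivAt.comp_hasDerivAt (f := fun s => (S s, p s, v s)) s
    (contDiff_profile.differentiable (by simp) (S s, p s, v s)).hasFDerivAt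
    (hS.prodMk (hp.prodMk hv))
  exact h

theorem add_smul_single_apply_of_ne {i j : Fin 3} (h : j ≠ i) (x : E3) (s : ℝ) :
    (x + s • EuclideanSpace.single i (1 : ℝ)) j = x j := by
  simp [h]

theorem add_smul_single_apply_self (i : Fin 3) (x : E3) (s : ℝ) :
    (x + s • EuclideanSpace.single i (1 : ℝ)) i = x i + s := by
  simp

theorem ContDiff.hasDerivAt_left {σ : ℝ → ℝ → ℝ} (hσ : ContDiff ℝ ∞ fun z : ℝ × ℝ => σ z.1 z.2)
    (t y : ℝ) : HasDerivAt (fun t => σ t y) (deriv (fun t => σ t y) t) t := by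
  have h : ContDiff ℝ ∞ fun t => σ t y := hσ.comp (contDiff_id.prodMk contDiff_const)
  exact (h.differentiable (by simp) t).hasDerivAt

theorem ContDiff.hasDerivAt_right {σ : ℝ → ℝ → ℝ} (hσ : ContDiff ℝ ∞ fun z : ℝ × ℝ => σ z.1 z.2)
    (t y : ℝ) : HasDerivAt (σ t) (deriv (σ t) y) y := by
  have h : ContDiff ℝ ∞ (σ t) := hσ.comp (contDiff_const.prodMk contDiff_id)
  exact (h.differentiable (by simp) y).hasDerivAt

/-- Solutions of the one-dimensional fluid system lift to kinetic solutions. -/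
theorem isKIESol_kieDensity {T : ℝ} (η : ℝ) {σ π : ℝ → ℝ → ℝ}
    (hσ : ContDiff ℝ ∞ fun z : ℝ × ℝ => σ z.1 z.2) (hπ : ContDiff ℝ ∞ fun z : ℝ × ℝ => π z.1 z.2)
    (hσp : ∀ t y, σ t (y + 1) = σ t y) (hπp : ∀ t y, π t (y + 1) = π t y)
    (hσb : ∀ t y, |σ t y| ≤ 1 / 4) (hπb : ∀ t y, |π t y| ≤ 1 / 4)
    (hmean : ∀ t ∈ Icc 0 T, ∫ y in (0 : ℝ)..1, π t y = 0)
    (hσe : ∀ t ∈ Icc 0 T, ∀ y,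
      deriv (fun t => σ t y) t = deriv (π t) y - σ t y * deriv (σ t) y)
    (hπe : ∀ t ∈ Icc 0 T, ∀ y,
      deriv (fun t => π t y) t = -(deriv (σ t) y * (1 + π t y) + σ t y * deriv (π t) y)) :
    IsKIESol T (kieDensity η σ π) := by
  have hsm := contDiff_kieDensity η hσ hπ
  have hper : ∀ {q : ℝ → ℝ → ℝ}, (∀ t y, q t (y + 1) = q t y) → ∀ t (x : E3) (i : Fin 3),
      q t ((x + EuclideanSpace.single i (1 : ℝ)) 0) = q t (x 0) := by
    intro q hq t x i
    by_cases hi : i = 0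
    · subst hi
      rw [← hq t (x 0)]
      simp
    · have := add_smul_single_apply_of_ne (Ne.symm hi) x 1
      rw [one_smul] at this
      rw [this]
  refine ⟨hsm, fun t x v i => ?_, fun t x => -π t (x 0), ?_, fun t x i => ?_, fun t ht => ?_,
    fun t ht x => ?_, fun t ht x v => ?_⟩
  · unfold kieDensity
    rw [hper hσp, hper hπp]
  · have hx : ContDiff ℝ ∞ fun q : ℝ × E3 => q.2 0 := (contDiff_coord 0).comp (by fun_prop)
    have := (hπ.comp (contDiff_fst.prodMk hx)).neg
    exact this
  · dsimp only
    rw [hper hπp]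
  · have h := setIntegral_cube3 fun y => -π t y
    rw [intervalIntegral.integral_neg, hmean t ht, neg_zero] at h
    exact h
  · have hinv : ∀ {g : ℝ → ℝ}, ∀ l : Fin 3, l ≠ 0 → ∀ (x : E3) (s : ℝ),
        g ((x + s • EuclideanSpace.single l (1 : ℝ)) 0) = g (x 0) := by
      intro g l hl x s
      rw [add_smul_single_apply_of_ne (Ne.symm hl)]
    have hz : ∀ i j : Fin 3, i ≠ 0 ∨ j ≠ 0 → pdE i (pdE j
        fun x' => ∫ v : E3, v i * v j * kieDensity η σ π t x' v) x = 0 := by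
      intro i j hij
      exact pdE_pdE_eq_zero (hinv (g := fun y => ∫ v : E3, v i * v j *
        (profile (σ t y) (π t y) (v 0) * sideProfile η (v 1) (v 2)))) hij x
    have h0 : (fun x' => ∫ v : E3, v 0 * v 0 * kieDensity η σ π t x' v) = fun x' => π t (x' 0)
        + (1 + (∫ y, baseShape y)⁻¹ * ∫ y, y ^ 2 * baseShape y) := by
      funext x'
      exact integral_sq_mul_profile_mul_sideProfile η ((hσb _ _).trans (by norm_num)) (hπb _ _)
    have hl : ∀ i : Fin 3, i ≠ 0 → pdE i (pdE i fun x => -π t (x 0)) x = 0 := fun i hi =>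
      pdE_pdE_eq_zero (hinv (g := fun y => -π t y)) (Or.inl hi) x
    simp only [Fin.sum_univ_three]
    rw [hz 0 1 (by simp), hz 0 2 (by simp), hz 1 0 (by simp), hz 1 1 (by simp), hz 1 2 (by simp),
      hz 2 0 (by simp), hz 2 1 (by simp), hz 2 2 (by simp), hl 1 (by simp), hl 2 (by simp), h0,
      pdE_add_const, pdE_neg, pdE_neg]
    ring
  · have hfx : DifferentiableAt ℝ (fun x' => kieDensity η σ π t x' v) x := by
      have h := (hsm.comp ((contDiff_const (c := t)).prodMk
        (contDiff_id.prodMk (contDiff_const (c := v))))).differentiable (by simp) x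
      exact h
    have hfv : DifferentiableAt ℝ (fun v' => kieDensity η σ π t x v') v := by
      have h := (hsm.comp ((contDiff_const (c := t)).prodMk
        ((contDiff_const (c := x)).prodMk contDiff_id))).differentiable (by simp) v
      exact h
    have hφ : DifferentiableAt ℝ (fun x' : E3 => -π t (x' 0)) x := by
      have h := (hπ.comp ((contDiff_const (c := t)).prodMk
        (contDiff_coord 0))).neg.differentiable (by simp) x
      exact h
    have e1 : pdE 0 (fun x' : E3 => -π t (x' 0)) x = -deriv (π t) (x 0) := by
      unfold pdE
      rw [← hφ.lineDeriv_eq_fderiv, lineDeriv]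
      simp only [add_smul_single_apply_self]
      have h : HasDerivAt (π t) (deriv (π t) (x 0)) (x 0 + 0) := by
        rw [add_zero]; exact hπ.hasDerivAt_right t (x 0)
      exact (h.comp_const_add (x 0) 0).neg.deriv
    have e2 : ∀ i : Fin 3, i ≠ 0 → pdE i (fun x' : E3 => -π t (x' 0)) x = 0 := fun i hi =>
      pdE_eq_zero_of_invariant (fun y s => by rw [add_smul_single_apply_of_ne (Ne.symm hi)]) x
    set D := fderiv ℝ (fun z : ℝ × ℝ × ℝ => profile z.1 z.2.1 z.2.2)
      (σ t (x 0), π t (x 0), v 0) with hD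
    have e3 : deriv (fun t' => kieDensity η σ π t' x v) t
        = D (deriv (fun t => σ t (x 0)) t, deriv (fun t => π t (x 0)) t, 0)
          * sideProfile η (v 1) (v 2) :=
      ((hasDerivAt_profile_comp (hσ.hasDerivAt_left t (x 0)) (hπ.hasDerivAt_left t (x 0))
        (hasDerivAt_const t (v 0))).mul_const _).deriv
    have e4 : fderiv ℝ (fun x' => kieDensity η σ π t x' v) x v
        = v 0 * D (deriv (σ t) (x 0), deriv (π t) (x 0), 0) * sideProfile η (v 1) (v 2) := by
      rw [← hfx.lineDeriv_eq_fderiv, lineDeriv]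
      have hl : HasDerivAt (fun s : ℝ => (x + s • v) 0) (v 0) 0 := by
        have := ((hasDerivAt_id (0 : ℝ)).mul_const (v 0)).const_add (x 0)
        simpa using this
      have hx0 : (x + (0 : ℝ) • v) 0 = x 0 := by simp
      have hS := HasDerivAt.comp (0 : ℝ) (hx0 ▸ hσ.hasDerivAt_right t (x 0)) hl
      have hp := HasDerivAt.comp (0 : ℝ) (hx0 ▸ hπ.hasDerivAt_right t (x 0)) hl
      have h := ((hasDerivAt_profile_comp hS hp (hasDerivAt_const (0 : ℝ) (v 0))).mul_const
        (sideProfile η (v 1) (v 2))).deriv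
      simp only [Function.comp_apply, hx0] at h
      refine h.trans ?_
      rw [← hD, ← smul_eq_mul (v 0), ← map_smul]
      congr 2
      simp only [Prod.smul_mk, smul_eq_mul, mul_comm, zero_mul]
    have e5 : fderiv ℝ (fun v' => kieDensity η σ π t x v') v (EuclideanSpace.single 0 1)
        = D (0, 0, 1) * sideProfile η (v 1) (v 2) := by
      rw [← hfv.lineDeriv_eq_fderiv, lineDeriv]
      have h := ((hasDerivAt_profile_comp (hasDerivAt_const (0 : ℝ) (σ t (x 0)))
        (hasDerivAt_const (0 : ℝ) (π t (x 0))) ((hasDerivAt_id (0 : ℝ)).const_add (v 0))).mul_const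
        (sideProfile η (v 1) (v 2))).deriv
      simp only [id, add_zero] at h
      rw [← hD] at h
      rw [← h]
      simp [kieDensity]
    have key := fderiv_profile_transport (v := v 0) (hπb t (x 0)) (hσe t ht (x 0)) (hπe t ht (x 0))
    rw [← hD] at key
    simp only [Fin.sum_univ_three]
    rw [e1, e2 1 (by simp), e2 2 (by simp), e3, e4, e5]
    linear_combination sideProfile η (v 1) (v 2) * key

/-- A smooth map onto negative times which is the identity below `-1/2`. -/
def timeCut (τ : ℝ) : ℝ :=
  -Real.smoothTransition (4 * τ + 2) / 4 + (1 - Real.smoothTransition (4 * τ + 2)) * τ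

theorem contDiff_timeCut : ContDiff ℝ ∞ timeCut := by
  have h : ContDiff ℝ ∞ fun τ : ℝ => Real.smoothTransition (4 * τ + 2) :=
    Real.smoothTransition.contDiff.comp (by fun_prop)
  unfold timeCut
  fun_prop

theorem timeCut_eq {τ : ℝ} (h : τ ≤ -1 / 2) : timeCut τ = τ := by
  unfold timeCut
  rw [Real.smoothTransition.zero_of_nonpos (by linarith)]
  ring

theorem timeCut_neg (τ : ℝ) : timeCut τ < 0 := by
  unfold timeCut
  rcases le_or_gt (-1 / 4) τ with h | h
  · rw [Real.smoothTransition.one_of_one_le (by linarith)]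
    norm_num
  · have h1 := Real.smoothTransition.nonneg (4 * τ + 2)
    have h2 := Real.smoothTransition.le_one (4 * τ + 2)
    nlinarith

/-- The spatial frequency of the rescaled fields. -/
def freq (n : ℕ) : ℝ := 2 * Real.pi * (n : ℝ) ^ 2

theorem freq_pos {n : ℕ} (hn : 1 ≤ n) : 0 < freq n := by
  unfold freq
  have : (1 : ℝ) ≤ n := by exact_mod_cast hn
  positivity

/-- The fluid field `q`, rescaled so as to oscillate at frequency `freq n` and to run over the
time interval `[-n - 1, -1]`. -/
def rescale (n : ℕ) (q : ℝ → ℝ → ℝ) (t y : ℝ) : ℝ :=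
  q (timeCut (freq n * t - n - 1)) (freq n * y)

theorem contDiff_rescale (n : ℕ) {q : ℝ → ℝ → ℝ}
    (hq : ContDiffOn ℝ ∞ (fun z : ℝ × ℝ => q z.1 z.2) {z | z.1 < 0}) :
    ContDiff ℝ ∞ fun z : ℝ × ℝ => rescale n q z.1 z.2 := by
  have h1 : ContDiff ℝ ∞ fun z : ℝ × ℝ => timeCut (freq n * z.1 - n - 1) :=
    contDiff_timeCut.comp (by fun_prop)
  have h2 : ContDiff ℝ ∞ fun z : ℝ × ℝ => (timeCut (freq n * z.1 - n - 1), freq n * z.2) :=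
    h1.prodMk (by fun_prop)
  have h3 := hq.comp (s := univ) h2.contDiffOn fun z _ => timeCut_neg _
  exact contDiffOn_univ.1 h3

theorem rescaled_time_le {n : ℕ} (hn : 1 ≤ n) {t : ℝ}
    (ht : t ≤ 1 / (2 * Real.pi * n)) : freq n * t - n - 1 ≤ -1 := by
  have h1 : (1 : ℝ) ≤ n := by exact_mod_cast hn
  have h2 : freq n * t ≤ freq n * (1 / (2 * Real.pi * n)) :=
    mul_le_mul_of_nonneg_left ht (freq_pos hn).le
  have h3 : freq n * (1 / (2 * Real.pi * n)) = n := by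
    unfold freq
    have := Real.pi_pos
    field_simp
  linarith

theorem rescale_add_one (n : ℕ) {q : ℝ → ℝ → ℝ} (hq : ∀ t x, q t (x + 2 * Real.pi) = q t x)
    (t y : ℝ) : rescale n q t (y + 1) = rescale n q t y := by
  unfold rescale
  have h : Function.Periodic (q (timeCut (freq n * t - n - 1))) (2 * Real.pi) := fun x => hq _ x
  have := h.nat_mul (n ^ 2) (freq n * y)
  rw [← this]
  congr 1
  unfold freq
  push_cast
  ring

theorem integral_rescale {n : ℕ} (hn : 1 ≤ n) {q : ℝ → ℝ → ℝ}
    (hq : ∀ t x, q t (x + 2 * Real.pi) = q t x)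
    (hc : ContDiffOn ℝ ∞ (fun z : ℝ × ℝ => q z.1 z.2) {z | z.1 < 0})
    (h0 : ∀ t < 0, ∫ x in (0 : ℝ)..(2 * Real.pi), q t x = 0) (t : ℝ) :
    ∫ y in (0 : ℝ)..1, rescale n q t y = 0 := by
  unfold rescale
  set τ := timeCut (freq n * t - n - 1)
  have hτ : τ < 0 := timeCut_neg _
  have h : Function.Periodic (q τ) (2 * Real.pi) := fun x => hq _ x
  have hcont : Continuous (q τ) := by
    have h3 := hc.continuousOn.comp (s := univ) (f := fun x : ℝ => (τ, x)) (by fun_prop)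
      fun z _ => hτ
    exact continuousOn_univ.1 h3
  rw [intervalIntegral.integral_comp_mul_left (q τ) (freq_pos hn).ne']
  have h1 := h.intervalIntegral_add_zsmul_eq ((n : ℤ) ^ 2) 0
    (fun a b => hcont.intervalIntegrable a b)
  rw [zero_add, zero_add, h0 τ hτ, smul_zero] at h1
  rw [mul_zero, mul_one, show freq n = ((n : ℤ) ^ 2) • (2 * Real.pi) by
    unfold freq; rw [zsmul_eq_mul]; push_cast; ring, h1, smul_zero]

theorem deriv_rescale_left {n : ℕ} {q : ℝ → ℝ → ℝ}
    (hc : ContDiffOn ℝ ∞ (fun z : ℝ × ℝ => q z.1 z.2) {z | z.1 < 0}) {t : ℝ}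
    (ht : freq n * t - n - 1 ≤ -1) (y : ℝ) :
    deriv (fun t => rescale n q t y) t
      = freq n * deriv (fun t => q t (freq n * y)) (freq n * t - n - 1) := by
  have h1 : HasDerivAt (fun t : ℝ => freq n * t - n - 1) (freq n) t := by
    simpa using (((hasDerivAt_id t).const_mul (freq n)).sub_const (n : ℝ)).sub_const 1
  have h2 : HasDerivAt timeCut 1 (freq n * t - n - 1) := by
    refine (hasDerivAt_id _).congr_of_eventuallyEq ?_
    filter_upwards [Iio_mem_nhds (show freq n * t - n - 1 < -1 / 2 by linarith)] with τ hτ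
    exact timeCut_eq (le_of_lt hτ)
  have h3 : DifferentiableAt ℝ (fun t => q t (freq n * y)) (freq n * t - n - 1) := by
    have h4 : ContDiffAt ℝ ∞ (fun z : ℝ × ℝ => q z.1 z.2) (freq n * t - n - 1, freq n * y) :=
      hc.contDiffAt (isOpen_negTime.mem_nhds (show freq n * t - n - 1 < 0 by linarith))
    have h5 := (h4.differentiableAt (by simp)).comp (freq n * t - n - 1)
      (f := fun t => (t, freq n * y)) (by fun_prop)
    exact h5
  have h6 := HasDerivAt.comp t (timeCut_eq (show freq n * t - n - 1 ≤ -1 / 2 by linarith) ▸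
    h3.hasDerivAt) (h2.comp t h1)
  refine h6.deriv.trans ?_
  rw [one_mul, timeCut_eq (show freq n * t - n - 1 ≤ -1 / 2 by linarith), mul_comm]

theorem deriv_rescale_right (n : ℕ) (q : ℝ → ℝ → ℝ) {t : ℝ}
    (ht : freq n * t - n - 1 ≤ -1) (y : ℝ) :
    deriv (rescale n q t) y = freq n * deriv (q (freq n * t - n - 1)) (freq n * y) := by
  unfold rescale
  rw [timeCut_eq (show freq n * t - n - 1 ≤ -1 / 2 by linarith)]
  have := deriv_comp_mul_left (freq n) (q (freq n * t - n - 1)) y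
  rwa [smul_eq_mul] at this

theorem isKIESol_rescale {S p : ℝ → ℝ → ℝ}
    (hS : ContDiffOn ℝ ∞ (fun z : ℝ × ℝ => S z.1 z.2) {z | z.1 < 0})
    (hp : ContDiffOn ℝ ∞ (fun z : ℝ × ℝ => p z.1 z.2) {z | z.1 < 0})
    (hSper : ∀ t x, S t (x + 2 * Real.pi) = S t x) (hpper : ∀ t x, p t (x + 2 * Real.pi) = p t x)
    (hSe : ∀ t < 0, ∀ x, deriv (fun t => S t x) t = deriv (p t) x - S t x * deriv (S t) x)
    (hpe : ∀ t < 0, ∀ x,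
      deriv (fun t => p t x) t = -(deriv (S t) x * (1 + p t x) + S t x * deriv (p t) x))
    (hmean : ∀ t < 0, ∫ x in (0 : ℝ)..(2 * Real.pi), p t x = 0)
    (hb : ∀ t x, |S t x| ≤ 1 / 4 ∧ |p t x| ≤ 1 / 4) {n : ℕ} (hn : 1 ≤ n) (η : ℝ) :
    IsKIESol (1 / (2 * Real.pi * n)) (kieDensity η (rescale n S) (rescale n p)) := by
  have key : ∀ t ∈ Icc 0 (1 / (2 * Real.pi * n)), freq n * t - n - 1 ≤ -1 := fun t ht =>
    rescaled_time_le hn ht.2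
  refine isKIESol_kieDensity η (contDiff_rescale n hS) (contDiff_rescale n hp)
    (rescale_add_one n hSper) (rescale_add_one n hpper) (fun t y => (hb _ _).1)
    (fun t y => (hb _ _).2) (fun t _ => integral_rescale hn hpper hp hmean t)
    (fun t ht y => ?_) (fun t ht y => ?_)
  · rw [deriv_rescale_left hS (key t ht), deriv_rescale_right n S (key t ht),
      deriv_rescale_right n p (key t ht), hSe _ (by linarith [key t ht])]
    unfold rescale
    rw [timeCut_eq (by linarith [key t ht])]
    ring
  · rw [deriv_rescale_left hp (key t ht), deriv_rescale_right n S (key t ht),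
      deriv_rescale_right n p (key t ht), hpe _ (by linarith [key t ht])]
    unfold rescale
    rw [timeCut_eq (by linarith [key t ht])]
    ring

/-- `h` is obtained from `g` by `d` differentiations: smoothness is kept and derivatives of `h` are
controlled by those of `g` of order `d` higher. -/
def DerivControlled (d : ℕ) (g h : E3 → E3 → ℝ) : Prop :=
  ContDiff ℝ ∞ (fun q : E3 × E3 => g q.1 q.2) →
    ContDiff ℝ ∞ (fun q : E3 × E3 => h q.1 q.2) ∧
    ∀ j z, ‖iteratedFDeriv ℝ j (fun q : E3 × E3 => h q.1 q.2) z‖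
      ≤ ‖iteratedFDeriv ℝ (j + d) (fun q : E3 × E3 => g q.1 q.2) z‖

theorem DerivControlled.trans {d e : ℕ} {f g h : E3 → E3 → ℝ} (h1 : DerivControlled d f g)
    (h2 : DerivControlled e g h) : DerivControlled (e + d) f h := by
  intro hf
  obtain ⟨hg, b1⟩ := h1 hf
  obtain ⟨hh, b2⟩ := h2 hg
  exact ⟨hh, fun j z => (b2 j z).trans (by rw [← add_assoc]; exact b1 _ z)⟩

theorem derivControlled_of_direction {g h : E3 → E3 → ℝ} {u : E3 × E3} (hu : ‖u‖ ≤ 1)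
    (heq : ContDiff ℝ ∞ (fun q : E3 × E3 => g q.1 q.2) →
      (fun q : E3 × E3 => h q.1 q.2)
        = fun q => fderiv ℝ (fun q : E3 × E3 => g q.1 q.2) q u) :
    DerivControlled 1 g h := by
  intro hg
  have hfd : ContDiff ℝ ∞ (fderiv ℝ (fun q : E3 × E3 => g q.1 q.2)) :=
    hg.fderiv_right (by simp)
  rw [heq hg]
  refine ⟨hfd.clm_apply contDiff_const, fun j z => ?_⟩
  refine (norm_iteratedFDeriv_clm_apply_const hfd.contDiffAt
    (by exact_mod_cast le_top)).trans ?_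
  rw [norm_iteratedFDeriv_fderiv]
  exact mul_le_of_le_one_left (norm_nonneg _) hu

theorem derivControlled_pdx (i : Fin 3) (g : E3 → E3 → ℝ) : DerivControlled 1 g (pdx i g) := by
  refine derivControlled_of_direction (u := (EuclideanSpace.single i 1, 0)) (by simp) fun hg => ?_
  funext q
  have h1 := (hg.differentiable (by simp) q).hasFDerivAt
  have h2 : HasFDerivAt (fun x : E3 => (x, q.2)) (ContinuousLinearMap.inl ℝ E3 E3) q.1 :=
    hasFDerivAt_prodMk_left q.1 q.2
  have h3 := (HasFDerivAt.comp q.1 h1 h2).fderiv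
  have h4 := DFunLike.congr_fun h3 (EuclideanSpace.single i (1 : ℝ))
  exact h4

theorem derivControlled_pdv (i : Fin 3) (g : E3 → E3 → ℝ) : DerivControlled 1 g (pdv i g) := by
  refine derivControlled_of_direction (u := (0, EuclideanSpace.single i 1)) (by simp) fun hg => ?_
  funext q
  have h1 := (hg.differentiable (by simp) q).hasFDerivAt
  have h2 : HasFDerivAt (fun v : E3 => (q.1, v)) (ContinuousLinearMap.inr ℝ E3 E3) q.2 :=
    hasFDerivAt_prodMk_right q.1 q.2
  have h3 := (HasFDerivAt.comp q.2 h1 h2).fderiv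
  have h4 := DFunLike.congr_fun h3 (EuclideanSpace.single i (1 : ℝ))
  exact h4

theorem derivControlled_iterate {D : (E3 → E3 → ℝ) → E3 → E3 → ℝ}
    (hD : ∀ g, DerivControlled 1 g (D g)) (b : ℕ) (g : E3 → E3 → ℝ) :
    DerivControlled b g (D^[b] g) := by
  induction b with
  | zero => exact fun hg => ⟨hg, fun _ _ => le_rfl⟩
  | succ b ih =>
    rw [Function.iterate_succ_apply', add_comm]
    exact ih.trans (hD _)

theorem abs_mpart6_le {g : E3 → E3 → ℝ} (hg : ContDiff ℝ ∞ (fun q : E3 × E3 => g q.1 q.2))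
    (β : Fin 6 → ℕ) (x v : E3) :
    |mpart6 β g x v| ≤ ‖iteratedFDeriv ℝ (∑ i, β i) (fun q : E3 × E3 => g q.1 q.2) (x, v)‖ := by
  have h := (((((derivControlled_iterate (derivControlled_pdv 2) (β 5) g).trans
    (derivControlled_iterate (derivControlled_pdv 1) (β 4) _)).trans
    (derivControlled_iterate (derivControlled_pdv 0) (β 3) _)).trans
    (derivControlled_iterate (derivControlled_pdx 2) (β 2) _)).trans
    (derivControlled_iterate (derivControlled_pdx 1) (β 1) _)).trans
    (derivControlled_iterate (derivControlled_pdx 0) (β 0) _)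
  have h2 := (h hg).2 0 (x, v)
  rw [norm_iteratedFDeriv_zero, Real.norm_eq_abs, zero_add] at h2
  rw [show ∑ i, β i = β 0 + (β 1 + (β 2 + (β 3 + (β 4 + β 5)))) by
    simp only [Fin.sum_univ_six]; ring]
  exact h2

theorem cube3_subset_closedBall : cube3 ⊆ Metric.closedBall 0 2 := by
  intro x hx
  rw [mem_closedBall_zero_iff, EuclideanSpace.norm_eq]
  refine Real.sqrt_le_iff.2 ⟨by norm_num, ?_⟩
  rw [Fin.sum_univ_three]
  have h : ∀ i, ‖x i‖ ^ 2 ≤ 1 := fun i => by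
    have := hx i
    rw [Real.norm_eq_abs, sq_abs]
    nlinarith [this.1, this.2]
  linarith [h 0, h 1, h 2]

/-- A compact set carrying the weighted norms of functions supported in `|v| ≤ 12`. -/
def bigBox : Set (E3 × E3) := Metric.closedBall 0 2 ×ˢ Metric.closedBall 0 12

theorem isCompact_bigBox : IsCompact bigBox :=
  (isCompact_closedBall _ _).prod (isCompact_closedBall _ _)

theorem wL2sq_nonneg (m : ℕ) (g : E3 → E3 → ℝ) : 0 ≤ wL2sq m g :=
  integral_nonneg fun _ => sq_nonneg _

theorem wL2sq_le (m : ℕ) {g : E3 → E3 → ℝ} {B : ℝ} (hB : ∀ x v, |g x v| ≤ B)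
    (h0 : ∀ x v, 12 < ‖v‖ → g x v = 0) :
    wL2sq m g ≤ ((145 : ℝ) ^ ((m : ℝ) / 2) * B) ^ 2 * (volume.real (bigBox ∩ cube3 ×ˢ univ)) := by
  unfold wL2sq
  have hm : MeasurableSet (cube3 ×ˢ (univ : Set E3)) := measurableSet_cube3.prod MeasurableSet.univ
  rw [setIntegral_eq_of_subset_of_forall_sdiff_eq_zero (s := bigBox ∩ cube3 ×ˢ univ) hm
    inter_subset_right]
  · refine (le_abs_self _).trans ?_
    rw [← Real.norm_eq_abs]
    refine norm_setIntegral_le_of_norm_le_const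
      ((measure_mono inter_subset_left).trans_lt isCompact_bigBox.measure_lt_top) ?_
    rintro ⟨x, v⟩ ⟨⟨-, hv⟩, -⟩
    have hv' : ‖v‖ ≤ 12 := by simpa using hv
    rw [Real.norm_eq_abs, abs_pow]
    refine pow_le_pow_left₀ (abs_nonneg _) ?_ 2
    rw [abs_mul, abs_of_nonneg (by positivity)]
    refine mul_le_mul ?_ (hB x v) (abs_nonneg _) (by positivity)
    refine Real.rpow_le_rpow (by positivity) ?_ (by positivity)
    dsimp only
    nlinarith [norm_nonneg v]
  · rintro ⟨x, v⟩ ⟨hx, hn⟩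
    have hv : 12 < ‖v‖ := by
      by_contra hv
      refine hn ⟨⟨cube3_subset_closedBall hx.1, ?_⟩, hx⟩
      simpa using hv
    simp [h0 x v hv]

theorem iteratedFDeriv_eq_zero_of_norm_gt {g : E3 → E3 → ℝ}
    (h0 : ∀ x v, 12 < ‖v‖ → g x v = 0) (j : ℕ) (x : E3) {v : E3} (hv : 12 < ‖v‖) :
    iteratedFDeriv ℝ j (fun q : E3 × E3 => g q.1 q.2) (x, v) = 0 := by
  have h : (fun q : E3 × E3 => g q.1 q.2) =ᶠ[nhds (x, v)] 0 := by
    have ho : IsOpen {q : E3 × E3 | 12 < ‖q.2‖} :=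
      isOpen_lt continuous_const (by fun_prop)
    filter_upwards [ho.mem_nhds hv] with q hq
    exact h0 q.1 q.2 hq
  rw [(h.iteratedFDeriv ℝ j).eq_of_nhds]
  simp

theorem exists_HsNormW_le (m s : ℕ) : ∃ C, 0 ≤ C ∧ ∀ g : E3 → E3 → ℝ,
    ContDiff ℝ ∞ (fun q : E3 × E3 => g q.1 q.2) → (∀ x v, 12 < ‖v‖ → g x v = 0) →
    ∀ B, 0 ≤ B → (∀ j ≤ s, ∀ x v, ‖v‖ ≤ 12 →
      ‖iteratedFDeriv ℝ j (fun q : E3 × E3 => g q.1 q.2) (x, v)‖ ≤ B) →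
    HsNormW m s g ≤ C * B := by
  set W := ((145 : ℝ) ^ ((m : ℝ) / 2)) ^ 2 * (volume.real (bigBox ∩ cube3 ×ˢ univ)) with hW
  have hW0 : 0 ≤ W := by positivity
  refine ⟨√(∑ _β : Fin 6 → Fin (s + 1), W), Real.sqrt_nonneg _, fun g hg h0 B hB hb => ?_⟩
  have hb' : ∀ j ≤ s, ∀ x v, ‖iteratedFDeriv ℝ j (fun q : E3 × E3 => g q.1 q.2) (x, v)‖ ≤ B := by
    intro j hj x v
    rcases le_or_gt ‖v‖ 12 with hv | hv
    · exact hb j hj x v hv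
    · rw [iteratedFDeriv_eq_zero_of_norm_gt h0 j x hv, norm_zero]
      exact hB
  unfold HsNormW
  rw [← Real.sqrt_sq hB, ← Real.sqrt_mul (Finset.sum_nonneg fun _ _ => hW0)]
  refine Real.sqrt_le_sqrt ?_
  rw [Finset.sum_mul]
  refine Finset.sum_le_sum fun β _ => ?_
  split_ifs with hβ
  · refine (wL2sq_le m (B := B) (fun x v => ?_) (fun x v hv => ?_)).trans (le_of_eq ?_)
    · exact (abs_mpart6_le hg _ x v).trans (hb' _ hβ x v)
    · have := abs_mpart6_le hg (fun i => (β i : ℕ)) x v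
      rw [iteratedFDeriv_eq_zero_of_norm_gt h0 _ x hv, norm_zero] at this
      exact abs_nonpos_iff.1 this
    · rw [hW]; ring
  · positivity

theorem HsNormW_pos (m s : ℕ) {g : E3 → E3 → ℝ} (hg : Continuous fun q : E3 × E3 => g q.1 q.2)
    (h0 : ∀ x v, 12 < ‖v‖ → g x v = 0) {x v : E3} (hx : ∀ i, x i ∈ Ioo (0 : ℝ) 1)
    (hxv : g x v ≠ 0) : 0 < HsNormW m s g := by
  unfold HsNormW
  refine Real.sqrt_pos.2 (Finset.sum_pos' (fun β _ => ?_) ⟨0, Finset.mem_univ _, ?_⟩)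
  · split_ifs
    · exact wL2sq_nonneg m _
    · exact le_rfl
  · have hz : mpart6 (fun i => (((0 : Fin 6 → Fin (s + 1)) i : Fin (s + 1)) : ℕ)) g = g := rfl
    rw [if_pos (by simp), hz]
    unfold wL2sq
    have hm : MeasurableSet (cube3 ×ˢ (univ : Set E3)) :=
      measurableSet_cube3.prod MeasurableSet.univ
    set F : E3 × E3 → ℝ := fun p => ((1 + ‖p.2‖ ^ 2) ^ ((m : ℝ) / 2) * g p.1 p.2) ^ 2 with hF
    have hFc : Continuous F := by
      have h1 : Continuous fun p : E3 × E3 => (1 + ‖p.2‖ ^ 2) ^ ((m : ℝ) / 2) :=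
        Continuous.rpow_const (by fun_prop) fun p => Or.inl (by positivity)
      exact (h1.mul hg).pow 2
    have hFint : IntegrableOn F (cube3 ×ˢ univ) := by
      refine IntegrableOn.of_forall_sdiff_eq_zero
        (hFc.continuousOn.integrableOn_compact isCompact_bigBox) hm ?_
      rintro ⟨x, v⟩ ⟨hx, hn⟩
      have hv : 12 < ‖v‖ := by
        by_contra hv
        refine hn ⟨cube3_subset_closedBall hx.1, ?_⟩
        simpa using hv
      simp [hF, h0 x v hv]
    rw [setIntegral_pos_iff_support_of_nonneg_ae (.of_forall fun _ => sq_nonneg _) hFint]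
    have ho : IsOpen (Function.support F ∩ {q : E3 × E3 | ∀ i, q.1 i ∈ Ioo (0 : ℝ) 1}) := by
      refine (hFc.isOpen_support).inter ?_
      have : {q : E3 × E3 | ∀ i, q.1 i ∈ Ioo (0 : ℝ) 1}
          = ⋂ i, (fun q : E3 × E3 => q.1 i) ⁻¹' Ioo 0 1 := by ext; simp
      rw [this]
      exact isOpen_iInter_of_finite fun i => isOpen_Ioo.preimage
        ((EuclideanSpace.proj (𝕜 := ℝ) i).continuous.comp continuous_fst)
    refine (ho.measure_pos volume ⟨(x, v), ?_, hx⟩).trans_le (measure_mono ?_)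
    · have : 0 < (1 + ‖v‖ ^ 2) ^ ((m : ℝ) / 2) := by positivity
      exact pow_ne_zero 2 (mul_ne_zero this.ne' hxv)
    · exact inter_subset_inter_right _ fun q hq => ⟨fun i => ⟨(hq i).1.le, (hq i).2⟩, mem_univ _⟩

theorem iteratedFDeriv_slice {Y : Type*} [NormedAddCommGroup Y] [NormedSpace ℝ Y]
    {Θ : ℝ × Y → ℝ} (hΘ : ContDiff ℝ ∞ Θ) (j : ℕ) (r : ℝ) (y : Y) :
    iteratedFDeriv ℝ j (fun y => Θ (r, y)) y =
      (iteratedFDeriv ℝ j Θ (r, y)).compContinuousLinearMap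
        fun _ => ContinuousLinearMap.inr ℝ ℝ Y := by
  have hs : ContDiff ℝ ∞ fun z : ℝ × Y => Θ ((r, 0) + z) :=
    hΘ.comp (contDiff_const.add contDiff_id)
  have h := (ContinuousLinearMap.inr ℝ ℝ Y).iteratedFDeriv_comp_right hs y (i := j)
    (by exact_mod_cast le_top)
  rw [iteratedFDeriv_comp_add_left] at h
  simpa [Function.comp_def] using h

/-- The derivatives of `Θ (r, ·) - Θ (0, ·)` are of size `r`, locally uniformly. -/
theorem exists_iteratedFDeriv_slice_sub_le {Y : Type*} [NormedAddCommGroup Y] [NormedSpace ℝ Y]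
    {Θ : ℝ × Y → ℝ} (hΘ : ContDiff ℝ ∞ Θ) {K : Set Y} (hK : IsCompact K) (hc : Convex ℝ K)
    (s : ℕ) : ∃ C, 0 ≤ C ∧ ∀ j ≤ s, ∀ r ∈ Icc (0 : ℝ) 1, ∀ y ∈ K,
      ‖iteratedFDeriv ℝ j (fun y => Θ (r, y) - Θ (0, y)) y‖ ≤ C * r := by
  have hM : ∀ j : ℕ, ∃ M, ∀ z ∈ Icc (0 : ℝ) 1 ×ˢ K,
      ‖fderiv ℝ (iteratedFDeriv ℝ j Θ) z‖ ≤ M := by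
    intro j
    have h1 : ContDiff ℝ ∞ (iteratedFDeriv ℝ j Θ) :=
      hΘ.iteratedFDeriv_right (by exact_mod_cast le_top)
    exact (isCompact_Icc.prod hK).exists_bound_of_continuousOn
      (h1.continuous_fderiv (by simp)).continuousOn
  choose M hM using hM
  refine ⟨∑ j ∈ Finset.range (s + 1), |M j|, Finset.sum_nonneg fun _ _ => abs_nonneg _, ?_⟩
  intro j hj r hr y hy
  have hsl : ∀ r : ℝ, ContDiff ℝ ∞ fun y => Θ (r, y) := fun r =>
    hΘ.comp (contDiff_const.prodMk contDiff_id)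
  have hle : ((j : ℕ) : WithTop ℕ∞) ≤ ∞ := by exact_mod_cast le_top
  have h2 : iteratedFDeriv ℝ j (fun y => Θ (r, y) - Θ (0, y)) y =
      (iteratedFDeriv ℝ j Θ (r, y) - iteratedFDeriv ℝ j Θ (0, y)).compContinuousLinearMap
        fun _ => ContinuousLinearMap.inr ℝ ℝ Y := by
    have h3 := iteratedFDeriv_sub_apply (x := y) (i := j) ((hsl r).of_le hle).contDiffAt
      ((hsl 0).of_le hle).contDiffAt
    rw [iteratedFDeriv_slice hΘ, iteratedFDeriv_slice hΘ] at h3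
    have h4 : (fun y => Θ (r, y) - Θ (0, y)) = (fun y => Θ (r, y)) - fun y => Θ (0, y) := rfl
    rw [h4, h3]
    ext m
    simp
  have h5 : ‖iteratedFDeriv ℝ j Θ (r, y) - iteratedFDeriv ℝ j Θ (0, y)‖ ≤
      M j * ‖((r, y) : ℝ × Y) - (0, y)‖ := by
    refine Convex.norm_image_sub_le_of_norm_fderiv_le (𝕜 := ℝ) ?_ (hM j)
      ((convex_Icc 0 1).prod hc) ⟨by simp, hy⟩ ⟨hr, hy⟩
    exact fun z _ => hΘ.differentiable_iteratedFDeriv (by exact_mod_cast ENat.natCast_lt_top j) z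
  have h6 : ‖((r, y) : ℝ × Y) - (0, y)‖ = r := by
    simp [Prod.norm_def, abs_of_nonneg hr.1, hr.1]
  rw [h6] at h5
  rw [h2]
  refine (ContinuousMultilinearMap.norm_compContinuousLinearMap_le _ _).trans ?_
  have h7 : ∏ _i : Fin j, ‖ContinuousLinearMap.inr ℝ ℝ Y‖ ≤ 1 :=
    Finset.prod_le_one (fun _ _ => norm_nonneg _) fun _ _ =>
      ContinuousLinearMap.norm_inr_le_one _ _ _
  have h8 : |M j| ≤ ∑ j ∈ Finset.range (s + 1), |M j| :=
    Finset.single_le_sum (f := fun j => |M j|) (fun _ _ => abs_nonneg _)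
      (Finset.mem_range.2 (by lia))
  calc _ ≤ ‖iteratedFDeriv ℝ j Θ (r, y) - iteratedFDeriv ℝ j Θ (0, y)‖ * 1 := by gcongr
    _ ≤ M j * r := by rw [mul_one]; exact h5
    _ ≤ _ := mul_le_mul_of_nonneg_right ((le_abs_self _).trans h8) hr.1

theorem norm_iteratedFDeriv_clm_le {V W : Type*} [NormedAddCommGroup V] [NormedSpace ℝ V]
    [NormedAddCommGroup W] [NormedSpace ℝ W] (L : V →L[ℝ] W) {i : ℕ} (hi : 1 ≤ i) (x : V) :
    ‖iteratedFDeriv ℝ i L x‖ ≤ ‖L‖ := by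
  obtain ⟨i, rfl⟩ := Nat.exists_eq_add_of_le' hi
  rw [← norm_iteratedFDeriv_fderiv]
  have h : fderiv ℝ L = fun _ => L := by
    ext1 x
    exact L.fderiv
  rw [h]
  rcases eq_or_ne i 0 with rfl | h0
  · simp
  · rw [iteratedFDeriv_const_of_ne h0]
    simp

theorem norm_iteratedFDeriv_comp_clm_le {V : Type*} [NormedAddCommGroup V] [NormedSpace ℝ V]
    (L : V →L[ℝ] ℝ) {a : ℝ → ℝ} (ha : ContDiff ℝ ∞ a) {A : ℝ} {i : ℕ}
    (hA : ∀ x, |iteratedDeriv i a x| ≤ A) (x : V) :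
    ‖iteratedFDeriv ℝ i (fun x => a (L x)) x‖ ≤ A * ‖L‖ ^ i := by
  have h := L.iteratedFDeriv_comp_right ha x (i := i) (by exact_mod_cast le_top)
  have h1 : (fun x => a (L x)) = a ∘ L := rfl
  rw [h1, h]
  refine (ContinuousMultilinearMap.norm_compContinuousLinearMap_le _ _).trans ?_
  rw [norm_iteratedFDeriv_eq_norm_iteratedDeriv, Finset.prod_const, Finset.card_univ,
    Fintype.card_fin, Real.norm_eq_abs]
  gcongr
  exact hA _

/-- The base map `(x, v) ↦ (a (N x₀), b (N x₀), v)`. -/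
def phaseMap (a b : ℝ → ℝ) (N : ℝ) (q : E3 × E3) : ℝ × ℝ × E3 :=
  (a (N * q.1 0), b (N * q.1 0), q.2)

theorem contDiff_phaseMap {a b : ℝ → ℝ} (ha : ContDiff ℝ ∞ a) (hb : ContDiff ℝ ∞ b) (N : ℝ) :
    ContDiff ℝ ∞ (phaseMap a b N) := by
  have h1 : ContDiff ℝ ∞ fun q : E3 × E3 => N * q.1 0 :=
    contDiff_const.mul ((contDiff_coord 0).comp contDiff_fst)
  exact (ha.comp h1).prodMk ((hb.comp h1).prodMk contDiff_snd)

theorem norm_iteratedFDeriv_phaseMap_le {a b : ℝ → ℝ} (ha : ContDiff ℝ ∞ a) (hb : ContDiff ℝ ∞ b)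
    {N A : ℝ} (hN : 1 ≤ N) (hA : 1 ≤ A) {i : ℕ} (hi : 1 ≤ i)
    (haA : ∀ x, |iteratedDeriv i a x| ≤ A) (hbA : ∀ x, |iteratedDeriv i b x| ≤ A)
    (q : E3 × E3) : ‖iteratedFDeriv ℝ i (phaseMap a b N) q‖ ≤ (A * N) ^ i := by
  let L : E3 × E3 →L[ℝ] ℝ :=
    N • (EuclideanSpace.proj (0 : Fin 3)).comp (ContinuousLinearMap.fst ℝ E3 E3)
  have hL : ‖L‖ ≤ N := by
    refine ContinuousLinearMap.opNorm_le_bound _ (by linarith) fun q => ?_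
    have h1 : ‖q.1 0‖ ≤ ‖q‖ := (PiLp.norm_apply_le q.1 0).trans (norm_fst_le q)
    have h2 : L q = N * q.1 0 := rfl
    rw [h2, norm_mul, Real.norm_of_nonneg (by linarith)]
    gcongr
  have hle : (i : WithTop ℕ∞) ≤ ∞ := by exact_mod_cast le_top
  have hLs : ContDiff ℝ ∞ L := L.contDiff
  have h1 := ha.comp hLs
  have h2 := hb.comp hLs
  have h3 : ContDiff ℝ ∞ fun q : E3 × E3 => q.2 := contDiff_snd
  have hphase : phaseMap a b N = fun q => ((a ∘ L) q, (fun q => ((b ∘ L) q, q.2)) q) := rfl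
  have hpow : A * ‖L‖ ^ i ≤ (A * N) ^ i := by
    rw [mul_pow]
    gcongr
    exact le_self_pow₀ hA (by lia)
  have hAN : 1 ≤ A * N := one_le_mul_of_one_le_of_one_le hA hN
  rw [hphase, iteratedFDeriv_prodMk h1.contDiffAt (h2.prodMk h3).contDiffAt hle,
    ContinuousMultilinearMap.opNorm_prod, iteratedFDeriv_prodMk h2.contDiffAt h3.contDiffAt hle,
    ContinuousMultilinearMap.opNorm_prod]
  refine max_le ((norm_iteratedFDeriv_comp_clm_le L ha haA q).trans hpow)
    (max_le ((norm_iteratedFDeriv_comp_clm_le L hb hbA q).trans hpow) ?_)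
  have h4 := norm_iteratedFDeriv_clm_le (ContinuousLinearMap.snd ℝ E3 E3) hi q
  exact (h4.trans (ContinuousLinearMap.norm_snd_le _ _ _)).trans (one_le_pow₀ hAN)

/-- The stationary profile. -/
def equilibrium (v : E3) : ℝ := profile 0 0 (v 0) * sideProfile 0 (v 1) (v 2)

/-- The size of the initial perturbation. -/
def amplitude (n : ℕ) : ℝ := Real.exp (-((n : ℝ) + 1) / 2)

theorem amplitude_pos (n : ℕ) : 0 < amplitude n := Real.exp_pos _

theorem amplitude_le_one (n : ℕ) : amplitude n ≤ 1 :=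
  Real.exp_le_one_iff.2 (by have := n.cast_nonneg (α := ℝ); linarith)

/-- The family of solutions which leaves the equilibrium. -/
def unstableSol (S p : ℝ → ℝ → ℝ) (n : ℕ) : ℝ → E3 → E3 → ℝ :=
  kieDensity (amplitude n) (rescale n S) (rescale n p)

/-- The density as a function of its amplitude and of the normalized fields. -/
def amplitudeFamily (z : ℝ × ℝ × ℝ × E3) : ℝ :=
  profile (z.1 * z.2.1) (z.1 * z.2.2.1) (z.2.2.2 0) * sideProfile z.1 (z.2.2.2 1) (z.2.2.2 2)

theorem contDiff_amplitudeFamily : ContDiff ℝ ∞ amplitudeFamily := by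
  have hv : ∀ i, ContDiff ℝ ∞ fun q : ℝ × ℝ × ℝ × E3 => q.2.2.2 i :=
    fun i => (contDiff_coord i).comp (by fun_prop)
  exact (contDiff_profile_comp (by fun_prop) (by fun_prop) (hv 0)).mul
    (contDiff_sideProfile_comp (by fun_prop) (hv 1) (hv 2))

theorem contDiff_equilibrium : ContDiff ℝ ∞ equilibrium :=
  (contDiff_profile_comp contDiff_const contDiff_const (contDiff_coord 0)).mul
    (contDiff_sideProfile_comp contDiff_const (contDiff_coord 1) (contDiff_coord 2))

theorem integral_equilibrium : ∫ v, equilibrium v = 1 :=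
  integral_profile_mul_sideProfile 0 (by simp)

theorem profile_mul_sideProfile_eq_zero {S p η : ℝ} (hS : |S| ≤ 1) {v : E3} (hv : 12 < ‖v‖) :
    profile S p (v 0) * sideProfile η (v 1) (v 2) = 0 := by
  by_contra h
  obtain ⟨h0, h12⟩ := mul_ne_zero_iff.1 h
  have hv0 : |v 0| < 4 := by
    by_contra hc
    exact h0 (profile_eq_zero hS (not_lt.1 hc))
  have hv1 : |v 1| < 1 := by
    by_contra hc
    exact h12 (by simp [sideProfile, kernelBump_eq_zero (not_lt.1 hc)])
  have hv2 : |v 2| < 11 := by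
    by_contra hc
    have hc := not_lt.1 hc
    refine h12 ?_
    have h3 : 1 ≤ |v 2 - 10| := by
      have := abs_sub_abs_le_abs_sub (v 2) 10
      rw [abs_of_pos (by norm_num : (0 : ℝ) < 10)] at this
      linarith
    simp [sideProfile, kernelBump_eq_zero h3, kernelBump_eq_zero (show 1 ≤ |v 2| by linarith)]
  have hn : ‖v‖ ^ 2 = v 0 ^ 2 + v 1 ^ 2 + v 2 ^ 2 := by
    rw [EuclideanSpace.real_norm_sq_eq, Fin.sum_univ_three]
  rw [← sq_abs (v 0), ← sq_abs (v 1), ← sq_abs (v 2)] at hn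
  nlinarith [abs_nonneg (v 0), abs_nonneg (v 1), abs_nonneg (v 2)]

theorem rescale_zero (n : ℕ) (q : ℝ → ℝ → ℝ) (y : ℝ) :
    rescale n q 0 y = q (-((n : ℝ) + 1)) (freq n * y) := by
  have := n.cast_nonneg (α := ℝ)
  unfold rescale
  rw [mul_zero, timeCut_eq (by linarith)]
  congr 1
  ring

theorem one_le_freq {n : ℕ} (hn : 1 ≤ n) : 1 ≤ freq n := by
  unfold freq
  have h1 : (1 : ℝ) ≤ n := by exact_mod_cast hn
  have h2 := Real.pi_gt_three
  nlinarith [one_le_pow₀ h1 (n := 2)]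

theorem contDiff_slice_of_neg {q : ℝ → ℝ → ℝ}
    (hq : ContDiffOn ℝ ∞ (fun z : ℝ × ℝ => q z.1 z.2) {z | z.1 < 0}) {τ : ℝ} (hτ : τ < 0) :
    ContDiff ℝ ∞ (q τ) := by
  have h : ContDiff ℝ ∞ fun x : ℝ => ((τ, x) : ℝ × ℝ) := contDiff_const.prodMk contDiff_id
  have h2 := hq.comp_contDiff h fun _ => hτ
  exact h2

/-- A common bound for the normalized derivatives up to order `s`. -/
theorem exists_normalized_bound {S : ℝ → ℝ → ℝ}
    (hd : ∀ k, ∃ C, ∀ t ≤ -1, ∀ x, |iteratedDeriv k (S t) x| ≤ C * Real.exp (t / 2)) (s : ℕ) :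
    ∃ A, 1 ≤ A ∧ ∀ n : ℕ, ∀ i ≤ s, ∀ x,
      |iteratedDeriv i (fun x => (amplitude n)⁻¹ * S (-((n : ℝ) + 1)) x) x| ≤ A := by
  choose C hC using hd
  refine ⟨1 + ∑ i ∈ Finset.range (s + 1), |C i|, ?_, ?_⟩
  · linarith [Finset.sum_nonneg fun i (_ : i ∈ Finset.range (s + 1)) => abs_nonneg (C i)]
  intro n i hi x
  have hn := n.cast_nonneg (α := ℝ)
  have h1 := hC i (-((n : ℝ) + 1)) (by linarith) x
  have hp := amplitude_pos n
  have h2 : Real.exp (-((n : ℝ) + 1) / 2) = amplitude n := rfl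
  rw [h2] at h1
  rw [iteratedDeriv_const_mul_field, abs_mul, abs_inv, abs_of_pos hp, inv_mul_le_iff₀ hp]
  have h8 : |C i| ≤ ∑ j ∈ Finset.range (s + 1), |C j| :=
    Finset.single_le_sum (f := fun j => |C j|) (fun _ _ => abs_nonneg _)
      (Finset.mem_range.2 (by lia))
  nlinarith [le_abs_self (C i)]

theorem exists_HsNormW_initial_le {S p : ℝ → ℝ → ℝ}
    (hS : ContDiffOn ℝ ∞ (fun z : ℝ × ℝ => S z.1 z.2) {z | z.1 < 0})
    (hp : ContDiffOn ℝ ∞ (fun z : ℝ × ℝ => p z.1 z.2) {z | z.1 < 0})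
    (hSd : ∀ k, ∃ C, ∀ t ≤ -1, ∀ x, |iteratedDeriv k (S t) x| ≤ C * Real.exp (t / 2))
    (hpd : ∀ k, ∃ C, ∀ t ≤ -1, ∀ x, |iteratedDeriv k (p t) x| ≤ C * Real.exp (t / 2))
    (hb : ∀ t x, |S t x| ≤ 1 / 4 ∧ |p t x| ≤ 1 / 4) (m s : ℕ) :
    ∃ C, 0 ≤ C ∧ ∀ n : ℕ, 1 ≤ n →
      HsNormW m s (fun x v => unstableSol S p n 0 x v - equilibrium v) ≤
        C * freq n ^ s * amplitude n := by
  obtain ⟨C₁, hC₁, hH⟩ := exists_HsNormW_le m s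
  obtain ⟨A₁, hA₁, hSA⟩ := exists_normalized_bound hSd s
  obtain ⟨A₂, hA₂, hpA⟩ := exists_normalized_bound hpd s
  set A := max A₁ A₂ with hAdef
  have hA : 1 ≤ A := hA₁.trans (le_max_left _ _)
  set K : Set (ℝ × ℝ × E3) :=
    Metric.closedBall 0 A ×ˢ Metric.closedBall 0 A ×ˢ Metric.closedBall 0 12 with hKdef
  have hKc : IsCompact K := (isCompact_closedBall _ _).prod
    ((isCompact_closedBall _ _).prod (isCompact_closedBall _ _))
  have hKv : Convex ℝ K := (convex_closedBall _ _).prod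
    ((convex_closedBall _ _).prod (convex_closedBall _ _))
  obtain ⟨C₂, hC₂, hΘ⟩ := exists_iteratedFDeriv_slice_sub_le contDiff_amplitudeFamily hKc hKv s
  refine ⟨C₁ * (s.factorial * C₂ * A ^ s), by positivity, fun n hn => ?_⟩
  have hr := amplitude_pos n
  have hN := one_le_freq hn
  have hneg : -((n : ℝ) + 1) < 0 := by linarith [n.cast_nonneg (α := ℝ)]
  set a : ℝ → ℝ := fun x => (amplitude n)⁻¹ * S (-((n : ℝ) + 1)) x with ha_def
  set b : ℝ → ℝ := fun x => (amplitude n)⁻¹ * p (-((n : ℝ) + 1)) x with hb_def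
  have ha : ContDiff ℝ ∞ a := contDiff_const.mul (contDiff_slice_of_neg hS hneg)
  have hb' : ContDiff ℝ ∞ b := contDiff_const.mul (contDiff_slice_of_neg hp hneg)
  have haA : ∀ i ≤ s, ∀ x, |iteratedDeriv i a x| ≤ A := fun i hi x =>
    (hSA n i hi x).trans (le_max_left _ _)
  have hbA : ∀ i ≤ s, ∀ x, |iteratedDeriv i b x| ≤ A := fun i hi x =>
    (hpA n i hi x).trans (le_max_right _ _)
  set G : ℝ × ℝ × E3 → ℝ := fun y => amplitudeFamily (amplitude n, y) - amplitudeFamily (0, y)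
    with hG
  have hGs : ContDiff ℝ ∞ G :=
    (contDiff_amplitudeFamily.comp (contDiff_const.prodMk contDiff_id)).sub
      (contDiff_amplitudeFamily.comp (contDiff_const.prodMk contDiff_id))
  have hF := contDiff_phaseMap ha hb' (freq n)
  have heq : (fun q : E3 × E3 => unstableSol S p n 0 q.1 q.2 - equilibrium q.2) =
      G ∘ phaseMap a b (freq n) := by
    ext q
    simp only [unstableSol, kieDensity, equilibrium, hG, Function.comp_apply, phaseMap,
      amplitudeFamily, rescale_zero, ha_def, hb_def, zero_mul, mul_inv_cancel_left₀ hr.ne']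
  refine (hH _ ?_ ?_ ((s.factorial * C₂ * A ^ s) * freq n ^ s * amplitude n) (by positivity)
    ?_).trans (le_of_eq (by ring))
  · rw [heq]
    exact hGs.comp hF
  · intro x v hv
    simp only [unstableSol, kieDensity, equilibrium, rescale_zero]
    rw [profile_mul_sideProfile_eq_zero ((hb _ _).1.trans (by norm_num)) hv,
      profile_mul_sideProfile_eq_zero (by simp) hv, sub_zero]
  · intro j hj x v hv
    rw [heq]
    have hmem : phaseMap a b (freq n) (x, v) ∈ K := by
      have h1 := haA 0 (Nat.zero_le _) (freq n * x 0)
      have h2 := hbA 0 (Nat.zero_le _) (freq n * x 0)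
      simp only [iteratedDeriv_zero] at h1 h2
      refine ⟨?_, ?_, ?_⟩
      · simpa [phaseMap] using h1
      · simpa [phaseMap] using h2
      · simpa [phaseMap] using hv
    have h := norm_iteratedFDeriv_comp_le hGs hF (n := j) (by exact_mod_cast le_top) (x, v)
      (C := C₂ * amplitude n) (D := A * freq n)
      (fun i hi => hΘ i (hi.trans hj) _ ⟨hr.le, amplitude_le_one n⟩ _ hmem)
      (fun i hi hij => norm_iteratedFDeriv_phaseMap_le ha hb' hN hA hi
        (haA i (hij.trans hj)) (hbA i (hij.trans hj)) _)
    refine h.trans ?_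
    have hAN : 1 ≤ A * freq n := one_le_mul_of_one_le_of_one_le hA hN
    calc (j.factorial : ℝ) * (C₂ * amplitude n) * (A * freq n) ^ j
        ≤ s.factorial * (C₂ * amplitude n) * (A * freq n) ^ s := by
          gcongr
      _ = _ := by rw [mul_pow]; ring

theorem HsNormW_initial_pos {S p : ℝ → ℝ → ℝ}
    (hS : ContDiffOn ℝ ∞ (fun z : ℝ × ℝ => S z.1 z.2) {z | z.1 < 0})
    (hp : ContDiffOn ℝ ∞ (fun z : ℝ × ℝ => p z.1 z.2) {z | z.1 < 0})
    (hb : ∀ t x, |S t x| ≤ 1 / 4 ∧ |p t x| ≤ 1 / 4) (m s n : ℕ) :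
    0 < HsNormW m s (fun x v => unstableSol S p n 0 x v - equilibrium v) := by
  have hs : ContDiff ℝ ∞ fun q : ℝ × E3 × E3 => unstableSol S p n q.1 q.2.1 q.2.2 :=
    contDiff_kieDensity _ (contDiff_rescale n hS) (contDiff_rescale n hp)
  have h1 : Continuous fun q : E3 × E3 => unstableSol S p n 0 q.1 q.2 := by
    have h := hs.continuous.comp
      (continuous_const.prodMk continuous_id : Continuous fun q : E3 × E3 => ((0 : ℝ), q))
    exact h
  obtain ⟨w, hw⟩ : ∃ w, profile (rescale n S 0 (1 / 2)) (rescale n p 0 (1 / 2)) w ≠ 0 := by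
    by_contra! hc
    have h2 := integral_profile (S := rescale n S 0 (1 / 2)) (p := rescale n p 0 (1 / 2))
      ((hb _ _).1.trans (by norm_num))
    simp only [hc, integral_zero] at h2
    exact zero_ne_one h2
  have hk0 : kernelBump 10 = 0 := kernelBump_eq_zero (by norm_num [abs_of_pos])
  refine HsNormW_pos m s (x := WithLp.toLp 2 fun _ => 1 / 2) (v := WithLp.toLp 2 ![w, 0, 10])
    (h1.sub (contDiff_equilibrium.continuous.comp continuous_snd)) ?_ ?_ ?_
  · intro x v hv
    simp only [unstableSol, kieDensity, equilibrium, rescale_zero]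
    rw [profile_mul_sideProfile_eq_zero ((hb _ _).1.trans (by norm_num)) hv,
      profile_mul_sideProfile_eq_zero (by simp) hv, sub_zero]
  · intro i
    norm_num
  · simp only [unstableSol, kieDensity, equilibrium, sideProfile]
    simpa [hk0, (amplitude_pos n).ne', kernelBump_zero_pos.ne'] using hw

/-- The deviation from equilibrium in the rescaled variables `(τ, ξ, η, v)`. -/
def deviation (S p : ℝ → ℝ → ℝ) (z : ℝ × ℝ × ℝ × E3) : ℝ :=
  profile (S (timeCut z.1) z.2.1) (p (timeCut z.1) z.2.1) (z.2.2.2 0) *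
    sideProfile z.2.2.1 (z.2.2.2 1) (z.2.2.2 2) - equilibrium z.2.2.2

theorem unstableSol_sub_equilibrium (S p : ℝ → ℝ → ℝ) (n : ℕ) (t : ℝ) (x v : E3) :
    unstableSol S p n t x v - equilibrium v =
      deviation S p (freq n * t - n - 1, freq n * x 0, amplitude n, v) := rfl

theorem continuous_deviation {S p : ℝ → ℝ → ℝ}
    (hS : ContDiffOn ℝ ∞ (fun z : ℝ × ℝ => S z.1 z.2) {z | z.1 < 0})
    (hp : ContDiffOn ℝ ∞ (fun z : ℝ × ℝ => p z.1 z.2) {z | z.1 < 0}) :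
    Continuous (deviation S p) := by
  have h0 : ContDiff ℝ ∞ fun z : ℝ × ℝ × ℝ × E3 => timeCut z.1 :=
    contDiff_timeCut.comp contDiff_fst
  have h1 : ContDiff ℝ ∞ fun z : ℝ × ℝ × ℝ × E3 => (timeCut z.1, z.2.1) :=
    h0.prodMk (by fun_prop)
  have h2 := hS.comp_contDiff h1 fun z => timeCut_neg _
  have h3 := hp.comp_contDiff h1 fun z => timeCut_neg _
  have hv : ∀ i, ContDiff ℝ ∞ fun q : ℝ × ℝ × ℝ × E3 => q.2.2.2 i :=
    fun i => (contDiff_coord i).comp (by fun_prop)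
  have h4 := (contDiff_profile_comp h2 h3 (hv 0)).mul
    (contDiff_sideProfile_comp (η := fun z : ℝ × ℝ × ℝ × E3 => z.2.2.1) (by fun_prop)
      (hv 1) (hv 2))
  exact h4.continuous.sub (contDiff_equilibrium.continuous.comp (by fun_prop))

theorem exists_profile_ne {S p : ℝ} (hS : |S| ≤ 1) (hp : |p| ≤ 1 / 4) (h0 : p ≠ 0) :
    ∃ w, profile S p w ≠ profile 0 0 w := by
  by_contra! hc
  have h1 := integral_sq_mul_profile hS hp
  have h2 := integral_sq_mul_profile (S := 0) (p := 0) (by simp) (by simp)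
  simp only [hc] at h1
  exact h0 (by linarith)

theorem exists_deviation_ge {S p : ℝ → ℝ → ℝ}
    (hS : ContDiffOn ℝ ∞ (fun z : ℝ × ℝ => S z.1 z.2) {z | z.1 < 0})
    (hp : ContDiffOn ℝ ∞ (fun z : ℝ × ℝ => p z.1 z.2) {z | z.1 < 0})
    (hb : ∀ t x, |S t x| ≤ 1 / 4 ∧ |p t x| ≤ 1 / 4)
    {τ ξ : ℝ} (hτ : τ < -1) (h0 : p τ ξ ≠ 0) :
    ∃ (v₀ : E3) (c ρ : ℝ), 0 < c ∧ 0 < ρ ∧ ρ ≤ 1 ∧ τ + ρ ≤ -1 ∧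
      ∀ τ' ∈ Metric.ball τ ρ, ∀ ξ' ∈ Metric.ball ξ ρ, ∀ η ∈ Metric.ball (0 : ℝ) ρ,
        ∀ v ∈ Metric.ball v₀ ρ, c ≤ deviation S p (τ', ξ', η, v) ^ 2 := by
  obtain ⟨w, hw⟩ := exists_profile_ne ((hb τ ξ).1.trans (by norm_num)) (hb τ ξ).2 h0
  set v₀ : E3 := WithLp.toLp 2 ![w, 0, 0] with hv₀
  have hne : deviation S p (τ, ξ, 0, v₀) ≠ 0 := by
    have h1 : deviation S p (τ, ξ, 0, v₀) =
        (profile (S τ ξ) (p τ ξ) w - profile 0 0 w) * (kernelBump 0 * kernelBump 0) := by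
      simp [deviation, equilibrium, sideProfile, timeCut_eq (show τ ≤ -1 / 2 by linarith), hv₀]
      ring
    rw [h1]
    exact mul_ne_zero (sub_ne_zero.2 hw)
      (mul_ne_zero kernelBump_zero_pos.ne' kernelBump_zero_pos.ne')
  have hpos : 0 < deviation S p (τ, ξ, 0, v₀) ^ 2 := by positivity
  have hc : Continuous fun z => deviation S p z ^ 2 := (continuous_deviation hS hp).pow 2
  have hev := hc.continuousAt.eventually (lt_mem_nhds (half_lt_self hpos))
  obtain ⟨δ, hδ, hball⟩ := Metric.eventually_nhds_iff_ball.1 hev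
  refine ⟨v₀, _, min δ (min 1 (-1 - τ)), half_pos hpos, lt_min hδ (lt_min one_pos (by linarith)),
    (min_le_right _ _).trans (min_le_left _ _), ?_, ?_⟩
  · have : min δ (min 1 (-1 - τ)) ≤ -1 - τ := (min_le_right _ _).trans (min_le_right _ _)
    linarith
  · intro τ' h1 ξ' h2 η h3 v h4
    refine (hball (τ', ξ', η, v) ?_).le
    have hsub := fun {X : Type} [PseudoMetricSpace X] (x : X) =>
      Metric.ball_subset_ball (x := x) (min_le_left δ (min 1 (-1 - τ)))
    rw [← ball_prod_same, ← ball_prod_same, ← ball_prod_same]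
    exact ⟨hsub _ h1, hsub _ h2, hsub _ h3, hsub _ h4⟩

theorem tendsto_amplitude : Tendsto amplitude atTop (nhds 0) := by
  refine Real.tendsto_exp_atBot.comp ?_
  have h : Tendsto (fun n : ℕ => ((n : ℝ) + 1) * (1 / 2)) atTop atTop :=
    (tendsto_atTop_add_const_right _ _ tendsto_natCast_atTop_atTop).atTop_mul_const (by norm_num)
  refine (tendsto_neg_atTop_atBot.comp h).congr fun n => ?_
  simp only [Function.comp_apply]
  ring

theorem measureReal_ball_E3 (x : E3) {r : ℝ} (hr : 0 ≤ r) :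
    volume.real (Metric.ball x r) = r ^ 3 * volume.real (Metric.ball (0 : E3) 1) := by
  simp [measureReal_def, Measure.addHaar_ball volume x hr, ENNReal.toReal_ofReal (pow_nonneg hr 3)]

theorem exists_L2_deviation_ge {S p : ℝ → ℝ → ℝ}
    (hS : ContDiffOn ℝ ∞ (fun z : ℝ × ℝ => S z.1 z.2) {z | z.1 < 0})
    (hp : ContDiffOn ℝ ∞ (fun z : ℝ × ℝ => p z.1 z.2) {z | z.1 < 0})
    (hb : ∀ t x, |S t x| ≤ 1 / 4 ∧ |p t x| ≤ 1 / 4)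
    {τ ξ : ℝ} (hτ : τ < -1) (h0 : p τ ξ ≠ 0) :
    ∃ (v₀ : E3) (c : ℝ), 0 < c ∧ ∀ᶠ n : ℕ in atTop, ∀ δ : ℝ, 1 / (n : ℝ) ≤ δ →
      c / (n : ℝ) ^ 6 ≤ Real.sqrt (∫ q in Icc (0 : ℝ) (1 / (2 * Real.pi * n)) ×ˢ
        (Metric.ball (0 : E3) δ ×ˢ Metric.ball v₀ δ),
          (unstableSol S p n q.1 q.2.1 q.2.2 - equilibrium q.2.2) ^ 2) := by
  obtain ⟨v₀, c, ρ, hc, hρ, hρ1, hτρ, hdev⟩ := exists_deviation_ge hS hp hb hτ h0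
  set V := volume.real (Metric.ball (0 : E3) 1) with hV
  have hVpos : 0 < V := ENNReal.toReal_pos (Metric.measure_ball_pos volume _ one_pos).ne'
    measure_ball_lt_top.ne
  set c₁ := c * (2 * ρ * (ρ ^ 3 * V) * (ρ ^ 3 * V)) / (2 * Real.pi) ^ 4 with hc₁
  have hc₁pos : 0 < c₁ := by positivity
  refine ⟨v₀, Real.sqrt c₁, Real.sqrt_pos.2 hc₁pos, ?_⟩
  filter_upwards [tendsto_amplitude.eventually (Metric.ball_mem_nhds 0 hρ),
    eventually_ge_atTop 1, tendsto_natCast_atTop_atTop.eventually_ge_atTop (|ξ| + ρ),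
    tendsto_natCast_atTop_atTop.eventually_ge_atTop (ρ - τ)] with n hamp hn hnξ hnτ δ hδ
  have hn1 : (1 : ℝ) ≤ n := by exact_mod_cast hn
  have hn0 : (0 : ℝ) < n := by linarith
  have hN := freq_pos hn
  have hpi := Real.pi_gt_three
  set F : ℝ × E3 × E3 → ℝ := fun q =>
    (unstableSol S p n q.1 q.2.1 q.2.2 - equilibrium q.2.2) ^ 2 with hF
  have hFc : Continuous F := by
    have h1 : ContDiff ℝ ∞ fun q : ℝ × E3 × E3 => unstableSol S p n q.1 q.2.1 q.2.2 :=
      contDiff_kieDensity _ (contDiff_rescale n hS) (contDiff_rescale n hp)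
    exact (h1.continuous.sub (contDiff_equilibrium.continuous.comp (by fun_prop))).pow 2
  set B : Set (ℝ × E3 × E3) := Metric.ball ((τ + n + 1) / freq n) (ρ / freq n) ×ˢ
    (Metric.ball (EuclideanSpace.single 0 (ξ / freq n)) (ρ / freq n) ×ˢ
      Metric.ball v₀ (ρ / n)) with hB
  set D : Set (ℝ × E3 × E3) := Icc (0 : ℝ) (1 / (2 * Real.pi * n)) ×ˢ
        (Metric.ball (0 : E3) δ ×ˢ Metric.ball v₀ δ) with hD
  have hDint : IntegrableOn F D := by
    have hK : IsCompact (Icc (0 : ℝ) (1 / (2 * Real.pi * n)) ×ˢ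
        (Metric.closedBall (0 : E3) δ ×ˢ Metric.closedBall v₀ δ)) :=
      isCompact_Icc.prod ((isCompact_closedBall _ _).prod (isCompact_closedBall _ _))
    exact (hFc.continuousOn.integrableOn_compact hK).mono_set
      (prod_mono le_rfl (prod_mono Metric.ball_subset_closedBall Metric.ball_subset_closedBall))
  have htime : ∀ t ∈ Metric.ball ((τ + n + 1) / freq n) (ρ / freq n),
      |freq n * t - n - 1 - τ| < ρ := by
    intro t ht
    rw [Metric.mem_ball, Real.dist_eq, lt_div_iff₀ hN, ← abs_of_pos hN, ← abs_mul,
      abs_of_pos hN] at ht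
    have h : freq n * t - n - 1 - τ = (t - (τ + n + 1) / freq n) * freq n := by
      field_simp
      ring
    rwa [h]
  have hBD : B ⊆ D := by
    refine prod_mono ?_ (prod_mono ?_ ?_)
    · intro t ht
      have h1 := abs_lt.1 (htime t ht)
      have hfreq : freq n = 2 * Real.pi * n * n := by unfold freq; ring
      constructor
      · have h2 : 0 ≤ freq n * t := by linarith
        exact nonneg_of_mul_nonneg_right h2 hN
      · rw [le_div_iff₀ (by positivity)]
        have h2 : freq n * t ≤ n := by linarith
        rw [hfreq] at h2
        have h3 : n * (t * (2 * Real.pi * n)) ≤ n * 1 := by linarith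
        exact le_of_mul_le_mul_left h3 hn0
    · refine Metric.ball_subset_ball' ?_
      rw [dist_zero_right, PiLp.norm_single, Real.norm_eq_abs, abs_div, abs_of_pos hN,
        ← add_div]
      refine le_trans ?_ hδ
      rw [div_le_div_iff₀ hN hn0]
      have hfreq : (n : ℝ) * n ≤ freq n := by unfold freq; nlinarith
      nlinarith
    · exact Metric.ball_subset_ball ((div_le_div_of_nonneg_right hρ1 hn0.le).trans hδ)
  have hFB : ∀ q ∈ B, c ≤ F q := by
    rintro ⟨t, x, v⟩ ⟨ht, hx, hv⟩
    simp only [hF, unstableSol_sub_equilibrium]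
    refine hdev _ (by rw [Metric.mem_ball, Real.dist_eq]; exact htime t ht) _ ?_ _ hamp _ ?_
    · have h1 : |x 0 - ξ / freq n| < ρ / freq n := by
        have h2 := PiLp.norm_apply_le (x - EuclideanSpace.single (0 : Fin 3) (ξ / freq n)) 0
        rw [Metric.mem_ball, dist_eq_norm] at hx
        simpa using h2.trans_lt hx
      rw [lt_div_iff₀ hN, ← abs_of_pos hN, ← abs_mul, abs_of_pos hN] at h1
      rw [Metric.mem_ball, Real.dist_eq]
      have h : freq n * x 0 - ξ = (x 0 - ξ / freq n) * freq n := by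
        field_simp
      rwa [h]
    · exact Metric.ball_subset_ball (div_le_self hρ.le hn1) hv
  have hBm : MeasurableSet B :=
    Metric.isOpen_ball.measurableSet.prod
      (Metric.isOpen_ball.measurableSet.prod Metric.isOpen_ball.measurableSet)
  have hBvol : volume.real B = 2 * (ρ / freq n) * ((ρ / freq n) ^ 3 * V * ((ρ / n) ^ 3 * V)) := by
    have hr : 0 ≤ ρ / freq n := by positivity
    rw [hB, Measure.volume_eq_prod, measureReal_prod_prod, Measure.volume_eq_prod,
      measureReal_prod_prod, Real.volume_real_ball hr, measureReal_ball_E3 _ hr,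
      measureReal_ball_E3 _ (by positivity : 0 ≤ ρ / (n : ℝ))]
  have hBfin : volume B ≠ ⊤ := by
    intro h
    have h1 : volume.real B = 0 := by simp [measureReal_def, h]
    rw [hBvol] at h1
    have : 0 < 2 * (ρ / freq n) * ((ρ / freq n) ^ 3 * V * ((ρ / n) ^ 3 * V)) := by positivity
    linarith
  have h1 : c * volume.real B ≤ ∫ q in B, F q :=
    setIntegral_ge_of_const_le_real hBm hBfin hFB (hDint.mono_set hBD)
  have h2 : ∫ q in B, F q ≤ ∫ q in D, F q :=
    setIntegral_mono_set hDint (.of_forall fun q => sq_nonneg _) (.of_forall hBD)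
  have h3 : c₁ / (n : ℝ) ^ 12 ≤ c * volume.real B := by
    have h4 : c * volume.real B = c₁ / (n : ℝ) ^ 11 := by
      rw [hBvol, hc₁]
      unfold freq
      field_simp
    rw [h4]
    gcongr
    norm_num
  have h5 : Real.sqrt c₁ / (n : ℝ) ^ 6 = Real.sqrt (c₁ / (n : ℝ) ^ 12) := by
    rw [Real.sqrt_div hc₁pos.le, show (n : ℝ) ^ 12 = ((n : ℝ) ^ 6) ^ 2 by ring,
      Real.sqrt_sq (by positivity)]
  rw [h5]
  exact Real.sqrt_le_sqrt (h3.trans (h1.trans h2))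

theorem tendsto_ratio_lower_bound {c C α : ℝ} (hc : 0 < c) (hC : 0 < C) (hα : 0 < α) (s : ℕ) :
    Tendsto (fun n : ℕ => c / (n : ℝ) ^ 6 / (C * freq n ^ s * amplitude n) ^ α) atTop atTop := by
  have h1 := (tendsto_exp_mul_div_rpow_atTop (6 + 2 * s * α) (α / 2) (by positivity)).comp
    (tendsto_natCast_atTop_atTop (R := ℝ))
  set K := C * (2 * Real.pi) ^ s with hK
  have hKpos : 0 < K := by have := Real.pi_pos; positivity
  have h2 := h1.const_mul_atTop (show 0 < c / K ^ α * Real.exp (α / 2) by positivity)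
  refine h2.congr' ?_
  filter_upwards [eventually_ge_atTop 1] with n hn
  have hn0 : (0 : ℝ) < n := by exact_mod_cast hn
  have h3 : C * freq n ^ s * amplitude n = K * (n : ℝ) ^ (2 * s : ℝ) * amplitude n := by
    rw [hK, freq, mul_pow, ← pow_mul, ← Real.rpow_natCast (n : ℝ) (2 * s)]
    push_cast
    ring
  rw [h3, Real.mul_rpow (by positivity) (amplitude_pos n).le,
    Real.mul_rpow hKpos.le (by positivity),
    ← Real.rpow_mul hn0.le, amplitude, ← Real.exp_mul]
  simp only [Function.comp_apply]
  rw [Real.rpow_add hn0, show (6 : ℝ) = ((6 : ℕ) : ℝ) by norm_num, Real.rpow_natCast,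
    show -((n : ℝ) + 1) / 2 * α = -(α / 2 * n + α / 2) by ring, Real.exp_neg, Real.exp_add]
  have hKα : 0 < K ^ α := by positivity
  have hnα : 0 < (n : ℝ) ^ (2 * s * α : ℝ) := by positivity
  field_simp

/-- The discrete scale attached to `ε`. -/
def scaleIndex (k : ℕ) (ε : ℝ) : ℕ := ⌈ε⁻¹ ^ (k + 1)⌉₊

theorem tendsto_scaleIndex (k : ℕ) : Tendsto (scaleIndex k) (nhdsWithin 0 (Ioi 0)) atTop :=
  tendsto_nat_ceil_atTop.comp ((tendsto_pow_atTop k.succ_ne_zero).comp tendsto_inv_nhdsGT_zero)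

theorem one_le_scaleIndex (k : ℕ) {ε : ℝ} (hε : 0 < ε) : 1 ≤ scaleIndex k ε :=
  Nat.one_le_ceil_iff.2 (by positivity)

theorem one_div_scaleIndex_le (k : ℕ) {ε : ℝ} (hε : 0 < ε) :
    1 / (scaleIndex k ε : ℝ) ≤ ε ^ (k + 1) := by
  have h1 : ε⁻¹ ^ (k + 1) ≤ scaleIndex k ε := Nat.le_ceil _
  have h2 : (0 : ℝ) < ε⁻¹ ^ (k + 1) := by positivity
  calc 1 / (scaleIndex k ε : ℝ) ≤ 1 / ε⁻¹ ^ (k + 1) := one_div_le_one_div_of_le h2 h1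
    _ = ε ^ (k + 1) := by rw [inv_pow, one_div, inv_inv]

end

/-- Ill-posedness of the kinetic incompressible Euler equations: there is a smooth stationary
profile `μ(v)` with `∫ μ = 1` such that for all `m, s ∈ ℕ`, `α ∈ (0,1]`, `k ∈ ℕ`, there are a
point `(x₀,v₀) ∈ 𝕋³ × ℝ³`, constants `C, ε₀ > 0`, and for every `ε ∈ (0,ε₀]` a time
`t_ε ∈ (0, C ε |log ε|]` and a smooth solution `f_ε` on `[0,t_ε] × 𝕋³ × ℝ³`, with
`‖f_ε - μ‖_{L²([0,t_ε] × Ω_ε)} / ‖⟨v⟩^m (f_ε(0) - μ)‖_{H^s}^α → ∞` as `ε → 0`, where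
`Ω_ε = B(x₀, ε^k) × B(v₀, ε^k)`. -/
theorem illposedness_kinetic_incompressible_euler :
    ∃ μ : E3 → ℝ, ContDiff ℝ (⊤ : ℕ∞) μ ∧ (∫ v : E3, μ v) = 1 ∧
      ∀ (m s : ℕ) (α : ℝ), α ∈ Set.Ioc (0:ℝ) 1 → ∀ k : ℕ,
        ∃ (x₀ v₀ : E3) (C ε₀ : ℝ), 0 < C ∧ 0 < ε₀ ∧
          ∃ (t : ℝ → ℝ) (f : ℝ → ℝ → E3 → E3 → ℝ),
            (∀ ε ∈ Set.Ioc (0:ℝ) ε₀,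
              0 < t ε ∧ t ε ≤ C * ε * |Real.log ε| ∧ IsKIESol (t ε) (f ε)) ∧
            Tendsto
              (fun ε : ℝ =>
                Real.sqrt (∫ p in (Set.Icc (0:ℝ) (t ε)) ×ˢ
                    ((Metric.ball x₀ (ε ^ k)) ×ˢ (Metric.ball v₀ (ε ^ k))),
                  (f ε p.1 p.2.1 p.2.2 - μ p.2.2) ^ 2)
                / (HsNormW m s (fun x v => f ε 0 x v - μ v)) ^ α)
              (nhdsWithin 0 (Set.Ioc 0 ε₀)) atTop := by
  obtain ⟨S, p, hS, hp, hSper, hpper, hSe, hpe, hmean, hd, hb, τ, hτ, ξ, hne⟩ :=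
    exists_ancient_solution
  have hSd : ∀ k, ∃ C, ∀ t ≤ -1, ∀ x, |iteratedDeriv k (S t) x| ≤ C * Real.exp (t / 2) :=
    fun k => (hd k).imp fun C h t ht x => (h t ht x).1
  have hpd : ∀ k, ∃ C, ∀ t ≤ -1, ∀ x, |iteratedDeriv k (p t) x| ≤ C * Real.exp (t / 2) :=
    fun k => (hd k).imp fun C h t ht x => (h t ht x).2
  obtain ⟨v₀, c, hc, hL2⟩ := exists_L2_deviation_ge hS hp hb hτ hne
  refine ⟨equilibrium, contDiff_equilibrium, integral_equilibrium, fun m s α hα k => ?_⟩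
  obtain ⟨C, hC, hH⟩ := exists_HsNormW_initial_le hS hp hSd hpd hb m s
  have hα0 : 0 < α := hα.1
  refine ⟨0, v₀, 1, Real.exp (-1), one_pos, Real.exp_pos _,
    fun ε => 1 / (2 * Real.pi * scaleIndex k ε), fun ε => unstableSol S p (scaleIndex k ε),
    fun ε hε => ?_, ?_⟩
  · have hn := one_le_scaleIndex k hε.1
    have hn0 : (0 : ℝ) < scaleIndex k ε := by exact_mod_cast hn
    have hpi := Real.pi_gt_three
    have hε1 : ε ≤ 1 := hε.2.trans (Real.exp_le_one_iff.2 (by norm_num))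
    have hε0 := hε.1
    have hlog : 1 ≤ |Real.log ε| := by
      have h1 : Real.log ε ≤ -1 := (Real.log_le_iff_le_exp hε.1).2 hε.2
      rw [abs_of_neg (by linarith)]
      linarith
    refine ⟨by positivity, ?_, isKIESol_rescale hS hp hSper hpper hSe hpe hmean hb hn _⟩
    calc 1 / (2 * Real.pi * scaleIndex k ε) ≤ 1 / (scaleIndex k ε : ℝ) := by
          apply one_div_le_one_div_of_le hn0
          nlinarith
      _ ≤ ε ^ (k + 1) := one_div_scaleIndex_le k hε.1
      _ ≤ ε := pow_le_of_le_one hε.1.le hε1 k.succ_ne_zero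
      _ ≤ 1 * ε * |Real.log ε| := by nlinarith
  · have hle : nhdsWithin (0 : ℝ) (Ioc 0 (Real.exp (-1))) ≤ nhdsWithin 0 (Ioi 0) :=
      nhdsWithin_mono _ Ioc_subset_Ioi_self
    have hlim := (tendsto_scaleIndex k).mono_left hle
    refine tendsto_atTop_mono' _ ?_
      ((tendsto_ratio_lower_bound hc (by linarith : 0 < C + 1) hα0 s).comp hlim)
    filter_upwards [hlim.eventually hL2, self_mem_nhdsWithin] with ε hLε hε
    have hε1 : ε ≤ 1 := hε.2.trans (Real.exp_le_one_iff.2 (by norm_num))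
    have hn := one_le_scaleIndex k hε.1
    have hδ : 1 / (scaleIndex k ε : ℝ) ≤ ε ^ k := (one_div_scaleIndex_le k hε.1).trans
      (pow_le_pow_of_le_one hε.1.le hε1 k.le_succ)
    have hnum := hLε (ε ^ k) hδ
    have hpos := HsNormW_initial_pos hS hp hb m s (scaleIndex k ε)
    have hden := hH (scaleIndex k ε) hn
    have hden2 : C * freq (scaleIndex k ε) ^ s * amplitude (scaleIndex k ε) ≤
        (C + 1) * freq (scaleIndex k ε) ^ s * amplitude (scaleIndex k ε) := by
      have h1 := amplitude_pos (scaleIndex k ε)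
      have h2 := freq_pos hn
      gcongr
      linarith
    simp only [Function.comp_apply]
    exact div_le_div₀ (Real.sqrt_nonneg _) hnum (Real.rpow_pos_of_pos hpos α)
      (Real.rpow_le_rpow hpos.le (hden.trans hden2) hα0.le)

end
end

section
/- Assume moreover ∫_{−1}^{1} (U(z) − c)^{−2} dz = 0. Then the function φ̂ := φ₂ satisfies φ̂(−1) = φ̂(1) = 0, and the function ω̂ := φ̂″ is not identically zero and satisfies (U(z) − c)·ω̂(z) = U″(z)·φ̂(z) for all z ∈ [-1,1]; equivalently, for every n ∈ ℤ, −i n U(z)·ω̂(z) + i n U″(z)·φ̂(z) = (−i n c)·ω̂(z) for all z, so that (e^{iny} ω̂(z), −inc) is an eigenpair of the linearized hydrostatic Euler operator. -/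
open Set

noncomputable section

/-- Derivative within the interval `[-1,1]` (for functions on `[-1,1]`). -/
noncomputable def dI (f : ℝ → ℂ) : ℝ → ℂ := fun z => derivWithin f (Set.Icc (-1:ℝ) 1) z

/-- Second derivative of `U` within `[-1,1]`. -/
noncomputable def ddU (U : ℝ → ℝ) : ℝ → ℝ :=
  fun z => derivWithin (fun z' => derivWithin U (Set.Icc (-1:ℝ) 1) z') (Set.Icc (-1:ℝ) 1) z

/-- The first homogeneous solution `φ₁(z) = U(z) - c` of the Rayleigh equation. -/
noncomputable def rayPhi1 (U : ℝ → ℝ) (c : ℂ) : ℝ → ℂ := fun z => (U z : ℂ) - c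

/-- The second homogeneous solution `φ₂(z) = (U(z) - c)·∫_{-1}^{z} (U(z') - c)⁻² dz'`. -/
noncomputable def rayPhi2 (U : ℝ → ℝ) (c : ℂ) : ℝ → ℂ :=
  fun z => ((U z : ℂ) - c) * ∫ t in (-1:ℝ)..z, (((U t : ℂ) - c) ^ 2)⁻¹

theorem ofReal_sub_ne_zero_of_im_ne_zero {c : ℂ} (hc : c.im ≠ 0) (x : ℝ) : (x : ℂ) - c ≠ 0 := by
  intro h
  apply hc
  simpa using congrArg Complex.im h

theorem hasDerivWithinAt_ofReal_sub_const {U : ℝ → ℝ} (hU : DifferentiableOn ℝ U (Icc (-1) 1)) (c : ℂ)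
    {z : ℝ} (hz : z ∈ Icc (-1 : ℝ) 1) :
    HasDerivWithinAt (fun t => (U t : ℂ) - c) ((derivWithin U (Icc (-1) 1) z : ℝ) : ℂ)
      (Icc (-1) 1) z :=
  (hU z hz).hasDerivWithinAt.ofReal_comp.sub_const c

theorem hasDerivWithinAt_integral_inv_sq {U : ℝ → ℝ} (hU : ContinuousOn U (Icc (-1) 1))
    {c : ℂ} (hc : c.im ≠ 0) {z : ℝ} (hz : z ∈ Icc (-1 : ℝ) 1) :
    HasDerivWithinAt (fun x => ∫ t in (-1 : ℝ)..x, (((U t : ℂ) - c) ^ 2)⁻¹)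
      (((U z : ℂ) - c) ^ 2)⁻¹ (Icc (-1) 1) z := by
  have hcont : ContinuousOn (fun t => (((U t : ℂ) - c) ^ 2)⁻¹) (Icc (-1 : ℝ) 1) :=
    (((Complex.continuous_ofReal.comp_continuousOn hU).sub continuousOn_const).pow 2).inv₀
      fun t _ => pow_ne_zero 2 (ofReal_sub_ne_zero_of_im_ne_zero hc (U t))
  have : Fact (z ∈ Icc (-1 : ℝ) 1) := ⟨hz⟩
  refine intervalIntegral.integral_hasDerivWithinAt_right ?_
    (hcont.stronglyMeasurableAtFilter_nhdsWithin measurableSet_Icc z) (hcont z hz)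
  refine (hcont.mono ?_).intervalIntegrable
  rw [uIcc_of_le hz.1]
  exact Icc_subset_Icc_right hz.2

/-- `φ₂′ = U′·∫(U - c)⁻² + (U - c)⁻¹`. -/
theorem hasDerivWithinAt_rayPhi2 {U : ℝ → ℝ} (hU : DifferentiableOn ℝ U (Icc (-1) 1))
    {c : ℂ} (hc : c.im ≠ 0) {z : ℝ} (hz : z ∈ Icc (-1 : ℝ) 1) :
    HasDerivWithinAt (rayPhi2 U c)
      (((derivWithin U (Icc (-1) 1) z : ℝ) : ℂ) * (∫ t in (-1 : ℝ)..z, (((U t : ℂ) - c) ^ 2)⁻¹)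
        + ((U z : ℂ) - c)⁻¹) (Icc (-1) 1) z := by
  refine ((hasDerivWithinAt_ofReal_sub_const hU c hz).mul
    (hasDerivWithinAt_integral_inv_sq hU.continuousOn hc hz)).congr_deriv ?_
  have hV := ofReal_sub_ne_zero_of_im_ne_zero hc (U z)
  field_simp

theorem dI_rayPhi2 {U : ℝ → ℝ} (hU : DifferentiableOn ℝ U (Icc (-1) 1))
    {c : ℂ} (hc : c.im ≠ 0) {z : ℝ} (hz : z ∈ Icc (-1 : ℝ) 1) :
    dI (rayPhi2 U c) z =
      ((derivWithin U (Icc (-1) 1) z : ℝ) : ℂ) * (∫ t in (-1 : ℝ)..z, (((U t : ℂ) - c) ^ 2)⁻¹)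
        + ((U z : ℂ) - c)⁻¹ :=
  (hasDerivWithinAt_rayPhi2 hU hc hz).derivWithin (uniqueDiffOn_Icc (by norm_num) z hz)

/-- `φ₂″ = U″·∫(U - c)⁻²`. -/
theorem hasDerivWithinAt_dI_rayPhi2 {U : ℝ → ℝ} (hU : ContDiffOn ℝ 2 U (Icc (-1) 1))
    {c : ℂ} (hc : c.im ≠ 0) {z : ℝ} (hz : z ∈ Icc (-1 : ℝ) 1) :
    HasDerivWithinAt (dI (rayPhi2 U c))
      ((ddU U z : ℂ) * ∫ t in (-1 : ℝ)..z, (((U t : ℂ) - c) ^ 2)⁻¹) (Icc (-1) 1) z := by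
  have hU1 : DifferentiableOn ℝ U (Icc (-1) 1) := hU.differentiableOn (by norm_num)
  have hU2 : DifferentiableOn ℝ (derivWithin U (Icc (-1) 1)) (Icc (-1) 1) :=
    (hU.derivWithin (m := 1) (uniqueDiffOn_Icc (by norm_num)) (by norm_num)).differentiableOn
      (by norm_num)
  have hV := ofReal_sub_ne_zero_of_im_ne_zero hc (U z)
  have hsum := ((hU2 z hz).hasDerivWithinAt.ofReal_comp.mul
    (hasDerivWithinAt_integral_inv_sq hU1.continuousOn hc hz)).add
      ((hasDerivWithinAt_ofReal_sub_const hU1 c hz).inv hV)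
  refine (hsum.congr (fun x hx => dI_rayPhi2 hU1 hc hx) (dI_rayPhi2 hU1 hc hz)).congr_deriv ?_
  simp only [ddU]
  field_simp
  ring

/-- A function on `[-1,1]` vanishing at both endpoints with zero second derivative has zero
first derivative at `-1`. -/
theorem dI_neg_one_eq_zero_of_dI_dI_eq_zero {f : ℝ → ℂ} (hf : DifferentiableOn ℝ f (Icc (-1) 1))
    (hf' : DifferentiableOn ℝ (dI f) (Icc (-1) 1)) (hleft : f (-1) = 0) (hright : f 1 = 0)
    (h : ∀ z ∈ Icc (-1 : ℝ) 1, dI (dI f) z = 0) : dI f (-1) = 0 := by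
  have hconst : ∀ z ∈ Icc (-1 : ℝ) 1, dI f z = dI f (-1) :=
    constant_of_derivWithin_zero hf' fun z hz => h z (Ico_subset_Icc_self hz)
  have hderiv : ∀ z ∈ Icc (-1 : ℝ) 1,
      HasDerivWithinAt (fun t : ℝ => f t - (t : ℂ) * dI f (-1)) 0 (Icc (-1) 1) z := by
    intro z hz
    have hlin : HasDerivWithinAt (fun t : ℝ => (t : ℂ) * dI f (-1)) (1 * dI f (-1))
        (Icc (-1) 1) z :=
      ((hasDerivWithinAt_id z _).ofReal_comp.mul_const (dI f (-1))).congr_deriv (by simp)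
    refine ((hf z hz).hasDerivWithinAt.sub hlin).congr_deriv ?_
    have := hconst z hz
    simp only [dI] at this ⊢
    rw [this]
    ring
  have hends := constant_of_derivWithin_zero
    (fun z hz => (hderiv z hz).differentiableWithinAt)
    (fun z hz => (hderiv z (Ico_subset_Icc_self hz)).derivWithin
      (uniqueDiffOn_Icc (by norm_num) z (Ico_subset_Icc_self hz)))
    1 (right_mem_Icc.2 (by norm_num))
  simp only [hleft, hright] at hends
  push_cast at hends
  linear_combination (-1 / 2 : ℂ) * hends

/-- If `∫_{-1}^{1} (U(z) - c)⁻² dz = 0`, then `φ̂ := φ₂` vanishes at `z = ±1`, the function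
`ω̂ := φ̂″` is not identically zero, satisfies `(U(z) - c)·ω̂(z) = U″(z)·φ̂(z)` on `[-1,1]`, and,
equivalently, for every `n ∈ ℤ`, `-inU(z)·ω̂(z) + inU″(z)·φ̂(z) = (-inc)·ω̂(z)` on `[-1,1]`,
so that `(e^{iny} ω̂(z), -inc)` is an eigenpair of the linearized hydrostatic Euler operator. -/
theorem rayleigh_eigenfunction_of_dispersion (U : ℝ → ℝ)
    (hU : ContDiffOn ℝ 2 U (Set.Icc (-1) 1)) (c : ℂ) (hc : c.im ≠ 0)
    (hdisp : (∫ z in (-1:ℝ)..1, (((U z : ℂ) - c) ^ 2)⁻¹) = 0) :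
    rayPhi2 U c (-1) = 0 ∧ rayPhi2 U c 1 = 0 ∧
    (∃ z ∈ Set.Icc (-1:ℝ) 1, dI (dI (rayPhi2 U c)) z ≠ 0) ∧
    (∀ z ∈ Set.Icc (-1:ℝ) 1,
      ((U z : ℂ) - c) * dI (dI (rayPhi2 U c)) z = (ddU U z : ℂ) * rayPhi2 U c z) ∧
    (∀ n : ℤ, ∀ z ∈ Set.Icc (-1:ℝ) 1,
      -(Complex.I * (n : ℂ) * (U z : ℂ)) * dI (dI (rayPhi2 U c)) z
        + Complex.I * (n : ℂ) * (ddU U z : ℂ) * rayPhi2 U c z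
      = (-(Complex.I) * (n : ℂ) * c) * dI (dI (rayPhi2 U c)) z) := by
  have hU1 : DifferentiableOn ℝ U (Icc (-1) 1) := hU.differentiableOn (by norm_num)
  have hleft : rayPhi2 U c (-1) = 0 := by simp [rayPhi2]
  have hright : rayPhi2 U c 1 = 0 := by simp [rayPhi2, hdisp]
  have hray : ∀ z ∈ Set.Icc (-1:ℝ) 1,
      ((U z : ℂ) - c) * dI (dI (rayPhi2 U c)) z = (ddU U z : ℂ) * rayPhi2 U c z := by
    intro z hz
    have hω : dI (dI (rayPhi2 U c)) z = _ :=
      (hasDerivWithinAt_dI_rayPhi2 hU hc hz).derivWithin (uniqueDiffOn_Icc (by norm_num) z hz)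
    rw [hω, rayPhi2]
    ring
  refine ⟨hleft, hright, ?_, hray, fun n z hz => ?_⟩
  · by_contra! h
    have hzero := dI_neg_one_eq_zero_of_dI_dI_eq_zero
      (fun z hz => (hasDerivWithinAt_rayPhi2 hU1 hc hz).differentiableWithinAt)
      (fun z hz => (hasDerivWithinAt_dI_rayPhi2 hU hc hz).differentiableWithinAt)
      hleft hright h
    rw [dI_rayPhi2 hU1 hc (left_mem_Icc.2 (by norm_num))] at hzero
    simp [ofReal_sub_ne_zero_of_im_ne_zero hc] at hzero
  · linear_combination (-(Complex.I) * (n : ℂ)) * hray z hz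

end
end

section
/- Conversely, suppose φ : [-1,1] → ℂ is twice continuously differentiable, not identically zero, satisfies (U(z) − c)·φ″(z) − U″(z)·φ(z) = 0 for all z ∈ [-1,1], and φ(−1) = φ(1) = 0. Then ∫_{−1}^{1} (U(z) − c)^{−2} dz = 0. -/
open Set

noncomputable section

/-- A twice continuously differentiable function has a first and a second derivative within a set of
unique differentiability. -/
lemma ContDiffOn.hasDerivWithinAt_derivWithin_derivWithin {E : Type*} [NormedAddCommGroup E]
    [NormedSpace ℝ E] {f : ℝ → E} {s : Set ℝ} (hf : ContDiffOn ℝ 2 f s) (hs : UniqueDiffOn ℝ s)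
    {z : ℝ} (hz : z ∈ s) :
    HasDerivWithinAt f (derivWithin f s z) s z ∧
      HasDerivWithinAt (derivWithin f s) (derivWithin (derivWithin f s) s z) s z := by
  have hf' : ContDiffOn ℝ 1 (derivWithin f s) s := hf.derivWithin hs (by norm_num)
  exact ⟨(hf.differentiableOn (by norm_num) z hz).hasDerivWithinAt,
    (hf'.differentiableOn (by norm_num) z hz).hasDerivWithinAt⟩

/-- A function with vanishing derivative within `[a,b]` is constant on `[a,b]`. -/
lemma eq_left_of_hasDerivWithinAt_zero {E : Type*} [NormedAddCommGroup E] [NormedSpace ℝ E]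
    {f : ℝ → E} {a b : ℝ} (hab : a < b)
    (hf : ∀ z ∈ Icc a b, HasDerivWithinAt f 0 (Icc a b) z) : ∀ z ∈ Icc a b, f z = f a :=
  constant_of_derivWithin_zero (fun z hz => (hf z hz).differentiableWithinAt)
    fun z hz => (hf z (Ico_subset_Icc_self hz)).derivWithin
      (uniqueDiffOn_Icc hab z (Ico_subset_Icc_self hz))

/-- Conversely, if `φ : [-1,1] → ℂ` is `C²`, not identically zero, satisfies the Rayleigh
equation `(U(z) - c)·φ″(z) - U″(z)·φ(z) = 0` on `[-1,1]` and `φ(±1) = 0`, then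
`∫_{-1}^{1} (U(z) - c)⁻² dz = 0`. -/
theorem dispersion_of_rayleigh_eigenfunction (U : ℝ → ℝ)
    (hU : ContDiffOn ℝ 2 U (Set.Icc (-1) 1)) (c : ℂ) (hc : c.im ≠ 0)
    (φ : ℝ → ℂ) (hφ : ContDiffOn ℝ 2 φ (Set.Icc (-1) 1))
    (hφ0 : ∃ z ∈ Set.Icc (-1:ℝ) 1, φ z ≠ 0)
    (hray : ∀ z ∈ Set.Icc (-1:ℝ) 1,
      ((U z : ℂ) - c) * dI (dI φ) z - (ddU U z : ℂ) * φ z = 0)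
    (hbc1 : φ (-1) = 0) (hbc2 : φ 1 = 0) :
    (∫ z in (-1:ℝ)..1, (((U z : ℂ) - c) ^ 2)⁻¹) = 0 := by
  have hlt : (-1:ℝ) < 1 := by norm_num
  have hs : UniqueDiffOn ℝ (Icc (-1:ℝ) 1) := uniqueDiffOn_Icc hlt
  have hne : ∀ z, (U z : ℂ) - c ≠ 0 := fun z h => hc (by simpa using congrArg Complex.im h)
  have hdU : ∀ z ∈ Icc (-1:ℝ) 1, HasDerivWithinAt (fun z => (U z : ℂ) - c)
      ((derivWithin U (Icc (-1) 1) z : ℝ) : ℂ) (Icc (-1) 1) z := fun z hz =>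
    (hU.hasDerivWithinAt_derivWithin_derivWithin hs hz).1.ofReal_comp.sub_const c
  -- the Wronskian of `U - c` and `φ` is constant
  obtain ⟨K, hK⟩ : ∃ K : ℂ, ∀ z ∈ Icc (-1:ℝ) 1,
      ((U z : ℂ) - c) * dI φ z - ((derivWithin U (Icc (-1) 1) z : ℝ) : ℂ) * φ z = K := by
    refine ⟨_, eq_left_of_hasDerivWithinAt_zero hlt (f := fun z =>
      ((U z : ℂ) - c) * dI φ z - ((derivWithin U (Icc (-1) 1) z : ℝ) : ℂ) * φ z) fun z hz => ?_⟩
    obtain ⟨hφ₁, hφ₂⟩ := hφ.hasDerivWithinAt_derivWithin_derivWithin hs hz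
    have hU₂ := (hU.hasDerivWithinAt_derivWithin_derivWithin hs hz).2.ofReal_comp
    refine (((hdU z hz).mul hφ₂).sub (hU₂.mul hφ₁)).congr_deriv ?_
    have h : ((U z : ℂ) - c) * derivWithin (derivWithin φ (Icc (-1) 1)) (Icc (-1) 1) z -
      ((derivWithin (derivWithin U (Icc (-1) 1)) (Icc (-1) 1) z : ℝ) : ℂ) * φ z = 0 := hray z hz
    linear_combination h
  have hquot : ∀ z ∈ Icc (-1:ℝ) 1, HasDerivWithinAt (fun z => φ z / ((U z : ℂ) - c))
      (K * (((U z : ℂ) - c) ^ 2)⁻¹) (Icc (-1) 1) z := fun z hz => by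
    refine ((hφ.hasDerivWithinAt_derivWithin_derivWithin hs hz).1.div
      (hdU z hz) (hne z)).congr_deriv ?_
    rw [← hK z hz, div_eq_mul_inv]
    simp only [dI]
    ring
  have hcont : ContinuousOn (fun z => (((U z : ℂ) - c) ^ 2)⁻¹) (Icc (-1:ℝ) 1) :=
    ContinuousOn.inv₀ (ContinuousOn.pow (fun z hz => (hdU z hz).continuousWithinAt) 2)
      fun z _ => pow_ne_zero 2 (hne z)
  have hint : K * ∫ z in (-1:ℝ)..1, (((U z : ℂ) - c) ^ 2)⁻¹ = 0 := by
    rw [← intervalIntegral.integral_const_mul,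
      intervalIntegral.integral_eq_sub_of_hasDerivAt_of_le hlt.le
        (fun z hz => (hquot z hz).continuousWithinAt)
        (fun z hz => (hquot z (Ioo_subset_Icc_self hz)).hasDerivAt (Icc_mem_nhds hz.1 hz.2))
        ((continuousOn_const.mul hcont).intervalIntegrable_of_Icc hlt.le)]
    simp [hbc1, hbc2]
  refine (mul_eq_zero.1 hint).resolve_left fun hK0 => ?_
  obtain ⟨z, hz, hφz⟩ := hφ0
  have h := eq_left_of_hasDerivWithinAt_zero hlt
    (fun z hz => by simpa [hK0] using hquot z hz) z hz
  simp [hbc1, hφz, hne z] at h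

end
end
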